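/- arXiv:1405.1165 — 2 statements merged into one kernel-verified Lean document; each statement's English description precedes it below -/
import Mathlib

section
/- Let d ≥ 1 and a > 2b > 0. Then there exists ȳ ∈ (0, π/2) such that the solution Q of the radial ODE u'' + ((d−1)/r)u' + F(u) = 0 with Q(0) = ȳ and Q'(0) = 0 satisfies: Q is positive and strictly decreasing on [0,∞), (Q(r), Q'(r)) → (0, 0) as r → ∞, and there exists a constant C > 0 such that Q(r)·r^{(d−1)/2}·e^{√b·r} → C and Q'(r)·r^{(d−1)/2}·e^{√b·r} → −√b·C as r → ∞. Moreover ȳ = arcsin(√(2b/a)) when d = 1, and ȳ ∈ (arcsin(√(2b/a)), π/2) when d ≥ 2. -/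
open Real Filter

noncomputable section

/-- The nonlinearity `F(x) = (a/2)·sin(2x)·(sin²x − b/a)`. -/
def Fnl (a b x : ℝ) : ℝ := (a / 2) * Real.sin (2 * x) * (Real.sin x ^ 2 - b / a)

/-- `u` solves the radial ODE `u'' + ((d−1)/r)u' + F(u) = 0` on `(0,∞)` with `u'(0) = 0`. -/
def IsRadialSol (d : ℕ) (a b : ℝ) (u : ℝ → ℝ) : Prop :=
  ContDiff ℝ 2 u ∧ deriv u 0 = 0 ∧
  ∀ r : ℝ, 0 < r →
    deriv (deriv u) r + (((d : ℝ) - 1) / r) * deriv u r + Fnl a b (u r) = 0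

/-!
Multiplying the equation by `r ^ (d - 1)` and integrating twice turns the singular initial value
problem into a regular fixed-point equation, so the profile exists, is unique and depends
continuously on its initial value `y`. The energy `u' ^ 2 / 2 + G u`, with `G` the primitive of `F`
vanishing at `0`, is nonincreasing. Hence the set of `y` whose profile crosses zero and the set of
`y` whose profile has negative energy while still positive are open and disjoint. Small `y` belong
to the second set, while `y` close to the equilibrium `π / 2` belong to the first, because such a
profile lingers near `π / 2` until the friction `(d - 1) / r` is negligible. By connectedness some
`y` belongs to neither, and its profile must decrease to `0`. The rate `-u' / u` then satisfies a
Riccati equation, which forces it to be `√b + (d - 1) / (2 r) + O(1 / r ^ 2)`; integrating gives the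
asymptotics.
-/

open Set Topology Asymptotics MeasureTheory
open scoped NNReal

section Comparison

variable {f f' : ℝ → ℝ} {r₀ c m : ℝ}

lemma forall_pos_of_forall_Ico_pos (hf : ContinuousOn f (Ici r₀))
    (h : ∀ t ≥ r₀, (∀ s ∈ Ico r₀ t, 0 < f s) → 0 < f t) : ∀ t ≥ r₀, 0 < f t := by
  by_contra! ⟨r, hr, hfr⟩
  have hcompact : IsCompact (Icc r₀ r ∩ f ⁻¹' Iic 0) :=
    isCompact_Icc.of_isClosed_subset
      ((hf.mono Icc_subset_Ici_self).preimage_isClosed_of_isClosed isClosed_Icc isClosed_Iic)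
      inter_subset_left
  obtain ⟨t, ⟨ht, hft⟩, hleast⟩ := hcompact.exists_isLeast ⟨r, ⟨hr, le_rfl⟩, hfr⟩
  refine (h t ht.1 fun s hs => ?_).not_ge hft
  by_contra! hfs
  exact hs.2.not_ge (hleast ⟨⟨hs.1, hs.2.le.trans ht.2⟩, hfs⟩)

lemma add_mul_sub_le_of_le_deriv_of_pos (hm : 0 ≤ m) (hf : ∀ r ≥ r₀, HasDerivAt f (f' r) r)
    (h₀ : 0 < f r₀) (h : ∀ r ≥ r₀, 0 < f r → m ≤ f' r) :
    ∀ r ≥ r₀, f r₀ + m * (r - r₀) ≤ f r := by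
  have hcont : ContinuousOn f (Ici r₀) := fun r hr => (hf r hr).continuousAt.continuousWithinAt
  have key : ∀ r ≥ r₀, (∀ s ∈ Ico r₀ r, 0 < f s) → f r₀ + m * (r - r₀) ≤ f r := by
    intro r hr hpos
    have hle := (convex_Icc r₀ r).mul_sub_le_image_sub_of_le_deriv
      (hcont.mono Icc_subset_Ici_self) (C := m)
      (fun x hx => by
        rw [interior_Icc] at hx
        exact (hf x hx.1.le).differentiableAt.differentiableWithinAt)
      (fun x hx => by
        rw [interior_Icc] at hx
        exact (hf x hx.1.le).deriv ▸ h x hx.1.le (hpos x (Ioo_subset_Ico_self hx)))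
      r₀ (left_mem_Icc.2 hr) r (right_mem_Icc.2 hr) hr
    linarith
  have hpos := forall_pos_of_forall_Ico_pos hcont fun t ht hs => by
    have := mul_nonneg hm (sub_nonneg.2 ht)
    linarith [key t ht hs]
  exact fun r hr => key r hr fun s hs => hpos s hs.1

lemma exists_lt_of_le_deriv_of_pos (hm : 0 < m) (hf : ∀ r ≥ r₀, HasDerivAt f (f' r) r)
    (h₀ : 0 < f r₀) (h : ∀ r ≥ r₀, 0 < f r → m ≤ f' r) (M : ℝ) : ∃ r ≥ r₀, M < f r := by
  have hr : r₀ + |M| / m ≥ r₀ := le_add_of_nonneg_right (by positivity)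
  refine ⟨_, hr, ?_⟩
  have hle := add_mul_sub_le_of_le_deriv_of_pos hm.le hf h₀ h _ hr
  rw [add_sub_cancel_left, mul_div_cancel₀ _ hm.ne'] at hle
  linarith [le_abs_self M]

lemma exists_lt_of_deriv_le_neg (hc : 0 < c) (hf : ∀ r ≥ r₀, HasDerivAt f (f' r) r)
    (h : ∀ r ≥ r₀, f' r ≤ -c) (M : ℝ) : ∃ r ≥ r₀, f r < M := by
  obtain ⟨r, hr, hlt⟩ := exists_lt_of_le_deriv_of_pos (f := fun r => 1 + f r₀ - f r) hc
    (fun r hr => (hf r hr).const_sub _) (by simp) (fun r hr _ => le_neg_of_le_neg (h r hr))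
    (1 + f r₀ - M)
  exact ⟨r, hr, by linarith⟩

lemma exists_tendsto_atTop_of_antitoneOn_Ici (hf : AntitoneOn f (Ici r₀))
    (hm : ∀ r ≥ r₀, m ≤ f r) : ∃ l, Tendsto f atTop (𝓝 l) ∧ ∀ r ≥ r₀, l ≤ f r := by
  have hanti : Antitone fun r => f (max r r₀) := fun s t hst =>
    hf (le_max_right s r₀) (le_max_right t r₀) (max_le_max_right r₀ hst)
  have hbdd : BddBelow (range fun r => f (max r r₀)) :=
    ⟨m, forall_mem_range.2 fun r => hm _ (le_max_right _ _)⟩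
  refine ⟨_, (tendsto_atTop_ciInf hanti hbdd).congr' ?_, fun r hr => ?_⟩
  · filter_upwards [eventually_ge_atTop r₀] with r hr
    rw [max_eq_left hr]
  · simpa [max_eq_left hr] using ciInf_le hbdd r

-- The inverse `1 / f` would reach `0` in finite time.
lemma not_forall_sq_le_deriv (hf : ∀ r ≥ r₀, HasDerivAt f (f' r) r) (hpos : ∀ r ≥ r₀, 0 < f r) :
    ¬ ∀ r ≥ r₀, f r ^ 2 ≤ f' r := by
  intro h
  obtain ⟨r, hr, hlt⟩ := exists_lt_of_deriv_le_neg one_pos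
    (fun r hr => (hf r hr).fun_inv (hpos r hr).ne')
    (fun r hr => by
      rw [neg_div, neg_le_neg_iff, one_le_div (pow_pos (hpos r hr) 2)]
      exact h r hr) 0
  exact hlt.not_ge (inv_pos.2 (hpos r hr)).le

end Comparison

section Riccati

variable {D h g g' : ℝ → ℝ} {r₀ c δ : ℝ}

lemma riccati_le (hc : 0 ≤ c) (hD : ∀ r ≥ r₀, HasDerivAt D (D r * (D r + c) - h r) r)
    (hg : ∀ r ≥ r₀, HasDerivAt g (g' r) r) (hg' : ∀ r ≥ r₀, g' r ≤ 0) (hg₀ : ∀ r ≥ r₀, 0 ≤ g r)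
    (hh : ∀ r ≥ r₀, h r ≤ c * g r) : ∀ r ≥ r₀, D r ≤ g r := by
  intro r₁ hr₁
  by_contra! hlt
  have hge : ∀ {r}, r ≥ r₁ → r ≥ r₀ := fun hr => hr₁.trans hr
  have hsq : ∀ r ≥ r₁, g r < D r → D r ^ 2 ≤ D r * (D r + c) - h r := fun r hr hgD => by
    have := mul_le_mul_of_nonneg_left hgD.le hc
    linarith [hh r (hge hr)]
  have habove : ∀ r ≥ r₁, g r < D r := fun r hr => by
    have := add_mul_sub_le_of_le_deriv_of_pos (f := fun r => D r - g r) le_rfl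
      (fun r hr => (hD r (hge hr)).sub (hg r (hge hr))) (sub_pos.2 hlt)
      (fun r hr hpos => by
        linarith [hsq r hr (sub_pos.1 hpos), hg' r (hge hr), sq_nonneg (D r)]) r hr
    linarith
  exact not_forall_sq_le_deriv (fun r hr => hD r (hge hr))
    (fun r hr => (hg₀ r (hge hr)).trans_lt (habove r hr)) fun r hr => hsq r hr (habove r hr)

lemma neg_le_riccati (hδ : 0 < δ) (hD : ∀ r ≥ r₀, HasDerivAt D (D r * (D r + c) - h r) r)
    (hDδ : ∀ r ≥ r₀, δ ≤ D r + c) (hg : ∀ r ≥ r₀, HasDerivAt g (g' r) r)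
    (hg' : ∀ r ≥ r₀, g' r ≤ 0) (hg₀ : ∀ r ≥ r₀, 0 ≤ g r) (hh : ∀ r ≥ r₀, -(δ * g r) ≤ h r) :
    ∀ r ≥ r₀, -g r ≤ D r := by
  intro r₁ hr₁
  by_contra! hlt
  have hge : ∀ {r}, r ≥ r₁ → r ≥ r₀ := fun hr => hr₁.trans hr
  have hf : ∀ r ≥ r₁, HasDerivAt (fun r => -D r - g r) (-(D r * (D r + c) - h r) - g' r) r :=
    fun r hr => (hD r (hge hr)).neg.sub (hg r (hge hr))
  have hpos₁ : 0 < -D r₁ - g r₁ := by linarith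
  have hgrowth : ∀ r ≥ r₁, 0 < -D r - g r →
      δ * (-D r - g r) ≤ -(D r * (D r + c) - h r) - g' r := fun r hr hpos => by
    have hneg : 0 ≤ -D r := by linarith [hg₀ r (hge hr)]
    linarith [mul_le_mul_of_nonneg_left (hDδ r (hge hr)) hneg, hh r (hge hr), hg' r (hge hr)]
  have hincr : ∀ r ≥ r₁, -D r₁ - g r₁ ≤ -D r - g r := fun r hr => by
    simpa using add_mul_sub_le_of_le_deriv_of_pos le_rfl hf hpos₁
      (fun r hr hpos => (mul_nonneg hδ.le hpos.le).trans (hgrowth r hr hpos)) r hr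
  obtain ⟨r, hr, hbig⟩ := exists_lt_of_le_deriv_of_pos (mul_pos hδ hpos₁) hf hpos₁
    (fun r hr hpos =>
      (mul_le_mul_of_nonneg_left (hincr r hr) hδ.le).trans (hgrowth r hr hpos)) c
  linarith [hDδ r (hge hr), hg₀ r (hge hr)]

lemma isBigO_riccati (hδ : 0 < δ) (hδc : δ ≤ c)
    (hD : ∀ᶠ r in atTop, HasDerivAt D (D r * (D r + c) - h r) r)
    (hDδ : ∀ᶠ r in atTop, δ ≤ D r + c) (hh : h =O[atTop] fun r => (r ^ 2)⁻¹) :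
    D =O[atTop] fun r => (r ^ 2)⁻¹ := by
  obtain ⟨C, hC, hhC⟩ := hh.exists_pos
  obtain ⟨r₀, hr₀⟩ := eventually_atTop.1
    (((hD.and hDδ).and hhC.bound).and (eventually_gt_atTop 0))
  have hgδ (r : ℝ) : C * (r ^ 2)⁻¹ = δ * (C / δ * (r ^ 2)⁻¹) := by
    rw [← mul_assoc, mul_div_cancel₀ _ hδ.ne']
  have hg (r : ℝ) (hr : r ≥ r₀) :
      HasDerivAt (fun r => C / δ * (r ^ 2)⁻¹) (-(C / δ * (2 * r / (r ^ 2) ^ 2))) r := by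
    refine (((hasDerivAt_pow 2 r).fun_inv (pow_ne_zero 2 (hr₀ r hr).2.ne')).const_mul
      (C / δ)).congr_deriv ?_
    simp only [Nat.cast_ofNat, Nat.add_one_sub_one, pow_one]
    ring
  have hg' (r : ℝ) (hr : r ≥ r₀) : -(C / δ * (2 * r / (r ^ 2) ^ 2)) ≤ 0 := by
    have := (hr₀ r hr).2
    rw [neg_nonpos]
    positivity
  have hg₀ (r : ℝ) (_ : r ≥ r₀) : 0 ≤ C / δ * (r ^ 2)⁻¹ := by positivity
  have hhg (r : ℝ) (hr : r ≥ r₀) : |h r| ≤ δ * (C / δ * (r ^ 2)⁻¹) := by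
    have := (hr₀ r hr).1.2
    rwa [norm_eq_abs, norm_of_nonneg (by positivity), hgδ] at this
  have hD (r : ℝ) (hr : r ≥ r₀) := (hr₀ r hr).1.1.1
  have hle := riccati_le (hδ.le.trans hδc) hD hg hg' hg₀ fun r hr =>
    (le_abs_self _).trans ((hhg r hr).trans (mul_le_mul_of_nonneg_right hδc (hg₀ r hr)))
  have hge := neg_le_riccati hδ hD (fun r hr => (hr₀ r hr).1.1.2) hg hg' hg₀ fun r hr =>
    (abs_le.1 (hhg r hr)).1
  refine .of_bound (C / δ) ?_
  filter_upwards [eventually_ge_atTop r₀] with r hr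
  rw [norm_eq_abs, norm_of_nonneg (by positivity : 0 ≤ (r ^ 2)⁻¹)]
  exact abs_le.2 ⟨hge r hr, hle r hr⟩

end Riccati

lemma exists_tendsto_of_hasDerivAt_of_isBigO {Z Z' : ℝ → ℝ}
    (hZ : ∀ᶠ r in atTop, HasDerivAt Z (Z' r) r) (hZ' : Z' =O[atTop] fun r => (r ^ 2)⁻¹) :
    ∃ l, Tendsto Z atTop (𝓝 l) := by
  obtain ⟨K, hK⟩ := hZ'.bound
  obtain ⟨r₀, hr₀⟩ := eventually_atTop.1 ((hZ.and hK).and (eventually_gt_atTop 0))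
  have hderiv (r : ℝ) (hr : r ∈ Ioi r₀) : HasDerivAt Z (Z' r) r := (hr₀ r (le_of_lt hr)).1.1
  have hint : IntegrableOn (deriv Z) (Ioi r₀) := by
    refine (((integrableOn_Ioi_rpow_of_lt (by norm_num : (-2 : ℝ) < -1)
      (hr₀ r₀ le_rfl).2).const_mul K).mono' (measurable_deriv Z).aestronglyMeasurable ?_)
    refine ae_restrict_of_forall_mem measurableSet_Ioi fun r hr => ?_
    obtain ⟨⟨hZr, hle⟩, hr⟩ := hr₀ r (le_of_lt hr)
    rwa [hZr.deriv, rpow_neg hr.le, rpow_two,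
      ← norm_of_nonneg (by positivity : 0 ≤ (r ^ 2)⁻¹)]
  exact ⟨_, tendsto_limUnder_of_hasDerivAt_of_integrableOn_Ioi
    (fun r hr => (hderiv r hr).differentiableAt.hasDerivAt) hint⟩

lemma isBigO_sub_sub_deriv_mul {f : ℝ → ℝ} (hf : ContDiff ℝ 2 f) (x₀ : ℝ) :
    (fun x => f x - f x₀ - deriv f x₀ * (x - x₀)) =O[𝓝[>] x₀] fun x => (x - x₀) ^ 2 := by
  have hle : x₀ ≤ x₀ + 1 := (lt_add_one x₀).le
  obtain ⟨C, hC⟩ := exists_taylor_mean_remainder_bound (n := 1) hle hf.contDiffOn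
  have hderiv : derivWithin f (Icc x₀ (x₀ + 1)) x₀ = deriv f x₀ :=
    (hf.differentiable two_ne_zero x₀).derivWithin
      (uniqueDiffOn_Icc (lt_add_one x₀) x₀ (left_mem_Icc.2 hle))
  have htaylor (x : ℝ) :
      taylorWithinEval f 1 (Icc x₀ (x₀ + 1)) x₀ x = f x₀ + deriv f x₀ * (x - x₀) := by
    simp [taylorWithinEval_succ, hderiv, mul_comm]
  refine IsBigO.of_bound C ?_
  filter_upwards [Ioc_mem_nhdsGT (lt_add_one x₀)] with x hx
  rw [norm_of_nonneg (sq_nonneg (x - x₀)), sub_sub, ← htaylor]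
  exact hC x (Ioc_subset_Icc_self hx)

section RadialMean

/-- The average `∫₀¹ τⁿ F(u(rτ)) dτ` of `F ∘ u` over the ball of radius `r` in dimension `n + 1`, up
to a constant. Multiplying `u'' + (n/r) u' + F(u) = 0` by `rⁿ` and integrating from the origin gives
`u'(r) = -r * radialMean n F u r`, an equation with no singularity at `r = 0`. -/
def radialMean (n : ℕ) (F u : ℝ → ℝ) (r : ℝ) : ℝ :=
  ∫ τ in (0 : ℝ)..1, τ ^ n * F (u (r * τ))

variable {n : ℕ} {F u w : ℝ → ℝ} {L : ℝ≥0} {r k c C M : ℝ}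

lemma continuous_radialMean (n : ℕ) (hF : Continuous F) (hu : Continuous u) :
    Continuous (radialMean n F u) :=
  intervalIntegral.continuous_parametric_intervalIntegral_of_continuous' (by fun_prop) 0 1

lemma radialMean_eq_div (h : ∀ τ ∈ Icc (0 : ℝ) 1, F (u (r * τ)) = c) :
    radialMean n F u r = c / (n + 1) := by
  have : radialMean n F u r = ∫ τ in (0 : ℝ)..1, τ ^ n * c :=
    intervalIntegral.integral_congr fun τ hτ => by
      simp only [h τ (by rwa [uIcc_of_le zero_le_one] at hτ)]
  rw [this, intervalIntegral.integral_mul_const, integral_pow]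
  simp [div_eq_inv_mul]

lemma div_le_radialMean (hF : Continuous F) (hu : Continuous u) (hr : 0 ≤ r)
    (h : ∀ s ∈ Icc 0 r, c ≤ F (u s)) : c / (n + 1) ≤ radialMean n F u r := by
  rw [← radialMean_eq_div (F := fun _ => c) (u := u) (r := r) fun _ _ => rfl]
  refine intervalIntegral.integral_mono_on zero_le_one
    (Continuous.intervalIntegrable (by fun_prop) _ _)
    (Continuous.intervalIntegrable (by fun_prop) _ _) fun τ hτ => ?_
  exact mul_le_mul_of_nonneg_left
    (h _ ⟨mul_nonneg hr hτ.1, mul_le_of_le_one_right hr hτ.2⟩) (pow_nonneg hτ.1 n)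

lemma radialMean_pos (hF : Continuous F) (hu : Continuous u) (hr : 0 ≤ r)
    (h : ∀ s ∈ Icc 0 r, 0 < F (u s)) : 0 < radialMean n F u r := by
  obtain ⟨s, hs, hmin⟩ := isCompact_Icc.exists_isMinOn (nonempty_Icc.2 hr)
    (hF.comp hu).continuousOn
  exact (div_pos (h s hs) (by positivity)).trans_le (div_le_radialMean hF hu hr fun t ht => hmin ht)

lemma abs_radialMean_sub_le (hF : LipschitzWith L F) (hu : Continuous u) (hw : Continuous w)
    (h : ∀ s, |s| ≤ |r| → |u s - w s| ≤ M) :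
    |radialMean n F u r - radialMean n F w r| ≤ L * M := by
  have := hF.continuous
  rw [radialMean, radialMean, ← intervalIntegral.integral_sub
    (Continuous.intervalIntegrable (by fun_prop) _ _)
    (Continuous.intervalIntegrable (by fun_prop) _ _), ← norm_eq_abs]
  refine (intervalIntegral.norm_integral_le_of_norm_le_const (C := L * M) fun τ hτ => ?_).trans_eq
    (by simp)
  obtain ⟨hτ₀, hτ₁⟩ : 0 < τ ∧ τ ≤ 1 := by rwa [uIoc_of_le zero_le_one] at hτ
  have hrτ : |r * τ| ≤ |r| := by
    rw [abs_mul, abs_of_pos hτ₀]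
    exact mul_le_of_le_one_right (abs_nonneg r) hτ₁
  calc ‖τ ^ n * F (u (r * τ)) - τ ^ n * F (w (r * τ))‖
      = τ ^ n * |F (u (r * τ)) - F (w (r * τ))| := by
        rw [← mul_sub, norm_mul, norm_pow, norm_of_nonneg hτ₀.le, norm_eq_abs]
    _ ≤ 1 * |F (u (r * τ)) - F (w (r * τ))| := by gcongr; exact pow_le_one₀ hτ₀.le hτ₁
    _ ≤ L * |u (r * τ) - w (r * τ)| := by
        simpa [Real.dist_eq] using hF.dist_le_mul (u (r * τ)) (w (r * τ))
    _ ≤ L * M := by gcongr; exact h _ hrτ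

lemma pow_succ_mul_radialMean (n : ℕ) (F u : ℝ → ℝ) (r : ℝ) :
    r ^ (n + 1) * radialMean n F u r = ∫ t in (0 : ℝ)..r, t ^ n * F (u t) := by
  have hscale := intervalIntegral.mul_integral_comp_mul_left (a := 0) (b := 1)
    (f := fun s => s ^ n * F (u s)) r
  simp only [mul_zero, mul_one] at hscale
  rw [← hscale, pow_succ', mul_assoc, radialMean, ← intervalIntegral.integral_const_mul]
  simp only [mul_pow, mul_assoc]

lemma hasDerivAt_mul_radialMean_zero (hF : Continuous F) (hu : Continuous u) :
    HasDerivAt (fun r => r * radialMean n F u r) (radialMean n F u 0) 0 := by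
  rw [hasDerivAt_iff_tendsto_slope]
  refine (((continuous_radialMean n hF hu).tendsto 0).mono_left nhdsWithin_le_nhds).congr' ?_
  filter_upwards [self_mem_nhdsWithin] with x (hx : x ≠ 0)
  simp [slope_def_field, mul_div_cancel_left₀ _ hx]

lemma hasDerivAt_mul_radialMean (n : ℕ) (hF : Continuous F) (hu : Continuous u) (r : ℝ) :
    HasDerivAt (fun r => r * radialMean n F u r) (F (u r) - n * radialMean n F u r) r := by
  rcases eq_or_ne r 0 with rfl | hr
  · refine (hasDerivAt_mul_radialMean_zero hF hu).congr_deriv ?_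
    rw [radialMean_eq_div (c := F (u 0)) (by simp)]
    field_simp
    ring
  · have hprimitive : HasDerivAt (fun r => ∫ t in (0 : ℝ)..r, t ^ n * F (u t))
        (r ^ n * F (u r)) r :=
      intervalIntegral.integral_hasDerivAt_right (Continuous.intervalIntegrable (by fun_prop) _ _)
        (Continuous.stronglyMeasurableAtFilter (by fun_prop) _ _) (by fun_prop)
    refine ((hprimitive.div (hasDerivAt_pow n r) (pow_ne_zero n hr)).congr_of_eventuallyEq
      ?_).congr_deriv ?_
    · filter_upwards [isOpen_ne.mem_nhds hr] with x (hx : x ≠ 0)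
      rw [Pi.div_apply, ← pow_succ_mul_radialMean, pow_succ]
      field_simp
    · rw [← pow_succ_mul_radialMean]
      rcases n with _ | m
      · simp
      · simp only [Nat.add_sub_cancel]
        field_simp
        ring

lemma abs_integral_mul_le (hC : 0 ≤ C) (hk : 0 < k)
    (h : ∀ s, |s| ≤ |r| → |u s| ≤ C * exp (k * s ^ 2)) :
    |∫ s in (0 : ℝ)..r, s * u s| ≤ C / (2 * k) * exp (k * r ^ 2) := by
  have hscale := intervalIntegral.mul_integral_comp_mul_left (a := 0) (b := 1)
    (f := fun s => s * u s) r
  simp only [mul_zero, mul_one] at hscale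
  rw [← hscale, ← intervalIntegral.integral_const_mul, ← norm_eq_abs]
  have hderiv (τ : ℝ) : HasDerivAt (fun τ => C / (2 * k) * exp (k * (r * τ) ^ 2))
      (r ^ 2 * τ * (C * exp (k * (r * τ) ^ 2))) τ := by
    have := ((((hasDerivAt_id τ).const_mul r).pow 2).const_mul k).exp.const_mul (C / (2 * k))
    refine this.congr_deriv ?_
    simp only [id_eq, Pi.pow_apply]
    field_simp
    simp only [Nat.cast_ofNat, Nat.add_one_sub_one, pow_one]
    ring
  have hbound := intervalIntegral.norm_integral_le_of_norm_le (a := 0) (b := 1) (μ := volume)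
    (f := fun τ => r * (r * τ * u (r * τ)))
    (g := fun τ => r ^ 2 * τ * (C * exp (k * (r * τ) ^ 2))) zero_le_one
    (ae_of_all _ fun τ hτ => ?_) (Continuous.intervalIntegrable (by fun_prop) _ _)
  · rw [intervalIntegral.integral_eq_sub_of_hasDerivAt (fun τ _ => hderiv τ)
      (Continuous.intervalIntegrable (by fun_prop) _ _)] at hbound
    refine hbound.trans ?_
    simpa using div_nonneg hC (by positivity)
  · have hrτ : |r * τ| ≤ |r| := by
      rw [abs_mul, abs_of_pos hτ.1]
      exact mul_le_of_le_one_right (abs_nonneg r) hτ.2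
    have hτ₀ : 0 ≤ r ^ 2 * τ := mul_nonneg (sq_nonneg r) hτ.1.le
    calc ‖r * (r * τ * u (r * τ))‖ = r ^ 2 * τ * |u (r * τ)| := by
          rw [← mul_assoc, ← mul_assoc, ← sq, norm_mul, norm_of_nonneg hτ₀, norm_eq_abs]
      _ ≤ r ^ 2 * τ * (C * exp (k * (r * τ) ^ 2)) := by gcongr; exact h _ hrτ

-- The factor `1 / 2` makes the integral equation a contraction in the weight `exp (k * s ^ 2)`.
lemma abs_integral_mul_radialMean_sub_le (hF : LipschitzWith L F) (hu : Continuous u)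
    (hw : Continuous w) (hk : 0 < k) (hLk : L ≤ k) (hM : 0 ≤ M)
    (h : ∀ s, |s| ≤ |r| → |u s - w s| ≤ M * exp (k * s ^ 2)) :
    |(∫ s in (0 : ℝ)..r, s * radialMean n F u s) - ∫ s in (0 : ℝ)..r, s * radialMean n F w s| ≤
      1 / 2 * M * exp (k * r ^ 2) := by
  have := continuous_radialMean n hF.continuous hu
  have := continuous_radialMean n hF.continuous hw
  rw [← intervalIntegral.integral_sub (Continuous.intervalIntegrable (by fun_prop) _ _)
    (Continuous.intervalIntegrable (by fun_prop) _ _)]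
  simp_rw [← mul_sub]
  refine (abs_integral_mul_le (C := L * M) (by positivity) hk fun s hs => ?_).trans ?_
  · rw [mul_assoc]
    refine abs_radialMean_sub_le hF hu hw fun t ht => (h t (ht.trans hs)).trans ?_
    gcongr M * exp (k * ?_)
    exact sq_le_sq.2 ht
  · gcongr
    calc L * M / (2 * k) ≤ k * M / (2 * k) := by gcongr
      _ = 1 / 2 * M := by field_simp

end RadialMean

section IsRadialProfile

/-- `u` solves `u'' + (n/r) u' + F(u) = 0`, `u'(0) = 0`, in integrated form. The equation is imposed
for all real `r`, so that profiles are even and smooth across the origin. -/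
def IsRadialProfile (n : ℕ) (F u : ℝ → ℝ) : Prop :=
  ∀ r, HasDerivAt u (-(r * radialMean n F u r)) r

lemma isRadialProfile_const (n : ℕ) {F : ℝ → ℝ} {c : ℝ} (hc : F c = 0) :
    IsRadialProfile n F fun _ => c := fun r => by
  simpa [radialMean_eq_div (n := n) (F := F) (u := fun _ => c) (r := r) fun _ _ => hc] using
    hasDerivAt_const r c

namespace IsRadialProfile

variable {n : ℕ} {F u w : ℝ → ℝ} {L : ℝ≥0} {r r₀ c : ℝ}

lemma deriv_eq (hu : IsRadialProfile n F u) (r : ℝ) : deriv u r = -(r * radialMean n F u r) :=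
  (hu r).deriv

lemma hasDerivAt (hu : IsRadialProfile n F u) (r : ℝ) : HasDerivAt u (deriv u r) r :=
  (hu r).differentiableAt.hasDerivAt

lemma differentiable (hu : IsRadialProfile n F u) : Differentiable ℝ u :=
  fun r => (hu r).differentiableAt

lemma continuous (hu : IsRadialProfile n F u) : Continuous u := hu.differentiable.continuous

lemma deriv_zero (hu : IsRadialProfile n F u) : deriv u 0 = 0 := by simp [hu.deriv_eq]

lemma hasDerivAt_deriv' (hu : IsRadialProfile n F u) (hF : Continuous F) (r : ℝ) :
    HasDerivAt (deriv u) (n * radialMean n F u r - F (u r)) r := by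
  rw [funext hu.deriv_eq]
  exact (hasDerivAt_mul_radialMean n hF hu.continuous r).neg.congr_deriv (neg_sub _ _)

lemma hasDerivAt_deriv (hu : IsRadialProfile n F u) (hF : Continuous F) (hr : r ≠ 0) :
    HasDerivAt (deriv u) (-(n / r) * deriv u r - F (u r)) r := by
  refine (hu.hasDerivAt_deriv' hF r).congr_deriv ?_
  rw [hu.deriv_eq]
  field_simp

lemma continuous_deriv (hu : IsRadialProfile n F u) (hF : Continuous F) : Continuous (deriv u) :=
  continuous_iff_continuousAt.2 fun r => (hu.hasDerivAt_deriv' hF r).continuousAt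

lemma contDiff (hu : IsRadialProfile n F u) (hF : Continuous F) : ContDiff ℝ 2 u := by
  rw [show (2 : WithTop ℕ∞) = 1 + 1 by norm_num, contDiff_succ_iff_deriv]
  refine ⟨hu.differentiable, by simp, contDiff_one_iff_deriv.2
    ⟨fun r => (hu.hasDerivAt_deriv' hF r).differentiableAt, ?_⟩⟩
  rw [funext fun r => (hu.hasDerivAt_deriv' hF r).deriv]
  have := continuous_radialMean n hF hu.continuous
  have := hu.continuous
  fun_prop

lemma deriv_le (hu : IsRadialProfile n F u) (hF : Continuous F) (hr : 0 ≤ r)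
    (hc : ∀ s ∈ Icc 0 r, c ≤ F (u s)) : deriv u r ≤ -(r * (c / (n + 1))) := by
  rw [hu.deriv_eq, neg_le_neg_iff]
  exact mul_le_mul_of_nonneg_left (div_le_radialMean hF hu.continuous hr hc) hr

lemma eq_sub_integral (hu : IsRadialProfile n F u) (hF : Continuous F) (r : ℝ) :
    u r = u 0 - ∫ s in (0 : ℝ)..r, s * radialMean n F u s := by
  have := continuous_radialMean n hF hu.continuous
  have hftc := intervalIntegral.integral_eq_sub_of_hasDerivAt (a := 0) (b := r) (fun s _ => hu s)
    (Continuous.intervalIntegrable (by fun_prop) _ _)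
  rw [intervalIntegral.integral_neg] at hftc
  linarith

lemma abs_sub_le (hF : LipschitzWith L F) (hu : IsRadialProfile n F u)
    (hw : IsRadialProfile n F w) (r : ℝ) :
    |u r - w r| ≤ 2 * |u 0 - w 0| * exp ((L + 1) * r ^ 2) := by
  have hcu := hu.continuous
  have hcw := hw.continuous
  set k : ℝ := L + 1 with hk
  obtain ⟨s₀, hs₀, hmax⟩ := isCompact_Icc.exists_isMaxOn (s := Icc (-|r|) |r|) ⟨0, by simp⟩
    (f := fun s => exp (-(k * s ^ 2)) * |u s - w s|) (by fun_prop)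
  set M := exp (-(k * s₀ ^ 2)) * |u s₀ - w s₀| with hM
  have hle (s : ℝ) (hs : |s| ≤ |r|) : |u s - w s| ≤ M * exp (k * s ^ 2) := by
    have : exp (-(k * s ^ 2)) * |u s - w s| ≤ M := hmax (abs_le.1 hs)
    rwa [exp_neg, inv_mul_le_iff₀ (exp_pos _), mul_comm] at this
  have hself : |u s₀ - w s₀| ≤ |u 0 - w 0| + 1 / 2 * M * exp (k * s₀ ^ 2) := by
    rw [hu.eq_sub_integral hF.continuous s₀, hw.eq_sub_integral hF.continuous s₀, sub_sub_sub_comm]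
    refine (abs_sub _ _).trans (add_le_add_right
      (abs_integral_mul_radialMean_sub_le hF hcu hcw (by positivity) (by simp [hk]) (by positivity)
        fun s hs => hle s (hs.trans (abs_le.2 hs₀))) _)
  have hM₀ : M ≤ 2 * |u 0 - w 0| := by
    have heq : |u s₀ - w s₀| = M * exp (k * s₀ ^ 2) := by
      rw [hM, mul_right_comm, ← exp_add]
      simp
    have hone : 1 ≤ exp (k * s₀ ^ 2) := one_le_exp (by positivity)
    have : 0 ≤ M := by positivity
    nlinarith
  exact (hle r le_rfl).trans (by gcongr)

lemma abs_deriv_sub_le (hF : LipschitzWith L F) (hu : IsRadialProfile n F u)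
    (hw : IsRadialProfile n F w) (r : ℝ) :
    |deriv u r - deriv w r| ≤ |r| * (L * (2 * |u 0 - w 0| * exp ((L + 1) * r ^ 2))) := by
  rw [hu.deriv_eq, hw.deriv_eq, neg_sub_neg, ← mul_sub, abs_mul, abs_sub_comm]
  gcongr
  refine abs_radialMean_sub_le hF hu.continuous hw.continuous fun s hs =>
    (hu.abs_sub_le hF hw s).trans ?_
  gcongr _ * exp (_ * ?_)
  exact sq_le_sq.2 hs

lemma eq_of_apply_zero_eq (hF : LipschitzWith L F) (hu : IsRadialProfile n F u)
    (hw : IsRadialProfile n F w) (h₀ : u 0 = w 0) : u = w := by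
  ext r
  have := hu.abs_sub_le hF hw r
  simp only [h₀, sub_self, abs_zero, mul_zero, zero_mul] at this
  exact sub_eq_zero.1 (abs_nonpos_iff.1 this)

lemma eqOn_Icc (hF : LipschitzWith L F) (hu : IsRadialProfile n F u)
    (hw : IsRadialProfile n F w) (hr : 0 < r) (h : u r₀ = w r₀) (h' : deriv u r₀ = deriv w r₀) :
    EqOn u w (Icc r r₀) := by
  let field (t : ℝ) (x : ℝ × ℝ) : ℝ × ℝ := (x.2, -(n / t) * x.2 - F x.1)
  have hlip : ∀ t ∈ Ioc r r₀, LipschitzOnWith (max 1 (‖(n / r : ℝ)‖₊ + L)) (field t) univ := by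
    intro t ht
    refine (LipschitzWith.prodMk LipschitzWith.prod_snd (LipschitzWith.weaken ?_
      (K := ‖(-(n / t) : ℝ)‖₊ * 1 + L * 1) ?_)).lipschitzOnWith
    · exact ((lipschitzWith_smul (-(n / t) : ℝ)).comp LipschitzWith.prod_snd).sub
        (hF.comp LipschitzWith.prod_fst)
    · simp only [mul_one, nnnorm_neg]
      gcongr
      have := hr.trans ht.1
      rw [← NNReal.coe_le_coe, coe_nnnorm, coe_nnnorm, norm_of_nonneg (by positivity),
        norm_of_nonneg (by positivity)]
      gcongr
      exact ht.1.le
  have hsol {u : ℝ → ℝ} (hu : IsRadialProfile n F u) (t : ℝ) (ht : t ∈ Ioc r r₀) :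
      HasDerivWithinAt (fun s => (u s, deriv u s)) (field t (u t, deriv u t)) (Iic t) t :=
    ((hu.hasDerivAt t).prodMk
      (hu.hasDerivAt_deriv hF.continuous (hr.trans ht.1).ne')).hasDerivWithinAt
  have hcont {u : ℝ → ℝ} (hu : IsRadialProfile n F u) :
      ContinuousOn (fun s => (u s, deriv u s)) (Icc r r₀) :=
    (hu.continuous.prodMk (hu.continuous_deriv hF.continuous)).continuousOn
  have heq := ODE_solution_unique_of_mem_Icc_left hlip (hcont hu) (hsol hu) (fun _ _ => mem_univ _)
    (hcont hw) (hsol hw) (fun _ _ => mem_univ _) (Prod.ext h h')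
  exact fun t ht => congrArg Prod.fst (heq ht)

lemma eq_of_eq_of_deriv_eq (hF : LipschitzWith L F) (hu : IsRadialProfile n F u)
    (hw : IsRadialProfile n F w) (hr₀ : 0 < r₀) (h : u r₀ = w r₀)
    (h' : deriv u r₀ = deriv w r₀) : u = w := by
  refine hu.eq_of_apply_zero_eq hF hw (tendsto_nhds_unique_of_eventuallyEq
    ((hu.continuous.tendsto 0).mono_left nhdsWithin_le_nhds)
    ((hw.continuous.tendsto 0).mono_left (nhdsWithin_le_nhds (s := Ioi 0))) ?_)
  filter_upwards [Ioc_mem_nhdsGT hr₀] with r hr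
  exact hu.eqOn_Icc hF hw hr.1 h h' (left_mem_Icc.2 hr.2)

end IsRadialProfile

end IsRadialProfile

section Existence

open BoundedContinuousFunction

variable {F : ℝ → ℝ} {L : ℝ≥0}

lemma exists_forall_norm_picard_le (n : ℕ) (hF : LipschitzWith L F) (y : ℝ) (φ : ℝ →ᵇ ℝ) :
    ∃ C, ∀ r, ‖exp (-((L + 1) * r ^ 2)) * (y - ∫ s in (0 : ℝ)..r,
      s * radialMean n F (fun x => exp ((L + 1) * x ^ 2) * φ x) s)‖ ≤ C := by
  set k : ℝ := L + 1
  have hk₀ : 0 < k := by positivity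
  set u : ℝ → ℝ := fun x => exp (k * x ^ 2) * φ x
  have hmean (s : ℝ) : |radialMean n F u s| ≤ (L * ‖φ‖ + |F 0|) * exp (k * s ^ 2) := by
    have hzero : |radialMean n F (fun _ => 0) s| ≤ |F 0| := by
      rw [radialMean_eq_div (c := F 0) fun _ _ => rfl, abs_div,
        abs_of_pos (a := (n : ℝ) + 1) (by positivity)]
      exact div_le_self (abs_nonneg _) (by simp)
    have hdiff : |radialMean n F u s - radialMean n F (fun _ => 0) s| ≤
        L * (exp (k * s ^ 2) * ‖φ‖) := by
      refine abs_radialMean_sub_le hF (by fun_prop) continuous_const fun t ht => ?_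
      rw [sub_zero, abs_mul, abs_of_pos (exp_pos _)]
      gcongr exp (k * ?_) * ?_
      · exact sq_le_sq.2 ht
      · exact φ.norm_coe_le_norm t
    have hone : 1 ≤ exp (k * s ^ 2) := one_le_exp (by positivity)
    have htri := abs_add_le (radialMean n F u s - radialMean n F (fun _ => 0) s)
      (radialMean n F (fun _ => 0) s)
    rw [sub_add_cancel] at htri
    nlinarith [abs_nonneg (F 0)]
  refine ⟨|y| + (L * ‖φ‖ + |F 0|) / (2 * k), fun r => ?_⟩
  have hint := abs_integral_mul_le (by positivity) hk₀ (r := r) fun s _ => hmean s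
  have hone : 1 ≤ exp (k * r ^ 2) := one_le_exp (by positivity)
  rw [norm_mul, norm_eq_abs, norm_eq_abs, abs_of_pos (exp_pos _), exp_neg,
    inv_mul_le_iff₀ (exp_pos _)]
  refine (abs_sub _ _).trans ?_
  nlinarith [abs_nonneg y]

/-- The Picard operator `u ↦ y - ∫₀ʳ s * radialMean n F u s ds`, conjugated by the weight
`exp ((L + 1) r²)` so that it acts on bounded functions and contracts the sup norm. -/
def weightedPicard (n : ℕ) (hF : LipschitzWith L F) (y : ℝ) (φ : ℝ →ᵇ ℝ) : ℝ →ᵇ ℝ :=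
  .ofNormedAddCommGroup
    (fun r => exp (-((L + 1) * r ^ 2)) *
      (y - ∫ s in (0 : ℝ)..r, s * radialMean n F (fun x => exp ((L + 1) * x ^ 2) * φ x) s))
    (by
      have hmean : Continuous (radialMean n F fun x => exp ((L + 1) * x ^ 2) * φ x) :=
        continuous_radialMean n hF.continuous (by fun_prop)
      have := intervalIntegral.continuous_primitive (μ := volume)
        (fun a b => (continuous_id'.mul hmean).intervalIntegrable a b) 0
      fun_prop)
    (exists_forall_norm_picard_le n hF y φ).choose
    (exists_forall_norm_picard_le n hF y φ).choose_spec

lemma contractingWith_weightedPicard (n : ℕ) (hF : LipschitzWith L F) (y : ℝ) :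
    ContractingWith (1 / 2) (weightedPicard n hF y) := by
  refine ⟨by rw [← NNReal.coe_lt_coe]; norm_num, LipschitzWith.of_dist_le_mul fun φ ψ => ?_⟩
  rw [dist_le (by positivity)]
  intro r
  have hdiff := abs_integral_mul_radialMean_sub_le (n := n) (k := L + 1) (r := r) hF
    (u := fun x => exp ((L + 1) * x ^ 2) * ψ x) (w := fun x => exp ((L + 1) * x ^ 2) * φ x)
    (by fun_prop) (by fun_prop) (by positivity) (by simp) (dist_nonneg (x := φ) (y := ψ))
    fun s _ => by
      rw [← mul_sub, abs_mul, abs_of_pos (exp_pos _), mul_comm, ← Real.dist_eq, dist_comm]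
      gcongr
      exact dist_coe_le_dist s
  simp only [weightedPicard, coe_ofNormedAddCommGroup]
  rw [Real.dist_eq, ← mul_sub, abs_mul, abs_of_pos (exp_pos _), exp_neg,
    inv_mul_le_iff₀ (exp_pos _), sub_sub_sub_cancel_left, mul_comm]
  simpa using hdiff

lemma exists_isRadialProfile (n : ℕ) (hF : LipschitzWith L F) (y : ℝ) :
    ∃ u, IsRadialProfile n F u ∧ u 0 = y := by
  obtain ⟨φ, hφ⟩ : ∃ φ, weightedPicard n hF y φ = φ :=
    ⟨_, (contractingWith_weightedPicard n hF y).fixedPoint_isFixedPt⟩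
  set u : ℝ → ℝ := fun x => exp ((L + 1) * x ^ 2) * φ x with hu
  have hfix (r : ℝ) : u r = y - ∫ s in (0 : ℝ)..r, s * radialMean n F u s := by
    conv_lhs => rw [hu, ← hφ, weightedPicard]
    simp [← mul_assoc, ← exp_add, hu]
  have hmean : Continuous (radialMean n F u) := continuous_radialMean n hF.continuous (by fun_prop)
  refine ⟨u, fun r => ?_, by simp [hfix 0]⟩
  exact ((intervalIntegral.integral_hasDerivAt_right
    (Continuous.intervalIntegrable (by fun_prop) _ _)
    (Continuous.stronglyMeasurableAtFilter (by fun_prop) _ _) (by fun_prop)).const_sub y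
    ).congr_of_eventuallyEq (.of_forall hfix)

end Existence

section Energy

/-- The energy `u'²/2 + G(u)` of a radial profile, for a primitive `G` of the nonlinearity. -/
def energy (G u : ℝ → ℝ) (r : ℝ) : ℝ := deriv u r ^ 2 / 2 + G (u r)

namespace IsRadialProfile

variable {n : ℕ} {F G u : ℝ → ℝ} {r R t M K : ℝ}

lemma energy_zero (hu : IsRadialProfile n F u) (G : ℝ → ℝ) : energy G u 0 = G (u 0) := by
  simp [energy, hu.deriv_zero]

lemma hasDerivAt_energy (hu : IsRadialProfile n F u) (hF : Continuous F)
    (hG : ∀ x, HasDerivAt G (F x) x) (r : ℝ) :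
    HasDerivAt (energy G u) (-(n * r * radialMean n F u r ^ 2)) r := by
  refine ((((hu.hasDerivAt_deriv' hF r).pow 2).div_const 2).add
    ((hG (u r)).comp r (hu.hasDerivAt r))).congr_deriv ?_
  simp only [hu.deriv_eq]
  push_cast
  ring

lemma antitoneOn_energy (hu : IsRadialProfile n F u) (hF : Continuous F)
    (hG : ∀ x, HasDerivAt G (F x) x) : AntitoneOn (energy G u) (Ici 0) := by
  have hderiv := hu.hasDerivAt_energy hF hG
  refine antitoneOn_of_deriv_nonpos (convex_Ici 0)
    (fun r _ => (hderiv r).continuousAt.continuousWithinAt)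
    (fun r _ => (hderiv r).differentiableAt.differentiableWithinAt) fun r hr => ?_
  have : 0 < r := by simpa using hr
  rw [(hderiv r).deriv, neg_nonpos]
  positivity

lemma strictAntiOn_energy (hu : IsRadialProfile n F u) (hn : n ≠ 0) (hF : Continuous F)
    (hG : ∀ x, HasDerivAt G (F x) x) (hneg : ∀ r > 0, deriv u r < 0) :
    StrictAntiOn (energy G u) (Ici 0) := by
  have hderiv := hu.hasDerivAt_energy hF hG
  refine strictAntiOn_of_deriv_neg (convex_Ici 0)
    (fun r _ => (hderiv r).continuousAt.continuousWithinAt) fun r hr => ?_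
  have hr : 0 < r := by simpa using hr
  have hmean : radialMean n F u r ≠ 0 := fun h => by
    have := hneg r hr
    simp [hu.deriv_eq, h] at this
  rw [(hderiv r).deriv, neg_lt_zero]
  positivity

lemma energy_eq_of_zero (hu : IsRadialProfile 0 F u) (hF : Continuous F)
    (hG : ∀ x, HasDerivAt G (F x) x) (r : ℝ) : energy G u r = G (u 0) := by
  have hderiv := hu.hasDerivAt_energy hF hG
  rw [← hu.energy_zero G]
  exact is_const_of_deriv_eq_zero (fun r => (hderiv r).differentiableAt)
    (fun r => by simp [(hderiv r).deriv]) r 0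

-- On `[R, t]` the dissipation `(n / r) u'²` is at most `(n / R) M |u'|`, and `|u'|` integrates to
-- the drop of `u`.
lemma sub_le_energy (hu : IsRadialProfile n F u) (hF : Continuous F)
    (hG : ∀ x, HasDerivAt G (F x) x) (hR : 0 < R) (hRt : R ≤ t)
    (h : ∀ r ∈ Ioo R t, -M ≤ deriv u r ∧ deriv u r ≤ 0) :
    energy G u R - n * M / R * (u R - u t) ≤ energy G u t := by
  have hderiv (r : ℝ) (hr : R ≤ r) : HasDerivAt (fun r => energy G u r - n * M / R * u r)
      (-(n / r) * deriv u r ^ 2 - n * M / R * deriv u r) r := by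
    refine ((hu.hasDerivAt_energy hF hG r).sub ((hu.hasDerivAt r).const_mul _)).congr_deriv ?_
    have : r ≠ 0 := (hR.trans_le hr).ne'
    rw [hu.deriv_eq]
    field_simp
  have hmono : MonotoneOn (fun r => energy G u r - n * M / R * u r) (Icc R t) := by
    refine monotoneOn_of_deriv_nonneg (convex_Icc R t)
      (fun r hr => (hderiv r hr.1).continuousAt.continuousWithinAt)
      (fun r hr => (hderiv r (interior_subset hr).1).differentiableAt.differentiableWithinAt)
      fun r hr => ?_
    rw [interior_Icc] at hr
    obtain ⟨hM, hnonpos⟩ := h r hr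
    rw [(hderiv r hr.1.le).deriv]
    have hdiss : n / r * -deriv u r ≤ n / R * M := by
      gcongr
      · linarith
      · exact hr.1.le
      · linarith
    calc (0 : ℝ) ≤ (n / R * M - n / r * -deriv u r) * -deriv u r :=
          mul_nonneg (by linarith) (by linarith)
      _ = -(n / r) * deriv u r ^ 2 - n * M / R * deriv u r := by ring
  have := hmono (left_mem_Icc.2 hRt) (right_mem_Icc.2 hRt) hRt
  linarith

lemma abs_deriv_le_of_abs_le (hu : IsRadialProfile n F u) (hF : Continuous F)
    (hG : ∀ x, HasDerivAt G (F x) x) (hr : 0 ≤ r) (h₀ : |G (u 0)| ≤ K) (h : |G (u r)| ≤ K) :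
    |deriv u r| ≤ 2 * √K := by
  have hle := hu.antitoneOn_energy hF hG self_mem_Ici hr hr
  rw [hu.energy_zero, energy] at hle
  have hK : 0 ≤ K := (abs_nonneg _).trans h
  refine abs_le_of_sq_le_sq ?_ (by positivity)
  rw [mul_pow, sq_sqrt hK]
  linarith [(abs_le.1 h).1, (abs_le.1 h₀).2]

lemma not_forall_add_le_energy {l ε : ℝ} (hu : IsRadialProfile n F u) (hG : Continuous G)
    (hpos : ∀ r ≥ 0, 0 < u r) (hneg : ∀ r > 0, deriv u r < 0) (hl : Tendsto u atTop (𝓝 l))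
    (hε : 0 < ε) : ¬ ∀ r > 0, G l + ε ≤ energy G u r := by
  intro hE
  obtain ⟨R, hR⟩ := eventually_atTop.1 ((((hG.tendsto l).comp hl).eventually_lt_const
    (show G l < G l + ε / 2 by linarith)).and (eventually_gt_atTop 0))
  have hsteep (r : ℝ) (hr : r ≥ R) : deriv u r ≤ -√ε := by
    obtain ⟨hGr, hr₀⟩ := hR r hr
    have hEr := hE r hr₀
    rw [energy] at hEr
    rw [Function.comp_apply] at hGr
    rw [le_neg, ← abs_of_neg (hneg r hr₀)]
    exact sqrt_le_iff.2 ⟨abs_nonneg _, by rw [sq_abs]; linarith⟩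
  obtain ⟨r, hr, hur⟩ :=
    exists_lt_of_deriv_le_neg (sqrt_pos.2 hε) (fun r _ => hu.hasDerivAt r) hsteep 0
  exact (hpos r (hR r hr).2.le).not_gt hur

end IsRadialProfile

end Energy

section ShootingWell

/-- A nonlinearity `F` with primitive `G` to which the shooting argument applies: `G` is negative
between the equilibrium `0` and its root `β`, and `F` is positive from `β` up to the next
equilibrium `p`. -/
structure IsShootingWell (F G : ℝ → ℝ) (β p : ℝ) : Prop where
  lipschitz : ∃ L, LipschitzWith L F
  hasDerivAt : ∀ x, HasDerivAt G (F x) x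
  apply_zero : F 0 = 0
  apply_top : F p = 0
  primitive_zero : G 0 = 0
  primitive_root : G β = 0
  root_pos : 0 < β
  root_lt_top : β < p
  primitive_neg : ∀ x ∈ Ioo 0 β, G x < 0
  pos : ∀ x ∈ Ico β p, 0 < F x

namespace IsShootingWell

variable {n : ℕ} {F G u : ℝ → ℝ} {β p x : ℝ}

lemma continuous (W : IsShootingWell F G β p) : Continuous F :=
  W.lipschitz.choose_spec.continuous

lemma continuous_primitive (W : IsShootingWell F G β p) : Continuous G :=
  continuous_iff_continuousAt.2 fun x => (W.hasDerivAt x).continuousAt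

lemma primitive_pos (W : IsShootingWell F G β p) (hx : x ∈ Ioc β p) : 0 < G x := by
  have hmono : StrictMonoOn G (Icc β p) := by
    refine strictMonoOn_of_deriv_pos (convex_Icc β p) W.continuous_primitive.continuousOn ?_
    rw [interior_Icc]
    intro x hx
    rw [(W.hasDerivAt x).deriv]
    exact W.pos x ⟨hx.1.le, hx.2⟩
  rw [← W.primitive_root]
  exact hmono (left_mem_Icc.2 W.root_lt_top.le) ⟨hx.1.le, hx.2⟩ hx.1

lemma root_le (W : IsShootingWell F G β p) (hx : 0 < x) (hG : 0 ≤ G x) : β ≤ x := by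
  by_contra! hlt
  exact (W.primitive_neg x ⟨hx, hlt⟩).not_ge hG

lemma pos_of_nonneg (W : IsShootingWell F G β p) (hu : IsRadialProfile n F u) (h₀ : 0 < u 0)
    (h : ∀ r ≥ 0, 0 ≤ u r) : ∀ r ≥ 0, 0 < u r := by
  intro r hr
  refine (h r hr).lt_of_ne' fun hur => ?_
  have hr : 0 < r := hr.lt_of_ne' fun hr => h₀.ne' (hr ▸ hur)
  have hmin : IsLocalMin u r := by
    filter_upwards [lt_mem_nhds hr] with x hx
    rw [hur]
    exact h x hx.le
  obtain ⟨L, hL⟩ := W.lipschitz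
  have : u = fun _ => 0 := hu.eq_of_eq_of_deriv_eq hL (isRadialProfile_const n W.apply_zero) hr hur
    (by rw [hmin.deriv_eq_zero, deriv_const])
  exact h₀.ne' (congrFun this 0)

lemma deriv_neg (W : IsShootingWell F G β p) (hu : IsRadialProfile n F u) (h₀ : u 0 ∈ Ico β p)
    (hpos : ∀ r ≥ 0, 0 < u r)
    (hE : ∀ t > 0, (∀ s ∈ Ioo 0 t, deriv u s < 0) → 0 ≤ energy G u t) :
    ∀ r > 0, deriv u r < 0 := by
  have hcont := continuous_radialMean n W.continuous hu.continuous
  suffices ∀ r ≥ 0, 0 < radialMean n F u r by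
    intro r hr
    rw [hu.deriv_eq, neg_lt_zero]
    exact mul_pos hr (this r hr.le)
  refine forall_pos_of_forall_Ico_pos hcont.continuousOn fun t ht hlt => ?_
  rcases ht.eq_or_lt with rfl | ht
  · refine radialMean_pos W.continuous hu.continuous le_rfl fun s hs => ?_
    rw [le_antisymm hs.2 hs.1]
    exact W.pos _ h₀
  have hneg (s : ℝ) (hs : s ∈ Ioo 0 t) : deriv u s < 0 := by
    rw [hu.deriv_eq, neg_lt_zero]
    exact mul_pos hs.1 (hlt s ⟨hs.1.le, hs.2⟩)
  have hmean : 0 ≤ radialMean n F u t :=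
    ge_of_tendsto ((hcont.tendsto t).mono_left (nhdsWithin_le_nhds (s := Iio t))) <| by
      filter_upwards [Ioo_mem_nhdsLT ht] with s hs using (hlt s ⟨hs.1.le, hs.2⟩).le
  refine hmean.lt_of_ne' fun hzero => hzero.not_gt ?_
  have hroot : β ≤ u t := by
    have := hE t ht hneg
    rw [energy, hu.deriv_eq, hzero] at this
    exact W.root_le (hpos t ht.le) (by simpa using this)
  have hanti : StrictAntiOn u (Icc 0 t) :=
    strictAntiOn_of_deriv_neg (convex_Icc 0 t) hu.continuous.continuousOn (by rwa [interior_Icc])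
  refine radialMean_pos W.continuous hu.continuous ht.le fun s hs => W.pos _ ⟨?_, ?_⟩
  · exact hroot.trans (hanti.antitoneOn hs (right_mem_Icc.2 ht.le) hs.2)
  · exact (hanti.antitoneOn (left_mem_Icc.2 ht.le) hs hs.1).trans_lt h₀.2

lemma tendsto_zero (W : IsShootingWell F G β p) (hu : IsRadialProfile n F u) (hp : u 0 < p)
    (hpos : ∀ r ≥ 0, 0 < u r) (hneg : ∀ r > 0, deriv u r < 0) (hE : ∀ r > 0, 0 ≤ energy G u r) :
    Tendsto u atTop (𝓝 0) := by
  have hanti : AntitoneOn u (Ici 0) :=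
    (strictAntiOn_of_deriv_neg (convex_Ici 0) hu.continuous.continuousOn
      (by simpa [interior_Ici] using hneg)).antitoneOn
  obtain ⟨l, hl, hlu⟩ := exists_tendsto_atTop_of_antitoneOn_Ici hanti fun r hr => (hpos r hr).le
  have hl₀ : 0 ≤ l := ge_of_tendsto hl <| by
    filter_upwards [eventually_ge_atTop 0] with r hr using (hpos r hr).le
  suffices l = 0 by rwa [← this]
  refine (hl₀.eq_or_lt.resolve_right fun hl₀ => ?_).symm
  rcases lt_or_ge l β with hlβ | hβl
  · exact hu.not_forall_add_le_energy W.continuous_primitive hpos hneg hl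
      (neg_pos.2 (W.primitive_neg l ⟨hl₀, hlβ⟩)) (by simpa using hE)
  obtain ⟨x, hx, hmin⟩ := isCompact_Icc.exists_isMinOn (nonempty_Icc.2 (hlu 0 le_rfl))
    W.continuous.continuousOn
  have hFx : 0 < F x := W.pos x ⟨hβl.trans hx.1, hx.2.trans_lt hp⟩
  have hc : 0 < F x / (n + 1) := by positivity
  have hsteep (r : ℝ) (hr : r ≥ 1) : deriv u r ≤ -(F x / (n + 1)) := by
    have := hu.deriv_le W.continuous (zero_le_one.trans hr) fun s hs =>
      hmin ⟨hlu s hs.1, hanti self_mem_Ici hs.1 hs.1⟩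
    nlinarith
  obtain ⟨r, hr, hur⟩ := exists_lt_of_deriv_le_neg hc (fun r _ => hu.hasDerivAt r) hsteep 0
  exact (hpos r (zero_le_one.trans hr)).not_gt hur

end IsShootingWell

end ShootingWell

section Shooting

/-- The shot with profile `u` overshoots: it becomes negative. -/
def CrossesZero (u : ℝ → ℝ) : Prop := ∃ r ≥ 0, u r < 0

/-- The shot with profile `u` undershoots: its energy becomes negative while it is still positive,
after which it can no longer reach `0`. -/
def LosesEnergy (G u : ℝ → ℝ) : Prop :=
  ∃ R ≥ 0, (∀ s ∈ Icc 0 R, 0 < u s) ∧ energy G u R < 0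

variable {n : ℕ} {F G u : ℝ → ℝ} {L : ℝ≥0} {β p y ε K R : ℝ}

/-- The radial profile with initial value `y`. -/
def radialFlow (n : ℕ) (hF : LipschitzWith L F) (y : ℝ) : ℝ → ℝ :=
  (exists_isRadialProfile n hF y).choose

lemma isRadialProfile_radialFlow (n : ℕ) (hF : LipschitzWith L F) (y : ℝ) :
    IsRadialProfile n F (radialFlow n hF y) :=
  (exists_isRadialProfile n hF y).choose_spec.1

@[simp]
lemma radialFlow_zero (n : ℕ) (hF : LipschitzWith L F) (y : ℝ) : radialFlow n hF y 0 = y :=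
  (exists_isRadialProfile n hF y).choose_spec.2

lemma abs_radialFlow_sub_le (n : ℕ) (hF : LipschitzWith L F) (y z r : ℝ) :
    |radialFlow n hF y r - radialFlow n hF z r| ≤ 2 * |y - z| * exp ((L + 1) * r ^ 2) := by
  simpa using
    (isRadialProfile_radialFlow n hF y).abs_sub_le hF (isRadialProfile_radialFlow n hF z) r

lemma continuous_radialFlow (n : ℕ) (hF : LipschitzWith L F) (r : ℝ) :
    Continuous fun y => radialFlow n hF y r :=
  (LipschitzWith.of_dist_le' (K := 2 * exp ((L + 1) * r ^ 2)) fun y z => by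
    simpa only [Real.dist_eq, mul_right_comm] using abs_radialFlow_sub_le n hF y z r).continuous

lemma continuous_deriv_radialFlow (n : ℕ) (hF : LipschitzWith L F) (r : ℝ) :
    Continuous fun y => deriv (radialFlow n hF y) r :=
  (LipschitzWith.of_dist_le' (K := |r| * (L * (2 * exp ((L + 1) * r ^ 2)))) fun y z => by
    have := (isRadialProfile_radialFlow n hF y).abs_deriv_sub_le hF
      (isRadialProfile_radialFlow n hF z) r
    simp only [radialFlow_zero] at this
    rw [Real.dist_eq, Real.dist_eq]
    linarith).continuous

lemma continuous_energy_radialFlow (n : ℕ) (hF : LipschitzWith L F) (hG : Continuous G) (r : ℝ) :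
    Continuous fun y => energy G (radialFlow n hF y) r :=
  (((continuous_deriv_radialFlow n hF r).pow 2).div_const 2).add
    (hG.comp (continuous_radialFlow n hF r))

lemma isOpen_setOf_crossesZero (n : ℕ) (hF : LipschitzWith L F) :
    IsOpen {y | CrossesZero (radialFlow n hF y)} := by
  refine isOpen_iff_mem_nhds.2 fun y ⟨r, hr, hneg⟩ => ?_
  filter_upwards [(continuous_radialFlow n hF r).continuousAt.eventually_lt_const hneg] with z hz
  exact ⟨r, hr, hz⟩

lemma isOpen_setOf_losesEnergy (n : ℕ) (hF : LipschitzWith L F) (hG : Continuous G) :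
    IsOpen {y | LosesEnergy G (radialFlow n hF y)} := by
  refine isOpen_iff_mem_nhds.2 fun y ⟨R, hR, hpos, hE⟩ => ?_
  obtain ⟨s₀, hs₀, hmin⟩ := isCompact_Icc.exists_isMinOn (nonempty_Icc.2 hR)
    (isRadialProfile_radialFlow n hF y).continuous.continuousOn
  have hclose : Continuous fun z => 2 * |z - y| * exp ((L + 1) * R ^ 2) := by fun_prop
  filter_upwards [(continuous_energy_radialFlow n hF hG R).continuousAt.eventually_lt_const hE,
    hclose.continuousAt.eventually_lt_const (by simpa using hpos s₀ hs₀)] with z hzE hz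
  refine ⟨R, hR, fun s hs => ?_, hzE⟩
  have hdist : |radialFlow n hF z s - radialFlow n hF y s| < radialFlow n hF y s₀ := by
    refine (abs_radialFlow_sub_le n hF z y s).trans_lt (lt_of_le_of_lt ?_ hz)
    gcongr
    · exact hs.1
    · exact hs.2
  have hle : radialFlow n hF y s₀ ≤ radialFlow n hF y s := hmin hs
  linarith [(abs_lt.1 hdist).1]

namespace IsShootingWell

lemma not_crossesZero_of_losesEnergy (W : IsShootingWell F G β p) (hu : IsRadialProfile n F u)
    (h : LosesEnergy G u) : ¬ CrossesZero u := by
  obtain ⟨R, hR, hpos, hE⟩ := h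
  rintro ⟨r, hr, hneg⟩
  have hRr : R ≤ r := by
    by_contra! hlt
    exact (hpos r ⟨hr, hlt.le⟩).not_gt hneg
  obtain ⟨t, ht, hut⟩ := intermediate_value_Icc' hRr hu.continuous.continuousOn
    ⟨hneg.le, (hpos R ⟨hR, le_rfl⟩).le⟩
  have hle := hu.antitoneOn_energy W.continuous W.hasDerivAt hR (hR.trans ht.1) ht.1
  have hEt : 0 ≤ energy G u t := by
    rw [energy, hut, W.primitive_zero]
    positivity
  linarith

lemma losesEnergy (W : IsShootingWell F G β p) (hu : IsRadialProfile n F u) (h : u 0 ∈ Ioo 0 β) :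
    LosesEnergy G u := by
  refine ⟨0, le_rfl, fun s hs => ?_, ?_⟩
  · rw [le_antisymm hs.2 hs.1]
    exact h.1
  · rw [hu.energy_zero]
    exact W.primitive_neg _ h

lemma le_energy_of_deriv_neg (W : IsShootingWell F G β p) (hu : IsRadialProfile n F u)
    (h₀ : u 0 ∈ Ico β p) (hpos : ∀ r ≥ 0, 0 < u r) (hK : ∀ x ∈ Icc 0 p, |G x| ≤ K) (hR : 0 < R)
    {t : ℝ} (ht : 0 < t) (hneg : ∀ s ∈ Ioo 0 t, deriv u s < 0) :
    energy G u R - n * (2 * √K) / R * p ≤ energy G u t := by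
  have hp : 0 ≤ p := W.root_pos.le.trans W.root_lt_top.le
  rcases le_total t R with htR | hRt
  · have := hu.antitoneOn_energy W.continuous W.hasDerivAt ht.le hR.le htR
    have : 0 ≤ n * (2 * √K) / R * p := by positivity
    linarith
  have hanti : StrictAntiOn u (Icc 0 t) :=
    strictAntiOn_of_deriv_neg (convex_Icc 0 t) hu.continuous.continuousOn (by rwa [interior_Icc])
  have hrange (s : ℝ) (hs : s ∈ Icc 0 t) : u s ∈ Icc 0 p :=
    ⟨(hpos s hs.1).le, (hanti.antitoneOn (left_mem_Icc.2 ht.le) hs hs.1).trans h₀.2.le⟩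
  have hloss := hu.sub_le_energy W.continuous W.hasDerivAt hR hRt (M := 2 * √K) fun r hr => by
    have hr₀ : 0 < r := hR.trans hr.1
    have hspeed := hu.abs_deriv_le_of_abs_le W.continuous W.hasDerivAt hr₀.le
      (hK _ (hrange 0 (left_mem_Icc.2 ht.le))) (hK _ (hrange r ⟨hr₀.le, hr.2.le⟩))
    exact ⟨(abs_le.1 hspeed).1, (hneg r ⟨hr₀, hr.2⟩).le⟩
  have hdrop : n * (2 * √K) / R * (u R - u t) ≤ n * (2 * √K) / R * p := by
    gcongr
    linarith [(hrange R ⟨hR.le, hRt⟩).2, hpos t ht.le]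
  linarith

lemma crossesZero_of_lt_energy (W : IsShootingWell F G β p) (hu : IsRadialProfile n F u)
    (h₀ : u 0 ∈ Ico β p) (hK : ∀ x ∈ Icc 0 p, |G x| ≤ K) (hR : 0 < R)
    (hE : n * (2 * √K) / R * p < energy G u R) : CrossesZero u := by
  by_contra hcross
  have hpos : ∀ r ≥ 0, 0 < u r :=
    W.pos_of_nonneg hu (W.root_pos.trans_le h₀.1) fun r hr => by
      by_contra! hneg
      exact hcross ⟨r, hr, hneg⟩
  have hbound {t : ℝ} := W.le_energy_of_deriv_neg hu h₀ hpos hK hR (t := t)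
  have hneg := W.deriv_neg hu h₀ hpos fun t ht hneg =>
    (sub_pos.2 hE).le.trans (hbound ht hneg)
  have henergy (t : ℝ) (ht : t > 0) := hbound ht fun s hs => hneg s hs.1
  have hlim := W.tendsto_zero hu h₀.2 hpos hneg fun r hr => (sub_pos.2 hE).le.trans (henergy r hr)
  refine hu.not_forall_add_le_energy W.continuous_primitive hpos hneg hlim (sub_pos.2 hE) ?_
  simpa only [W.primitive_zero, zero_add] using henergy

-- The constant profile `p` keeps the energy `G p > 0` forever, so by continuity a profile starting
-- near `p` still has energy close to `G p` at a large radius, where dissipation has become weak.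
lemma eventually_crossesZero (W : IsShootingWell F G β p) (n : ℕ) (hF : LipschitzWith L F) :
    ∀ᶠ y in 𝓝[<] p, CrossesZero (radialFlow n hF y) := by
  obtain ⟨K, hK⟩ := isCompact_Icc.exists_bound_of_continuousOn (s := Icc 0 p)
    W.continuous_primitive.continuousOn
  have hGp : 0 < G p := W.primitive_pos ⟨W.root_lt_top, le_rfl⟩
  obtain ⟨R, hRK, hR⟩ : ∃ R : ℝ, n * (2 * √K) / R * p < G p ∧ 0 < R := by
    have hlim : Tendsto (fun R : ℝ => n * (2 * √K) / R * p) atTop (𝓝 0) := by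
      simpa using (tendsto_const_nhds.div_atTop tendsto_id).mul_const p
    exact ((hlim.eventually_lt_const hGp).and (eventually_gt_atTop 0)).exists
  have htop : radialFlow n hF p = fun _ => p :=
    (isRadialProfile_radialFlow n hF p).eq_of_apply_zero_eq hF (isRadialProfile_const n W.apply_top)
      (radialFlow_zero n hF p)
  have henergy : ∀ᶠ y in 𝓝[<] p, n * (2 * √K) / R * p < energy G (radialFlow n hF y) R :=
    nhdsWithin_le_nhds
      ((continuous_energy_radialFlow n hF W.continuous_primitive R).continuousAt.eventually_const_lt
        (by simpa [htop, energy] using hRK))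
  filter_upwards [henergy, Ico_mem_nhdsLT W.root_lt_top] with y hy hyp
  exact W.crossesZero_of_lt_energy (isRadialProfile_radialFlow n hF y)
    (by rwa [radialFlow_zero]) hK hR hy

lemma exists_not_losesEnergy_not_crossesZero (W : IsShootingWell F G β p) (n : ℕ) :
    ∃ u, IsRadialProfile n F u ∧ u 0 ∈ Ioo 0 p ∧ ¬ LosesEnergy G u ∧ ¬ CrossesZero u := by
  obtain ⟨L, hF⟩ := W.lipschitz
  have hprofile := isRadialProfile_radialFlow n hF
  by_contra! hcover
  have hlose : (Ioo 0 p ∩ {y | LosesEnergy G (radialFlow n hF y)}).Nonempty := by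
    obtain ⟨y, hy⟩ := nonempty_Ioo.2 W.root_pos
    exact ⟨y, ⟨hy.1, hy.2.trans W.root_lt_top⟩,
      W.losesEnergy (hprofile y) (by rwa [radialFlow_zero])⟩
  have hcross : (Ioo 0 p ∩ {y | CrossesZero (radialFlow n hF y)}).Nonempty := by
    obtain ⟨y, hy, hyp⟩ := ((W.eventually_crossesZero n hF).and
      (Ioo_mem_nhdsLT (W.root_pos.trans W.root_lt_top))).exists
    exact ⟨y, hyp, hy⟩
  obtain ⟨y, -, hylose, hycross⟩ := isPreconnected_Ioo _ _
    (isOpen_setOf_losesEnergy n hF W.continuous_primitive) (isOpen_setOf_crossesZero n hF)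
    (fun y hy => or_iff_not_imp_left.2 <| hcover _ (hprofile y) (by rwa [radialFlow_zero]))
    hlose hcross
  exact W.not_crossesZero_of_losesEnergy (hprofile y) hylose hycross

lemma exists_groundState (W : IsShootingWell F G β p) (n : ℕ) :
    ∃ u, IsRadialProfile n F u ∧ u 0 ∈ Ico β p ∧ (∀ r ≥ 0, 0 < u r) ∧ (∀ r > 0, deriv u r < 0) ∧
      (∀ r ≥ 0, 0 ≤ energy G u r) ∧ Tendsto u atTop (𝓝 0) := by
  obtain ⟨u, hu, h₀, hlose, hcross⟩ := W.exists_not_losesEnergy_not_crossesZero n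
  have hpos : ∀ r ≥ 0, 0 < u r := W.pos_of_nonneg hu h₀.1 fun r hr => by
    by_contra! hneg
    exact hcross ⟨r, hr, hneg⟩
  have hE (r : ℝ) (hr : r ≥ 0) : 0 ≤ energy G u r := by
    by_contra! hneg
    exact hlose ⟨r, hr, fun s hs => hpos s hs.1, hneg⟩
  have hβ : β ≤ u 0 := W.root_le h₀.1 (hu.energy_zero G ▸ hE 0 le_rfl)
  have hneg := W.deriv_neg hu ⟨hβ, h₀.2⟩ hpos fun t ht _ => hE t ht.le
  exact ⟨u, hu, ⟨hβ, h₀.2⟩, hpos, hneg, hE,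
    W.tendsto_zero hu h₀.2 hpos hneg fun r hr => hE r hr.le⟩

lemma apply_zero_eq_root (W : IsShootingWell F G β p) (hu : IsRadialProfile 0 F u)
    (h₀ : u 0 ∈ Ico β p) (hpos : ∀ r ≥ 0, 0 < u r) (hneg : ∀ r > 0, deriv u r < 0)
    (hlim : Tendsto u atTop (𝓝 0)) : u 0 = β := by
  refine (h₀.1.eq_or_lt.resolve_right fun hlt => ?_).symm
  refine hu.not_forall_add_le_energy W.continuous_primitive hpos hneg hlim
    (W.primitive_pos ⟨hlt, h₀.2.le⟩) fun r _ => ?_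
  rw [hu.energy_eq_of_zero W.continuous W.hasDerivAt, W.primitive_zero, zero_add]

lemma root_lt_apply_zero (W : IsShootingWell F G β p) (hn : n ≠ 0) (hu : IsRadialProfile n F u)
    (h₀ : β ≤ u 0) (hneg : ∀ r > 0, deriv u r < 0) (hE : ∀ r ≥ 0, 0 ≤ energy G u r) :
    β < u 0 := by
  refine h₀.lt_of_ne fun heq => ?_
  have hlt := hu.strictAntiOn_energy hn W.continuous W.hasDerivAt hneg self_mem_Ici
    (mem_Ici.2 zero_le_one) zero_lt_one
  rw [hu.energy_zero, ← heq, W.primitive_root] at hlt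
  exact (hE 1 zero_le_one).not_gt hlt

end IsShootingWell

end Shooting

section DecayRate

variable {n : ℕ} {F u : ℝ → ℝ} {κ c s r r₀ : ℝ}

/-- The exponential decay rate `-u'/u` of `u`, which solves a Riccati equation when `u` is a radial
profile. -/
def decayRate (u : ℝ → ℝ) (r : ℝ) : ℝ := -(deriv u r / u r)

lemma deriv_eq_neg_decayRate_mul (hur : u r ≠ 0) : deriv u r = -decayRate u r * u r := by
  rw [decayRate, neg_neg, div_mul_cancel₀ _ hur]

lemma isBigO_exp_of_le_decayRate (hu : Differentiable ℝ u) (hpos : ∀ᶠ r in atTop, 0 < u r)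
    (hκ : ∀ᶠ r in atTop, κ ≤ decayRate u r) : u =O[atTop] fun r => exp (-κ * r) := by
  obtain ⟨r₀, hr₀⟩ := eventually_atTop.1 (hpos.and hκ)
  have hderiv (r : ℝ) : HasDerivAt (fun r => u r * exp (κ * r))
      (deriv u r * exp (κ * r) + u r * (exp (κ * r) * (κ * 1))) r :=
    (hu r).hasDerivAt.mul (((hasDerivAt_id r).const_mul κ).exp)
  have hanti : AntitoneOn (fun r => u r * exp (κ * r)) (Ici r₀) := by
    refine antitoneOn_of_deriv_nonpos (convex_Ici r₀)
      (fun r _ => (hderiv r).continuousAt.continuousWithinAt)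
      (fun r _ => (hderiv r).differentiableAt.differentiableWithinAt) fun r hr => ?_
    obtain ⟨hur, hκr⟩ := hr₀ r (interior_subset hr)
    rw [(hderiv r).deriv, deriv_eq_neg_decayRate_mul hur.ne']
    calc -decayRate u r * u r * exp (κ * r) + u r * (exp (κ * r) * (κ * 1))
        = -((decayRate u r - κ) * (u r * exp (κ * r))) := by ring
      _ ≤ 0 := neg_nonpos.2 (mul_nonneg (sub_nonneg.2 hκr) (by positivity))
  refine .of_bound (u r₀ * exp (κ * r₀)) ?_
  filter_upwards [eventually_ge_atTop r₀] with r hr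
  rw [norm_of_nonneg (hr₀ r hr).1.le, norm_of_nonneg (exp_pos _).le, neg_mul, exp_neg,
    ← div_eq_mul_inv, le_div_iff₀ (exp_pos _)]
  exact hanti self_mem_Ici hr hr

lemma tendsto_decayRate (hD : (fun r => decayRate u r - κ - s / r) =O[atTop] fun r => (r ^ 2)⁻¹) :
    Tendsto (decayRate u) atTop (𝓝 κ) := by
  have hD₀ : Tendsto (fun r => decayRate u r - κ - s / r) atTop (𝓝 0) :=
    hD.trans_tendsto (tendsto_inv_atTop_zero.comp (tendsto_pow_atTop two_ne_zero))
  have hs : Tendsto (fun r : ℝ => s / r) atTop (𝓝 0) := tendsto_const_nhds.div_atTop tendsto_id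
  simpa using (hD₀.add hs).add_const κ

lemma tendsto_deriv_of_tendsto_decayRate (hpos : ∀ᶠ r in atTop, 0 < u r)
    (hκ : Tendsto (decayRate u) atTop (𝓝 κ)) (hu : Tendsto u atTop (𝓝 0)) :
    Tendsto (deriv u) atTop (𝓝 0) := by
  have := hκ.neg.mul hu
  rw [mul_zero] at this
  refine this.congr' ?_
  filter_upwards [hpos] with r hur using (deriv_eq_neg_decayRate_mul hur.ne').symm

lemma exists_tendsto_mul_rpow_mul_exp (hu : Differentiable ℝ u) (hpos : ∀ᶠ r in atTop, 0 < u r)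
    (hD : (fun r => decayRate u r - κ - s / r) =O[atTop] fun r => (r ^ 2)⁻¹) :
    ∃ C > 0, Tendsto (fun r => u r * r ^ s * exp (κ * r)) atTop (𝓝 C) ∧
      Tendsto (fun r => deriv u r * r ^ s * exp (κ * r)) atTop (𝓝 (-κ * C)) := by
  obtain ⟨l, hl⟩ := exists_tendsto_of_hasDerivAt_of_isBigO
    (Z := fun r => log (u r) + log r * s + κ * r) (by
      filter_upwards [hpos, eventually_gt_atTop 0] with r hur hr
      refine ((((hu r).hasDerivAt.log hur.ne').add ((hasDerivAt_log hr.ne').mul_const s)).add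
        ((hasDerivAt_id r).const_mul κ)).congr_deriv ?_
      change _ = -(decayRate u r - κ - s / r)
      rw [decayRate]
      ring) hD.neg_left
  have hlim : Tendsto (fun r => u r * r ^ s * exp (κ * r)) atTop (𝓝 (exp l)) := by
    refine ((continuous_exp.tendsto l).comp hl).congr' ?_
    filter_upwards [hpos, eventually_gt_atTop 0] with r hur hr
    rw [Function.comp_apply, exp_add, exp_add, exp_log hur, rpow_def_of_pos hr]
  refine ⟨exp l, exp_pos l, hlim, ((tendsto_decayRate hD).neg.mul hlim).congr' ?_⟩
  filter_upwards [hpos] with r hur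
  rw [deriv_eq_neg_decayRate_mul hur.ne', mul_assoc, mul_assoc, mul_assoc]

lemma isBigO_div_add_of_tendsto (hpos : ∀ᶠ r in atTop, 0 < u r) (hu : Tendsto u atTop (𝓝 0))
    (hF : (fun x => F x + c * x) =O[𝓝[>] 0] fun x => x ^ 2) :
    (fun r => F (u r) / u r + c) =O[atTop] u := by
  have := (hF.comp_tendsto (tendsto_nhdsWithin_iff.2 ⟨hu, hpos⟩)).mul
    (isBigO_refl (fun r => (u r)⁻¹) atTop)
  refine this.congr' ?_ ?_ <;>
  · filter_upwards [hpos] with r hur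
    simp only [Function.comp_apply]
    field_simp

namespace IsRadialProfile

lemma hasDerivAt_decayRate (hu : IsRadialProfile n F u) (hF : Continuous F) (hr : r ≠ 0)
    (hur : u r ≠ 0) : HasDerivAt (decayRate u)
      (decayRate u r ^ 2 - n / r * decayRate u r + F (u r) / u r) r := by
  refine ((hu.hasDerivAt_deriv hF hr).div (hu.hasDerivAt r) hur).neg.congr_deriv ?_
  rw [decayRate]
  field_simp
  ring

lemma le_decayRate (hu : IsRadialProfile n F u) (hF : Continuous F) (hr₀ : 0 < r₀)
    (hpos : ∀ r ≥ r₀, 0 < u r) (hneg : ∀ r ≥ r₀, deriv u r < 0) (hκ : κ ^ 2 < c)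
    (hc : ∀ r ≥ r₀, F (u r) / u r ≤ -c) : κ ≤ decayRate u r₀ := by
  have hrate (r : ℝ) (hr : r ≥ r₀) : 0 < decayRate u r :=
    neg_pos.2 (div_neg_of_neg_of_pos (hneg r hr) (hpos r hr))
  by_contra! hlt
  obtain ⟨r, hr, hbig⟩ := exists_lt_of_le_deriv_of_pos (f := fun r => κ - decayRate u r)
    (sub_pos.2 hκ)
    (fun r hr => (hu.hasDerivAt_decayRate hF (hr₀.trans_le hr).ne' (hpos r hr).ne').const_sub κ)
    (sub_pos.2 hlt)
    (fun r hr hrκ => by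
      have hsq : decayRate u r ^ 2 ≤ κ ^ 2 :=
        pow_le_pow_left₀ (hrate r hr).le (sub_pos.1 hrκ).le 2
      have hdamp : 0 ≤ n / r * decayRate u r :=
        mul_nonneg (div_nonneg n.cast_nonneg (hr₀.trans_le hr).le) (hrate r hr).le
      linarith [hc r hr]) κ
  linarith [hrate r hr]

-- The correction `n / (2 r)` removes the damping term of the Riccati equation up to `O(1 / r²)`.
lemma hasDerivAt_decayRate_sub (hu : IsRadialProfile n F u) (hF : Continuous F) (hr : r ≠ 0)
    (hur : u r ≠ 0) : HasDerivAt (fun r => decayRate u r - κ - n / 2 / r)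
      ((decayRate u r - κ - n / 2 / r) * (decayRate u r - κ - n / 2 / r + 2 * κ) -
        ((n ^ 2 / 4 - n / 2) * (r ^ 2)⁻¹ - (F (u r) / u r + κ ^ 2))) r := by
  refine (((hu.hasDerivAt_decayRate hF hr hur).sub_const κ).sub
    ((hasDerivAt_inv hr).const_mul ((n : ℝ) / 2))).congr_deriv ?_
  generalize decayRate u r = P
  generalize F (u r) / u r = q
  field_simp
  ring

lemma eventually_half_le_decayRate (hu : IsRadialProfile n F u) (hF : Continuous F) (hκ : 0 < κ)
    (hpos : ∀ᶠ r in atTop, 0 < u r) (hneg : ∀ᶠ r in atTop, deriv u r < 0)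
    (hlim : Tendsto (fun r => F (u r) / u r) atTop (𝓝 (-κ ^ 2))) :
    ∀ᶠ r in atTop, κ / 2 ≤ decayRate u r := by
  have hκ₂ := pow_pos hκ 2
  obtain ⟨r₀, hr₀⟩ := eventually_atTop.1 (((hpos.and hneg).and
    (hlim.eventually_lt_const (show -κ ^ 2 < -(κ ^ 2 / 2) by linarith))).and
    (eventually_gt_atTop 0))
  filter_upwards [eventually_ge_atTop r₀] with r hr
  exact hu.le_decayRate hF (hr₀ r hr).2 (fun t ht => (hr₀ t (hr.trans ht)).1.1.1)
    (fun t ht => (hr₀ t (hr.trans ht)).1.1.2)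
    (show (κ / 2) ^ 2 < κ ^ 2 / 2 by linarith) fun t ht => (hr₀ t (hr.trans ht)).1.2.le

lemma isBigO_decayRate_sub (hu : IsRadialProfile n F u) (hF : Continuous F) (hκ : 0 < κ)
    (hpos : ∀ᶠ r in atTop, 0 < u r) (hneg : ∀ᶠ r in atTop, deriv u r < 0)
    (hlim : Tendsto u atTop (𝓝 0))
    (hF₀ : (fun x => F x + κ ^ 2 * x) =O[𝓝[>] 0] fun x => x ^ 2) :
    (fun r => decayRate u r - κ - n / 2 / r) =O[atTop] fun r => (r ^ 2)⁻¹ := by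
  have hlin := isBigO_div_add_of_tendsto hpos hlim hF₀
  have hratio : Tendsto (fun r => F (u r) / u r) atTop (𝓝 (-κ ^ 2)) := by
    have := (hlin.trans_tendsto hlim).sub_const (κ ^ 2)
    rw [zero_sub] at this
    exact this.congr fun r => by ring
  have hrate := hu.eventually_half_le_decayRate hF hκ hpos hneg hratio
  have hdecay : u =O[atTop] fun r => (r ^ 2)⁻¹ := by
    refine (isBigO_exp_of_le_decayRate hu.differentiable hpos hrate).trans
      ((isLittleO_exp_neg_mul_rpow_atTop (half_pos hκ) (-2)).isBigO.congr' .rfl ?_)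
    filter_upwards [eventually_ge_atTop 0] with r hr
    rw [rpow_neg hr, rpow_two]
  have hdamp : Tendsto (fun r : ℝ => (n : ℝ) / 2 / r) atTop (𝓝 0) :=
    tendsto_const_nhds.div_atTop tendsto_id
  refine isBigO_riccati (c := 2 * κ) (half_pos hκ) (by linarith) ?_ ?_
    (((isBigO_refl _ _).const_mul_left (n ^ 2 / 4 - n / 2 : ℝ)).sub (hlin.trans hdecay))
  · filter_upwards [hpos, eventually_gt_atTop 0] with r hur hr
    exact hu.hasDerivAt_decayRate_sub hF hr.ne' hur.ne'
  · filter_upwards [hrate, hdamp.eventually_lt_const hκ] with r hκr hnr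
    linarith

end IsRadialProfile

end DecayRate

section Fnl

variable {a b x : ℝ}

lemma Fnl_eq (ha : a ≠ 0) (b x : ℝ) : Fnl a b x = sin x * cos x * (a * sin x ^ 2 - b) := by
  rw [Fnl, sin_two_mul]
  field_simp

lemma hasDerivAt_Fnl (a b x : ℝ) :
    HasDerivAt (Fnl a b)
      (cos (2 * x) * (a * (sin x ^ 2 - b / a)) + a / 2 * sin (2 * x) ^ 2) x := by
  have hsin : HasDerivAt (fun x => sin (2 * x)) (cos (2 * x) * 2) x := by
    simpa using ((hasDerivAt_id x).const_mul 2).sin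
  refine ((hsin.const_mul (a / 2)).mul
    (((hasDerivAt_sin x).pow 2).sub_const (b / a))).congr_deriv ?_
  rw [sin_two_mul]
  simp only [Pi.pow_apply, Nat.cast_ofNat, Nat.add_one_sub_one, pow_one]
  ring

lemma exists_lipschitzWith_Fnl (a b : ℝ) : ∃ L, LipschitzWith L (Fnl a b) := by
  refine ⟨‖a‖₊ * (1 + ‖b / a‖₊) + ‖a / 2‖₊, lipschitzWith_of_nnnorm_deriv_le
    (fun x => (hasDerivAt_Fnl a b x).differentiableAt) fun x => ?_⟩
  have hsq (y : ℝ) : |sin y ^ 2| ≤ 1 := by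
    rw [abs_of_nonneg (sq_nonneg _)]
    exact sin_sq_le_one y
  rw [(hasDerivAt_Fnl a b x).deriv, ← NNReal.coe_le_coe]
  push_cast
  simp only [norm_eq_abs]
  calc |cos (2 * x) * (a * (sin x ^ 2 - b / a)) + a / 2 * sin (2 * x) ^ 2|
      ≤ |cos (2 * x)| * (|a| * (|sin x ^ 2| + |b / a|)) + |a / 2| * |sin (2 * x) ^ 2| := by
        refine (abs_add_le _ _).trans ?_
        rw [abs_mul, abs_mul, abs_mul (a / 2)]
        gcongr
        exact abs_sub _ _
    _ ≤ 1 * (|a| * (1 + |b / a|)) + |a / 2| * 1 := by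
        gcongr
        exacts [abs_cos_le_one _, hsq x, hsq _]
    _ = |a| * (1 + |b / a|) + |a / 2| := by ring

/-- The primitive of `Fnl a b` that vanishes at `0`. -/
def FnlPrimitive (a b x : ℝ) : ℝ := sin x ^ 2 * (a * sin x ^ 2 - 2 * b) / 4

lemma hasDerivAt_FnlPrimitive (ha : a ≠ 0) (b x : ℝ) :
    HasDerivAt (FnlPrimitive a b) (Fnl a b x) x := by
  rw [Fnl_eq ha]
  have hsq := (hasDerivAt_sin x).pow 2
  refine ((hsq.mul ((hsq.const_mul a).sub_const (2 * b))).div_const 4).congr_deriv ?_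
  simp only [Pi.pow_apply, Nat.cast_ofNat, Nat.add_one_sub_one, pow_one]
  ring

lemma contDiff_Fnl (a b : ℝ) : ContDiff ℝ 2 (Fnl a b) := by
  unfold Fnl
  fun_prop

lemma isBigO_Fnl_add (ha : a ≠ 0) (b : ℝ) :
    (fun x => Fnl a b x + b * x) =O[𝓝[>] 0] fun x => x ^ 2 := by
  have hderiv : deriv (Fnl a b) 0 = -b := by
    rw [(hasDerivAt_Fnl a b 0).deriv]
    simp [mul_div_cancel₀ b ha]
  simpa [Fnl, hderiv] using isBigO_sub_sub_deriv_mul (contDiff_Fnl a b) 0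

lemma sin_arcsin_sqrt_div_sq (hb : 0 < b) (hab : 2 * b < a) :
    sin (arcsin √(2 * b / a)) ^ 2 = 2 * b / a := by
  have ha : 0 < a := by linarith
  rw [sin_arcsin (by linarith [sqrt_nonneg (2 * b / a)]), sq_sqrt (by positivity)]
  exact sqrt_le_one.2 ((div_le_one ha).2 hab.le)

lemma arcsin_sqrt_div_pos (hb : 0 < b) (hab : 2 * b < a) : 0 < arcsin √(2 * b / a) :=
  arcsin_pos.2 (sqrt_pos.2 (div_pos (by linarith) (by linarith)))

lemma arcsin_sqrt_div_lt_pi_div_two (hb : 0 < b) (hab : 2 * b < a) :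
    arcsin √(2 * b / a) < π / 2 := by
  rw [arcsin_lt_pi_div_two, sqrt_lt' one_pos, one_pow, div_lt_one (by linarith)]
  exact hab

lemma FnlPrimitive_neg (hb : 0 < b) (hab : 2 * b < a) (hx : x ∈ Ioo 0 (arcsin √(2 * b / a))) :
    FnlPrimitive a b x < 0 := by
  have htop := arcsin_sqrt_div_lt_pi_div_two hb hab
  have hsin : 0 < sin x := sin_pos_of_pos_of_lt_pi hx.1 (by linarith [hx.2, pi_pos])
  have hlt : sin x ^ 2 < 2 * b / a := by
    rw [← sin_arcsin_sqrt_div_sq hb hab]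
    exact pow_lt_pow_left₀ (sin_lt_sin_of_lt_of_le_pi_div_two (by linarith [hx.1, pi_pos])
      htop.le hx.2) hsin.le two_ne_zero
  rw [lt_div_iff₀' (by linarith)] at hlt
  exact div_neg_of_neg_of_pos (mul_neg_of_pos_of_neg (by positivity) (by linarith)) four_pos

lemma Fnl_pos (hb : 0 < b) (hab : 2 * b < a) (hx : x ∈ Ico (arcsin √(2 * b / a)) (π / 2)) :
    0 < Fnl a b x := by
  have hroot := arcsin_sqrt_div_pos hb hab
  have hsin : 0 < sin x := sin_pos_of_pos_of_lt_pi (hroot.trans_le hx.1)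
    (by linarith [hx.2, pi_pos])
  have hcos : 0 < cos x := cos_pos_of_mem_Ioo ⟨by linarith [hx.1, pi_pos], hx.2⟩
  have hle : 2 * b / a ≤ sin x ^ 2 := by
    rw [← sin_arcsin_sqrt_div_sq hb hab]
    exact pow_le_pow_left₀ (sin_nonneg_of_nonneg_of_le_pi hroot.le (by linarith [hx.1, hx.2]))
      (sin_le_sin_of_le_of_le_pi_div_two (by linarith [pi_pos]) hx.2.le hx.1) 2
  rw [div_le_iff₀' (by linarith)] at hle
  rw [Fnl_eq (by linarith)]
  exact mul_pos (mul_pos hsin hcos) (by linarith)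

lemma isShootingWell_Fnl (hb : 0 < b) (hab : 2 * b < a) :
    IsShootingWell (Fnl a b) (FnlPrimitive a b) (arcsin √(2 * b / a)) (π / 2) where
  lipschitz := exists_lipschitzWith_Fnl a b
  hasDerivAt := hasDerivAt_FnlPrimitive (by linarith) b
  apply_zero := by simp [Fnl]
  apply_top := by simp [Fnl, mul_div_cancel₀]
  primitive_zero := by simp [FnlPrimitive]
  primitive_root := by
    rw [FnlPrimitive, sin_arcsin_sqrt_div_sq hb hab, mul_div_cancel₀ _ (by linarith)]
    ring
  root_pos := arcsin_sqrt_div_pos hb hab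
  root_lt_top := arcsin_sqrt_div_lt_pi_div_two hb hab
  primitive_neg := fun _ => FnlPrimitive_neg hb hab
  pos := fun _ => Fnl_pos hb hab

end Fnl

theorem existence_of_ground_state_general {d : ℕ} (hd : 1 ≤ d) {F G : ℝ → ℝ} {β p b : ℝ}
    (W : IsShootingWell F G β p) (hb : 0 < b)
    (hF : (fun x => F x + b * x) =O[𝓝[>] 0] fun x => x ^ 2) :
    ∃ ybar ∈ Ioo 0 p, ∃ Q : ℝ → ℝ,
      (ContDiff ℝ 2 Q ∧ deriv Q 0 = 0 ∧
        ∀ r, 0 < r → deriv (deriv Q) r + ((d : ℝ) - 1) / r * deriv Q r + F (Q r) = 0) ∧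
      Q 0 = ybar ∧ (∀ r, 0 ≤ r → 0 < Q r) ∧ StrictAntiOn Q (Ici 0) ∧
      Tendsto Q atTop (𝓝 0) ∧ Tendsto (deriv Q) atTop (𝓝 0) ∧
      (∃ C, 0 < C ∧
        Tendsto (fun r => Q r * r ^ (((d : ℝ) - 1) / 2) * exp (√b * r)) atTop (𝓝 C) ∧
        Tendsto (fun r => deriv Q r * r ^ (((d : ℝ) - 1) / 2) * exp (√b * r)) atTop
          (𝓝 (-√b * C))) ∧
      (d = 1 → ybar = β) ∧ (2 ≤ d → ybar ∈ Ioo β p) := by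
  obtain ⟨n, rfl⟩ : ∃ n, d = n + 1 := ⟨d - 1, (Nat.sub_add_cancel hd).symm⟩
  simp only [Nat.cast_add_one, add_sub_cancel_right]
  obtain ⟨Q, hQ, h₀, hpos, hneg, hE, hlim⟩ := W.exists_groundState n
  have hpos' : ∀ᶠ r in atTop, 0 < Q r := (eventually_ge_atTop 0).mono hpos
  have hD := hQ.isBigO_decayRate_sub W.continuous (sqrt_pos.2 hb) hpos'
    ((eventually_gt_atTop 0).mono hneg) hlim (by rwa [sq_sqrt hb.le])
  refine ⟨Q 0, ⟨W.root_pos.trans_le h₀.1, h₀.2⟩, Q,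
    ⟨hQ.contDiff W.continuous, hQ.deriv_zero, fun r hr => ?_⟩, rfl, hpos, ?_, hlim,
    tendsto_deriv_of_tendsto_decayRate hpos' (tendsto_decayRate hD) hlim,
    exists_tendsto_mul_rpow_mul_exp hQ.differentiable hpos' hD, fun hd => ?_, fun hd => ?_⟩
  · rw [(hQ.hasDerivAt_deriv W.continuous hr.ne').deriv]
    ring
  · exact strictAntiOn_of_deriv_neg (convex_Ici 0) hQ.continuous.continuousOn
      (by simpa [interior_Ici] using hneg)
  · obtain rfl : n = 0 := by omega
    exact W.apply_zero_eq_root hQ h₀ hpos hneg hlim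
  · exact ⟨W.root_lt_apply_zero (by omega) hQ h₀.1 hneg hE, h₀.2⟩

theorem existence_of_ground_state (d : ℕ) (hd : 1 ≤ d) (a b : ℝ)
    (hb : 0 < b) (hab : 2 * b < a) :
    ∃ ybar ∈ Set.Ioo (0 : ℝ) (Real.pi / 2), ∃ Q : ℝ → ℝ,
      IsRadialSol d a b Q ∧ Q 0 = ybar ∧
      (∀ r : ℝ, 0 ≤ r → 0 < Q r) ∧
      StrictAntiOn Q (Set.Ici 0) ∧
      Tendsto Q atTop (nhds 0) ∧
      Tendsto (deriv Q) atTop (nhds 0) ∧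
      (∃ C : ℝ, 0 < C ∧
        Tendsto (fun r : ℝ =>
          Q r * r ^ (((d : ℝ) - 1) / 2) * Real.exp (Real.sqrt b * r)) atTop (nhds C) ∧
        Tendsto (fun r : ℝ =>
          deriv Q r * r ^ (((d : ℝ) - 1) / 2) * Real.exp (Real.sqrt b * r)) atTop
          (nhds (-Real.sqrt b * C))) ∧
      (d = 1 → ybar = Real.arcsin (Real.sqrt (2 * b / a))) ∧
      (2 ≤ d → ybar ∈ Set.Ioo (Real.arcsin (Real.sqrt (2 * b / a))) (Real.pi / 2)) :=
  existence_of_ground_state_general hd (isShootingWell_Fnl hb hab) hb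
    (isBigO_Fnl_add (show a ≠ 0 by linarith) b)
end
end

section
/- Let d ≥ 1 and a > 2b > 0, and let Q be the positive strictly decreasing solution of the radial ODE with Q'(0) = 0 and (Q, Q') → (0,0) at infinity. Then Q is the unique such solution: if u : [0,∞) → ℝ is any positive solution of u'' + ((d−1)/r)u' + F(u) = 0 with u'(0) = 0 and (u(r), u'(r)) → (0, 0) as r → ∞, then u = Q. -/
open Real Filter

noncomputable section

/-!
A positive decaying solution turns out to decrease strictly, so it can be described by its height
`y`: by the radius `r(y)` at which it has height `y`, and by `p(y)`, minus its slope there. With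
`f` the reaction term and `n = d - 1`, the Pohozaev identity shows that the excess
`r f / p + r p / y - (n - 1)` is positive, so that the decay rate `r p / y` decreases strictly in
`y` and can serve as independent variable. In that variable the reaction ratio `r f / p` solves a
singular first-order equation which sees the solution only through the growth function `y f' / f`,
and strict monotonicity of the growth function keeps the decay rates of two solutions of different
height from crossing. Hence the taller of the two has, at the positive zero of `f`, both the larger
radius and the larger speed. Below that zero `f` is negative, and there a larger radius forces a
speed which is no larger: the heights agree, and the initial value problem has one solution. In
dimension one energy conservation determines the height directly.
-/

namespace RadialGroundState

open Set Topology

section Calculus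

variable {g g' : ℝ → ℝ} {D : Set ℝ} {x c l L : ℝ}

lemma monotoneOn_of_hasDerivAt_nonneg (hD : Convex ℝ D) (hg : ∀ t ∈ D, HasDerivAt g (g' t) t)
    (hg' : ∀ t ∈ interior D, 0 ≤ g' t) : MonotoneOn g D :=
  monotoneOn_of_hasDerivWithinAt_nonneg hD (fun t ht => (hg t ht).continuousAt.continuousWithinAt)
    (fun t ht => (hg t (interior_subset ht)).hasDerivWithinAt) hg'

lemma antitoneOn_of_hasDerivAt_nonpos (hD : Convex ℝ D) (hg : ∀ t ∈ D, HasDerivAt g (g' t) t)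
    (hg' : ∀ t ∈ interior D, g' t ≤ 0) : AntitoneOn g D :=
  antitoneOn_of_hasDerivWithinAt_nonpos hD (fun t ht => (hg t ht).continuousAt.continuousWithinAt)
    (fun t ht => (hg t (interior_subset ht)).hasDerivWithinAt) hg'

lemma strictMonoOn_of_hasDerivAt_pos (hD : Convex ℝ D) (hg : ∀ t ∈ D, HasDerivAt g (g' t) t)
    (hg' : ∀ t ∈ interior D, 0 < g' t) : StrictMonoOn g D :=
  strictMonoOn_of_hasDerivWithinAt_pos hD (fun t ht => (hg t ht).continuousAt.continuousWithinAt)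
    (fun t ht => (hg t (interior_subset ht)).hasDerivWithinAt) hg'

lemma strictAntiOn_of_hasDerivAt_neg (hD : Convex ℝ D) (hg : ∀ t ∈ D, HasDerivAt g (g' t) t)
    (hg' : ∀ t ∈ interior D, g' t < 0) : StrictAntiOn g D :=
  strictAntiOn_of_hasDerivWithinAt_neg hD (fun t ht => (hg t ht).continuousAt.continuousWithinAt)
    (fun t ht => (hg t (interior_subset ht)).hasDerivWithinAt) hg'

lemma le_of_hasDerivAt_nonneg_of_tendsto (hlc : l < c)
    (hg : ∀ t ∈ Ioc l c, HasDerivAt g (g' t) t) (hg' : ∀ t ∈ Ioo l c, 0 ≤ g' t)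
    (hL : Tendsto g (𝓝[>] l) (𝓝 L)) : L ≤ g c := by
  have hmono : MonotoneOn g (Ioc l c) :=
    monotoneOn_of_hasDerivAt_nonneg (convex_Ioc l c) hg (by rwa [interior_Ioc])
  refine le_of_tendsto hL ?_
  filter_upwards [Ioo_mem_nhdsGT hlc] with t ht
  exact hmono (Ioo_subset_Ioc_self ht) (right_mem_Ioc.2 hlc) ht.2.le

lemma le_of_hasDerivAt_nonpos_of_tendsto (hlc : l < c)
    (hg : ∀ t ∈ Ico l c, HasDerivAt g (g' t) t) (hg' : ∀ t ∈ Ioo l c, g' t ≤ 0)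
    (hL : Tendsto g (𝓝[<] c) (𝓝 L)) : L ≤ g l := by
  have hanti : AntitoneOn g (Ico l c) :=
    antitoneOn_of_hasDerivAt_nonpos (convex_Ico l c) hg (by rwa [interior_Ico])
  refine le_of_tendsto hL ?_
  filter_upwards [Ioo_mem_nhdsLT hlc] with t ht
  exact hanti (left_mem_Ico.2 hlc) (Ioo_subset_Ico_self ht) ht.1.le

lemma exists_last_zero (hxc : x < c) (hg : ContinuousOn g (Ico x c)) (hx : g x ≤ 0)
    (hc : ∀ᶠ t in 𝓝[<] c, 0 < g t) : ∃ y ∈ Ico x c, g y = 0 ∧ ∀ t ∈ Ioo y c, 0 < g t := by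
  obtain ⟨z, hzc, hz⟩ := (nhdsLT_basis c).eventually_iff.1 hc
  obtain ⟨e, hez, hec⟩ := exists_between (max_lt hxc hzc)
  obtain ⟨hxe, hze⟩ := max_lt_iff.1 hez
  have hsub : Icc x e ⊆ Ico x c := fun t ht => ⟨ht.1, ht.2.trans_lt hec⟩
  have hge : 0 < g e := hz ⟨hze, hec⟩
  have hclosed : IsClosed (Icc x e ∩ g ⁻¹' {0}) :=
    (hg.mono hsub).preimage_isClosed_of_isClosed isClosed_Icc isClosed_singleton
  have hne : (Icc x e ∩ g ⁻¹' {0}).Nonempty :=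
    intermediate_value_Icc hxe.le (hg.mono hsub) ⟨hx, hge.le⟩
  obtain ⟨y, ⟨hy, hgy⟩, hmax⟩ :=
    (isCompact_Icc.of_isClosed_subset hclosed inter_subset_left).exists_isGreatest hne
  refine ⟨y, hsub hy, hgy, fun t ht => ?_⟩
  rcases lt_or_ge e t with het | hte
  · exact hz ⟨hze.trans het, ht.2⟩
  by_contra! hgt
  obtain ⟨w, hw, hgw⟩ := intermediate_value_Icc hte
    (hg.mono ((Icc_subset_Icc_left (hy.1.trans ht.1.le)).trans hsub)) ⟨hgt, hge.le⟩
  exact (ht.1.trans_le hw.1).not_ge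
    (hmax ⟨⟨hy.1.trans (ht.1.le.trans hw.1), hw.2⟩, hgw⟩)

lemma deriv_nonneg_of_pos_right {m : ℝ} (hxc : x < c) (hg : HasDerivAt g m x) (hx : g x = 0)
    (hpos : ∀ t ∈ Ioo x c, 0 < g t) : 0 ≤ m := by
  have hslope : Tendsto (slope g x) (𝓝[>] x) (𝓝 m) :=
    (hasDerivAt_iff_tendsto_slope.1 hg).mono_left (nhdsWithin_mono x fun t ht => ne_of_gt ht)
  refine ge_of_tendsto hslope ?_
  filter_upwards [Ioo_mem_nhdsGT hxc] with t ht
  rw [slope_def_field, hx, sub_zero]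
  exact (div_pos (hpos t ht) (sub_pos.2 ht.1)).le

lemma pos_of_deriv_neg_at_zeros (hxc : x < c) (hg : ∀ t ∈ Ico x c, HasDerivAt g (g' t) t)
    (hc : ∀ᶠ t in 𝓝[<] c, 0 < g t)
    (hzero : ∀ y ∈ Ico x c, g y = 0 → (∀ t ∈ Ioo y c, 0 < g t) → g' y < 0) : 0 < g x := by
  by_contra! hx
  obtain ⟨y, hy, hgy, hpos⟩ := exists_last_zero hxc
    (fun t ht => (hg t ht).continuousAt.continuousWithinAt) hx hc
  exact (hzero y hy hgy hpos).not_ge (deriv_nonneg_of_pos_right hy.2 (hg y hy) hgy hpos)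

lemma pos_of_deriv_pos_at_zeros (hcx : c < x) (hg : ∀ t ∈ Ioc c x, HasDerivAt g (g' t) t)
    (hc : ∀ᶠ t in 𝓝[>] c, 0 < g t)
    (hzero : ∀ y ∈ Ioc c x, g y = 0 → (∀ t ∈ Ioo c y, 0 < g t) → 0 < g' y) : 0 < g x := by
  have hreflect : ∀ t ∈ Ico (-x) (-c), HasDerivAt (g ∘ Neg.neg) (-g' (-t)) t := fun t ht => by
    simpa using (hg (-t) ⟨lt_neg.1 ht.2, neg_le.1 ht.1⟩).comp t (hasDerivAt_neg t)
  have hlim : Tendsto Neg.neg (𝓝[<] (-c)) (𝓝[>] c) := by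
    simpa using tendsto_neg_nhdsLT (a := -c)
  have := pos_of_deriv_neg_at_zeros (neg_lt_neg hcx) hreflect (hlim.eventually hc)
    fun y hy hgy hpos => neg_neg_of_pos <| hzero (-y) ⟨lt_neg.1 hy.2, neg_le.1 hy.1⟩ hgy
      fun t ht => by simpa using hpos (-t) ⟨lt_neg.1 ht.2, neg_lt_neg ht.1⟩
  simpa using this

lemma continuousAt_of_rightInvOn {s t : Set ℝ} {h : ℝ → ℝ} {y : ℝ} (hs : IsOpen s)
    (hg : StrictAntiOn g s) (ht : IsOpen t) (hmem : MapsTo h t s) (hinv : RightInvOn h g t)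
    (hy : y ∈ t) : ContinuousAt h y := by
  have hnhds := hs.mem_nhds (hmem hy)
  refine tendsto_order.2 ⟨fun a ha => ?_, fun a ha => ?_⟩
  · obtain ⟨x, hx, hxs⟩ := Filter.nonempty_of_mem
      (inter_mem (Ioo_mem_nhdsLT ha) (mem_nhdsWithin_of_mem_nhds hnhds))
    have hyx : y < g x := by simpa only [hinv hy] using hg hxs (hmem hy) hx.2
    filter_upwards [ht.mem_nhds hy, Iio_mem_nhds hyx] with z hz hzx
    exact hx.1.trans ((hg.lt_iff_gt (hmem hz) hxs).1 (by rwa [hinv hz]))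
  · obtain ⟨x, hx, hxs⟩ := Filter.nonempty_of_mem
      (inter_mem (Ioo_mem_nhdsGT ha) (mem_nhdsWithin_of_mem_nhds hnhds))
    have hyx : g x < y := by simpa only [hinv hy] using hg (hmem hy) hxs hx.1
    filter_upwards [ht.mem_nhds hy, Ioi_mem_nhds hyx] with z hz hzx
    exact ((hg.lt_iff_gt hxs (hmem hz)).1 (by rwa [hinv hz])).trans hx.2

lemma mem_Ioo_of_strictAntiOn_of_tendsto {s : Set ℝ} {lo hi : Filter ℝ} [lo.NeBot] [hi.NeBot]
    (hlo : lo.HasBasis (· ∈ s) fun x => s ∩ Iio x) (hhi : hi.HasBasis (· ∈ s) fun x => s ∩ Ioi x)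
    {U : ℝ} (hg : StrictAntiOn g s) (hU : Tendsto g lo (𝓝 U)) (hL : Tendsto g hi (𝓝 L))
    (hx : x ∈ s) : g x ∈ Ioo L U := by
  obtain ⟨v, hv, hvx⟩ := Filter.nonempty_of_mem (hlo.mem_of_mem hx)
  obtain ⟨w, hw, hxw⟩ := Filter.nonempty_of_mem (hhi.mem_of_mem hx)
  refine ⟨(le_of_tendsto hL ?_).trans_lt (hg hx hw hxw),
    (hg hv hx hvx).trans_le (ge_of_tendsto hU ?_)⟩
  · filter_upwards [hhi.mem_of_mem hw] with z hz using (hg hw hz.1 hz.2).le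
  · filter_upwards [hlo.mem_of_mem hv] with z hz using (hg hz.1 hv hz.2).le

lemma hasBasis_nhdsGT_Ioo {x M : ℝ} (hx : x < M) :
    (𝓝[>] x).HasBasis (· ∈ Ioo x M) fun z => Ioo x M ∩ Iio z := by
  refine ((nhdsGT_basis x).restrict fun z hz => ?_).congr (fun _ => Iff.rfl) fun z hz => ?_
  · obtain ⟨y, hxy, hy⟩ := exists_between (lt_min hz hx)
    exact ⟨y, hxy, (lt_min_iff.1 hy).2, Ioo_subset_Ioo_right (lt_min_iff.1 hy).1.le⟩
  · rw [Ioo_inter_Iio, min_eq_right hz.2.le]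

lemma hasBasis_nhdsLT_Ioo {x M : ℝ} (hx : x < M) :
    (𝓝[<] M).HasBasis (· ∈ Ioo x M) fun z => Ioo x M ∩ Ioi z := by
  refine ((nhdsLT_basis M).restrict (q := (x < ·)) fun z hz => ?_).congr (fun _ => and_comm)
    fun z hz => ?_
  · obtain ⟨y, hy, hyM⟩ := exists_between (max_lt hz hx)
    exact ⟨y, hyM, (max_lt_iff.1 hy).2, Ioo_subset_Ioo_left (max_lt_iff.1 hy).1.le⟩
  · rw [Ioo_inter_Ioi, max_eq_right hz.2.le]

lemma exists_hasDerivAt_inverse {s : Set ℝ} (hs : IsOpen s) (hs' : s.OrdConnected)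
    {lo hi : Filter ℝ} [lo.NeBot] [hi.NeBot] (hlo : lo.HasBasis (· ∈ s) fun x => s ∩ Iio x)
    (hhi : hi.HasBasis (· ∈ s) fun x => s ∩ Ioi x) {U : ℝ} (hg : ∀ x ∈ s, HasDerivAt g (g' x) x)
    (hneg : ∀ x ∈ s, g' x < 0) (hU : Tendsto g lo (𝓝 U)) (hL : Tendsto g hi (𝓝 L)) :
    ∃ h : ℝ → ℝ, (∀ y ∈ Ioo L U, h y ∈ s ∧ g (h y) = y ∧ HasDerivAt h (g' (h y))⁻¹ y) ∧
      Tendsto h (𝓝[<] U) lo ∧ Tendsto h (𝓝[>] L) hi := by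
  have hanti : StrictAntiOn g s :=
    strictAntiOn_of_hasDerivAt_neg hs'.convex hg fun t ht => hneg t (interior_subset ht)
  have hsurj : ∀ y ∈ Ioo L U, ∃ x ∈ s, g x = y := fun y hy => by
    obtain ⟨x₁, hx₁⟩ := hlo.ex_mem
    obtain ⟨x₂, hx₂⟩ := hhi.ex_mem
    obtain ⟨v, hv, hyv⟩ := Filter.nonempty_of_mem
      (inter_mem (hlo.mem_of_mem hx₁) (hU.eventually_const_lt hy.2))
    obtain ⟨w, hw, hwy⟩ := Filter.nonempty_of_mem
      (inter_mem (hhi.mem_of_mem hx₂) (hL.eventually_lt_const hy.1))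
    exact (isPreconnected_iff_ordConnected.2 hs').intermediate_value hw.1 hv.1
      (fun t ht => (hg t ht).continuousAt.continuousWithinAt) ⟨le_of_lt hwy, le_of_lt hyv⟩
  choose! h hmem hinv using hsurj
  have hcont : ∀ y ∈ Ioo L U, ContinuousAt h y := fun y =>
    continuousAt_of_rightInvOn hs hanti isOpen_Ioo hmem hinv
  have hgmem : ∀ x ∈ s, g x ∈ Ioo L U := fun x hx =>
    mem_Ioo_of_strictAntiOn_of_tendsto hlo hhi hanti hU hL hx
  have hLU : L < U := by
    obtain ⟨x, hx⟩ := hlo.ex_mem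
    exact (hgmem x hx).1.trans (hgmem x hx).2
  refine ⟨h, fun y hy => ⟨hmem y hy, hinv y hy, (hg _ (hmem y hy)).of_local_left_inverse
    (hcont y hy) (hneg _ (hmem y hy)).ne ?_⟩, hlo.tendsto_right_iff.2 fun x hx => ?_,
    hhi.tendsto_right_iff.2 fun x hx => ?_⟩
  · filter_upwards [Ioo_mem_nhds hy.1 hy.2] with z hz using hinv z hz
  · filter_upwards [Ioo_mem_nhdsLT hLU, Ioo_mem_nhdsLT (hgmem x hx).2] with z hz hxz
    exact ⟨hmem z hz, (hanti.lt_iff_gt hx (hmem z hz)).1 (by simpa only [hinv z hz] using hxz.1)⟩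
  · filter_upwards [Ioo_mem_nhdsGT hLU, Ioo_mem_nhdsGT (hgmem x hx).1] with z hz hzx
    exact ⟨hmem z hz, (hanti.lt_iff_gt (hmem z hz) hx).1 (by simpa only [hinv z hz] using hzx.2)⟩

end Calculus

/-- The logarithmic derivative `y f'(y) / f(y)` of `f` with respect to `log y`: the local growth
exponent of the nonlinearity. -/
def growthFunction (f : ℝ → ℝ) (y : ℝ) : ℝ := y * deriv f y / f y

/-- The nonlinearities covered by the uniqueness theorem, with primitive `F`: `f` is negative on
`(0, α)`, positive on `(α, ω)` with a strictly decreasing growth function there, and `F` attains its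
maximum over the positive reals at `ω`, so that ground states stay below `ω`. -/
structure IsGroundStateNonlinearity (f F : ℝ → ℝ) (α ω : ℝ) : Prop where
  contDiff : ContDiff ℝ 1 f
  hasDerivAt_primitive : ∀ y, HasDerivAt F (f y) y
  primitive_zero : F 0 = 0
  zero_lt_threshold : 0 < α
  threshold_lt : α < ω
  map_zero : f 0 = 0
  map_threshold : f α = 0
  neg : ∀ y ∈ Ioo 0 α, f y < 0
  pos : ∀ y ∈ Ioo α ω, 0 < f y
  deriv_zero_neg : deriv f 0 < 0
  two_mul_primitive_le : ∀ y ∈ Ioo 0 α, 2 * F y ≤ y * f y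
  growthFunction_strictAntiOn : StrictAntiOn (growthFunction f) (Ioo α ω)
  primitive_le : ∀ y, 0 < y → F y ≤ F ω

/-- The density of the Pohozaev identity: the derivative of `pohozaev` along a profile is a negative
multiple of it. The dimension is `n + 1`. -/
def pohozaevDensity (n : ℝ) (f F : ℝ → ℝ) (y : ℝ) : ℝ := (n + 1) * F y - (n - 1) / 2 * (y * f y)

namespace IsGroundStateNonlinearity

variable {f F : ℝ → ℝ} {α ω n x y : ℝ} (hf : IsGroundStateNonlinearity f F α ω)
include hf

lemma hasDerivAt (y : ℝ) : HasDerivAt f (deriv f y) y :=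
  (hf.contDiff.differentiable one_ne_zero y).hasDerivAt

lemma mem_of_threshold_lt (hy : y ∈ Ioo α x) : y ∈ Ioo 0 x :=
  ⟨hf.zero_lt_threshold.trans hy.1, hy.2⟩

lemma continuous_primitive : Continuous F :=
  continuous_iff_continuousAt.2 fun y => (hf.hasDerivAt_primitive y).continuousAt

lemma primitive_neg (hy : y ∈ Ioc 0 α) : F y < 0 := by
  have hanti : StrictAntiOn F (Icc 0 α) :=
    strictAntiOn_of_hasDerivAt_neg (convex_Icc 0 α) (fun t _ => hf.hasDerivAt_primitive t)
      (by rw [interior_Icc]; exact hf.neg)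
  simpa only [hf.primitive_zero] using
    hanti (left_mem_Icc.2 hf.zero_lt_threshold.le) (Ioc_subset_Icc_self hy) hy.1

lemma lt_of_primitive_nonneg (hy : 0 < y) (hF : 0 ≤ F y) : α < y := by
  by_contra! hyα
  exact (hf.primitive_neg ⟨hy, hyα⟩).not_ge hF

lemma primitive_strictMonoOn : StrictMonoOn F (Icc α ω) :=
  strictMonoOn_of_hasDerivAt_pos (convex_Icc α ω) (fun t _ => hf.hasDerivAt_primitive t)
    (by rw [interior_Icc]; exact hf.pos)

lemma tendsto_primitive_zero : Tendsto F (𝓝 0) (𝓝 0) := by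
  simpa only [hf.primitive_zero] using hf.continuous_primitive.tendsto 0

lemma tendsto_primitive_div_sq :
    Tendsto (fun y => F y / y ^ 2) (𝓝[>] 0) (𝓝 (deriv f 0 / 2)) := by
  have hslope : Tendsto (fun y => f y / (2 * y)) (𝓝[>] 0) (𝓝 (deriv f 0 / 2)) := by
    have hlim := ((hasDerivAt_iff_tendsto_slope.1 (hf.hasDerivAt 0)).mono_left
      (nhdsWithin_mono 0 fun t (ht : 0 < t) => ht.ne')).div_const 2
    refine hlim.congr fun y => ?_
    rw [slope_def_field, hf.map_zero, sub_zero, sub_zero, div_div, mul_comm]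
  have hsq : ∀ y : ℝ, HasDerivAt (fun y => y ^ 2) (2 * y) y := fun y => by
    simpa using hasDerivAt_pow 2 y
  refine HasDerivAt.lhopital_zero_nhdsGT (.of_forall hf.hasDerivAt_primitive) (.of_forall hsq) ?_
    (hf.tendsto_primitive_zero.mono_left nhdsWithin_le_nhds) ?_ hslope
  · filter_upwards [self_mem_nhdsWithin] with y (hy : 0 < y) using (mul_pos two_pos hy).ne'
  · exact ((continuous_pow 2).tendsto' 0 0 (zero_pow two_ne_zero)).mono_left nhdsWithin_le_nhds

lemma continuousAt_growthFunction (hy : y ∈ Ioo α ω) : ContinuousAt (growthFunction f) y :=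
  (continuousAt_id.mul (hf.contDiff.continuous_deriv le_rfl).continuousAt).div
    (hf.hasDerivAt y).continuousAt (hf.pos y hy).ne'

lemma two_mul_primitive_lt (hy : y ∈ Ioo α ω) (hK : 1 ≤ growthFunction f y) :
    2 * F y < y * f y := by
  have hderiv : ∀ t ∈ Icc α y,
      HasDerivAt (fun t => t * f t - 2 * F t) (t * deriv f t - f t) t := fun t _ =>
    (((hasDerivAt_id t).mul (hf.hasDerivAt t)).sub
      ((hf.hasDerivAt_primitive t).const_mul 2)).congr_deriv (by simp only [id_eq]; ring)
  have hmono : MonotoneOn (fun t => t * f t - 2 * F t) (Icc α y) := by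
    refine monotoneOn_of_hasDerivAt_nonneg (convex_Icc α y) hderiv fun t ht => ?_
    rw [interior_Icc] at ht
    have htω : t ∈ Ioo α ω := ⟨ht.1, ht.2.trans hy.2⟩
    have hKt : 1 < t * deriv f t / f t :=
      hK.trans_lt (hf.growthFunction_strictAntiOn htω hy ht.2)
    rw [one_lt_div (hf.pos t htω)] at hKt
    exact (sub_pos.2 hKt).le
  have hα : F α < 0 := hf.primitive_neg ⟨hf.zero_lt_threshold, le_rfl⟩
  have hle := hmono (left_mem_Icc.2 hy.1.le) (right_mem_Icc.2 hy.1.le) hy.1.le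
  simp only [hf.map_threshold] at hle
  linarith

lemma hasDerivAt_pohozaevDensity (hy : y ∈ Ioo α ω) : HasDerivAt (pohozaevDensity n f F)
    (f y / 2 * (n + 3 - (n - 1) * growthFunction f y)) y := by
  refine (((hf.hasDerivAt_primitive y).const_mul (n + 1)).sub
    (((hasDerivAt_id y).mul (hf.hasDerivAt y)).const_mul ((n - 1) / 2))).congr_deriv ?_
  have := (hf.pos y hy).ne'
  simp only [growthFunction, id_eq]
  field

lemma continuous_pohozaevDensity : Continuous (pohozaevDensity n f F) :=
  (hf.continuous_primitive.const_mul _).sub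
    ((continuous_id.mul hf.contDiff.continuous).const_mul _)

lemma pohozaevDensity_nonpos_of_le_threshold (hn : 0 ≤ n + 1) (hx : x ∈ Ioc 0 α) :
    pohozaevDensity n f F x ≤ 0 := by
  rcases hx.2.eq_or_lt with rfl | hxα
  · simpa [pohozaevDensity, hf.map_threshold] using
      mul_nonpos_of_nonneg_of_nonpos hn (hf.primitive_neg hx).le
  · have hfx : x * f x ≤ 0 := mul_nonpos_of_nonneg_of_nonpos hx.1.le (hf.neg x ⟨hx.1, hxα⟩).le
    have hFx := mul_le_mul_of_nonneg_left (hf.two_mul_primitive_le x ⟨hx.1, hxα⟩) hn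
    unfold pohozaevDensity
    linarith

lemma pohozaevDensity_nonpos (hn : 1 ≤ n) (hx : 0 < x) (hxy : x ≤ y) (hyω : y < ω)
    (hH : pohozaevDensity n f F y ≤ 0) : pohozaevDensity n f F x ≤ 0 := by
  rcases le_or_gt x α with hxα | hαx
  · exact hf.pohozaevDensity_nonpos_of_le_threshold (by linarith) ⟨hx, hxα⟩
  have hxω : x ∈ Ioo α ω := ⟨hαx, hxy.trans_lt hyω⟩
  rcases le_or_gt ((n - 1) * growthFunction f x) (n + 3) with hK | hK
  · have hmono : MonotoneOn (pohozaevDensity n f F) (Icc x y) := by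
      refine monotoneOn_of_hasDerivAt_nonneg (convex_Icc x y)
        (fun t ht => hf.hasDerivAt_pohozaevDensity ⟨hαx.trans_le ht.1, ht.2.trans_lt hyω⟩)
        fun t ht => ?_
      rw [interior_Icc] at ht
      have htω : t ∈ Ioo α ω := ⟨hαx.trans ht.1, ht.2.trans hyω⟩
      have hKt := mul_le_mul_of_nonneg_left
        (hf.growthFunction_strictAntiOn hxω htω ht.1).le (sub_nonneg.2 hn)
      exact mul_nonneg (half_pos (hf.pos t htω)).le (by linarith)
    exact (hmono (left_mem_Icc.2 hxy) (right_mem_Icc.2 hxy) hxy).trans hH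
  · have hanti : AntitoneOn (pohozaevDensity n f F) (Icc α x) := by
      refine antitoneOn_of_hasDerivWithinAt_nonpos (convex_Icc α x)
        hf.continuous_pohozaevDensity.continuousOn (fun t ht =>
          (hf.hasDerivAt_pohozaevDensity ?_).hasDerivWithinAt) fun t ht => ?_ <;>
      rw [interior_Icc] at ht <;>
      have htω : t ∈ Ioo α ω := ⟨ht.1, ht.2.trans hxω.2⟩
      · exact htω
      have hKt := mul_le_mul_of_nonneg_left
        (hf.growthFunction_strictAntiOn htω hxω ht.2).le (sub_nonneg.2 hn)
      exact mul_nonpos_of_nonneg_of_nonpos (half_pos (hf.pos t htω)).le (by linarith)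
    exact (hanti (left_mem_Icc.2 hαx.le) (right_mem_Icc.2 hαx.le) hαx.le).trans
      (hf.pohozaevDensity_nonpos_of_le_threshold (by linarith) ⟨hf.zero_lt_threshold, le_rfl⟩)

end IsGroundStateNonlinearity

/-- The dimensionless ratio of reaction to speed, `-r f(u(r)) / u'(r)`, at height `y`. -/
def reactionRatio (f r p : ℝ → ℝ) (y : ℝ) : ℝ := r y * f y / p y

/-- The dimensionless decay rate `-r u'(r) / u(r)` at height `y`. -/
def decayRate (r p : ℝ → ℝ) (y : ℝ) : ℝ := r y * p y / y

/-- The excess of reaction ratio plus decay rate over `n - 1`. Its positivity says that the decay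
rate decreases with the height. -/
def excess (n : ℝ) (f r p : ℝ → ℝ) (y : ℝ) : ℝ :=
  reactionRatio f r p y + decayRate r p y - (n - 1)

/-- The data of a decreasing radial solution of height `M`, as functions of the height `y ∈ (0, M)`:
`r y` is the radius at which the solution takes the value `y`, and `p y > 0` is minus its slope
there. The dimension is `n + 1`. -/
structure IsProfile (n : ℝ) (f : ℝ → ℝ) (α ω M : ℝ) (r p : ℝ → ℝ) : Prop where
  height_mem : M ∈ Ioo α ω
  radius_pos : ∀ y ∈ Ioo 0 M, 0 < r y
  speed_pos : ∀ y ∈ Ioo 0 M, 0 < p y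
  hasDerivAt_radius : ∀ y ∈ Ioo 0 M, HasDerivAt r (-(1 / p y)) y
  hasDerivAt_speed : ∀ y ∈ Ioo 0 M, HasDerivAt p (n / r y - f y / p y) y
  tendsto_radius_top : Tendsto r (𝓝[<] M) (𝓝 0)
  tendsto_speed_top : Tendsto p (𝓝[<] M) (𝓝 0)
  tendsto_reactionRatio_top : Tendsto (reactionRatio f r p) (𝓝[<] M) (𝓝 (n + 1))
  tendsto_radius_zero : Tendsto r (𝓝[>] 0) atTop
  tendsto_speed_zero : Tendsto p (𝓝[>] 0) (𝓝 0)

/-- The energy `p² / 2 + F` of a profile at height `y`. -/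
def profileEnergy (F p : ℝ → ℝ) (y : ℝ) : ℝ := p y ^ 2 / 2 + F y

namespace IsProfile

variable {n k y α ω M : ℝ} {f F r p : ℝ → ℝ}

lemma mem_of_lt_threshold (h : IsProfile n f α ω M r p) (hy : y ∈ Ioc 0 α) : y ∈ Ioo 0 M :=
  ⟨hy.1, hy.2.trans_lt h.height_mem.1⟩

lemma hasDerivAt_decayRate (h : IsProfile n f α ω M r p) (hy : y ∈ Ioo 0 M) :
    HasDerivAt (decayRate r p) (-(excess n f r p y / y)) y := by
  have hr := (h.radius_pos y hy).ne'
  have hp := (h.speed_pos y hy).ne'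
  have hy₀ := hy.1.ne'
  refine (((h.hasDerivAt_radius y hy).mul (h.hasDerivAt_speed y hy)).div (hasDerivAt_id y)
    hy₀).congr_deriv ?_
  simp only [excess, reactionRatio, decayRate, id_eq, Pi.mul_apply]
  field

lemma hasDerivAt_radius_rpow_mul (h : IsProfile n f α ω M r p) (hy : y ∈ Ioo 0 M) :
    HasDerivAt (fun y => r y ^ (k + 1) * y)
      (r y ^ k * (y / p y) * (decayRate r p y - (k + 1))) y := by
  have hr := h.radius_pos y hy
  have hp := (h.speed_pos y hy).ne'
  have hy₀ := hy.1.ne'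
  refine (((h.hasDerivAt_radius y hy).rpow_const (.inl hr.ne')).mul
    (hasDerivAt_id y)).congr_deriv ?_
  rw [add_sub_cancel_right, rpow_add_one hr.ne', decayRate, id_eq]
  field

variable (hf : IsGroundStateNonlinearity f F α ω) (h : IsProfile n f α ω M r p)
include hf h

lemma zero_lt_height : 0 < M := hf.zero_lt_threshold.trans h.height_mem.1

lemma hasDerivAt_profileEnergy (hy : y ∈ Ioo 0 M) :
    HasDerivAt (profileEnergy F p) (n * p y / r y) y := by
  have hp := (h.speed_pos y hy).ne'
  have hr := (h.radius_pos y hy).ne'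
  refine ((((h.hasDerivAt_speed y hy).pow 2).div_const 2).add
    (hf.hasDerivAt_primitive y)).congr_deriv ?_
  simp only [Nat.add_one_sub_one, pow_one, Nat.cast_ofNat]
  field

lemma tendsto_profileEnergy_zero : Tendsto (profileEnergy F p) (𝓝[>] 0) (𝓝 0) := by
  have hlim := ((h.tendsto_speed_zero.pow 2).div_const 2).add
    (hf.tendsto_primitive_zero.mono_left nhdsWithin_le_nhds)
  rwa [zero_pow two_ne_zero, zero_div, zero_add] at hlim

lemma profileEnergy_nonneg (hn : 0 ≤ n) (hy : y ∈ Ioo 0 M) : 0 ≤ profileEnergy F p y :=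
  le_of_hasDerivAt_nonneg_of_tendsto hy.1
    (fun _ ht => h.hasDerivAt_profileEnergy hf ⟨ht.1, ht.2.trans_lt hy.2⟩)
    (fun t ht => div_nonneg (mul_nonneg hn (h.speed_pos t ⟨ht.1, ht.2.trans hy.2⟩).le)
      (h.radius_pos t ⟨ht.1, ht.2.trans hy.2⟩).le)
    (h.tendsto_profileEnergy_zero hf)

lemma profileEnergy_le (hn : 0 ≤ n) (hy : y ∈ Ioo 0 α) :
    profileEnergy F p y ≤ n * (y * (p y / r y)) := by
  have hderiv : ∀ t ∈ Ioc 0 y, HasDerivAt (fun t => n * (t * (p t / r t)) - profileEnergy F p t)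
      (n * (t * ((n + -f t * r t / p t + 1) / r t ^ 2))) t := fun t ht => by
    have htM : t ∈ Ioo 0 M := h.mem_of_lt_threshold ⟨ht.1, ht.2.trans hy.2.le⟩
    have hp := (h.speed_pos t htM).ne'
    have hr := (h.radius_pos t htM).ne'
    refine ((((hasDerivAt_id t).mul ((h.hasDerivAt_speed t htM).div (h.hasDerivAt_radius t htM)
      hr)).const_mul n).sub (h.hasDerivAt_profileEnergy hf htM)).congr_deriv ?_
    simp only [Pi.div_apply, id_eq]
    field
  have hlim : Tendsto (fun t => n * (t * (p t / r t)) - profileEnergy F p t) (𝓝[>] 0) (𝓝 0) := by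
    have hid : Tendsto (fun t : ℝ => t) (𝓝[>] 0) (𝓝 0) := tendsto_id.mono_left nhdsWithin_le_nhds
    simpa [div_eq_mul_inv] using ((hid.mul (h.tendsto_speed_zero.mul
      h.tendsto_radius_zero.inv_tendsto_atTop)).const_mul n).sub (h.tendsto_profileEnergy_zero hf)
  refine sub_nonneg.1 (le_of_hasDerivAt_nonneg_of_tendsto
    (g := fun t => n * (t * (p t / r t)) - profileEnergy F p t) hy.1 hderiv (fun t ht => ?_) hlim)
  have htα : t ∈ Ioo 0 α := ⟨ht.1, ht.2.trans hy.2⟩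
  have htM := h.mem_of_lt_threshold (Ioo_subset_Ioc_self htα)
  have hp := h.speed_pos t htM
  have hr := h.radius_pos t htM
  have hft : 0 < -f t := neg_pos.2 (hf.neg t htα)
  have ht₀ := ht.1
  positivity

lemma tendsto_speed_div (hn : 0 ≤ n) :
    Tendsto (fun y => p y / y) (𝓝[>] 0) (𝓝 √(-deriv f 0)) := by
  have hF : Tendsto (fun y => -2 * (F y / y ^ 2)) (𝓝[>] 0) (𝓝 (-deriv f 0)) := by
    have hlim := hf.tendsto_primitive_div_sq.const_mul (-2)
    rwa [show -2 * (deriv f 0 / 2) = -deriv f 0 by ring] at hlim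
  have hr : Tendsto (fun y => n * (r y)⁻¹) (𝓝[>] 0) (𝓝 0) := by
    simpa using h.tendsto_radius_zero.inv_tendsto_atTop.const_mul n
  have hupper : Tendsto (fun y => n * (r y)⁻¹ + √(-2 * (F y / y ^ 2) + (n * (r y)⁻¹) ^ 2))
      (𝓝[>] 0) (𝓝 √(-deriv f 0)) := by
    simpa using hr.add (hF.add (hr.pow 2)).sqrt
  refine tendsto_of_tendsto_of_tendsto_of_le_of_le' hF.sqrt hupper ?_ ?_ <;>
  filter_upwards [Ioo_mem_nhdsGT hf.zero_lt_threshold] with y hy <;>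
  have hyM := h.mem_of_lt_threshold (Ioo_subset_Ioc_self hy) <;>
  have hp := h.speed_pos y hyM <;>
  have hy₀ := hy.1
  · refine sqrt_le_iff.2 ⟨by positivity, ?_⟩
    have hE : 0 ≤ p y ^ 2 / 2 + F y := h.profileEnergy_nonneg hf hn hyM
    rw [← mul_div_assoc, div_pow]
    gcongr
    linarith
  · have hE : p y ^ 2 / 2 + F y ≤ n * (y * (p y / r y)) := h.profileEnergy_le hf hn hy
    have hr₀ := (h.radius_pos y hyM).ne'
    rw [← sub_le_iff_le_add']
    refine le_sqrt_of_sq_le ?_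
    have hsq : (p y / y - n * (r y)⁻¹) ^ 2 =
        (p y ^ 2 - 2 * (n * (y * (p y / r y)))) / y ^ 2 + (n * (r y)⁻¹) ^ 2 := by
      field
    rw [hsq, show -2 * (F y / y ^ 2) = -2 * F y / y ^ 2 from (mul_div_assoc ..).symm]
    gcongr
    linarith

lemma tendsto_decayRate_zero (hn : 0 ≤ n) : Tendsto (decayRate r p) (𝓝[>] 0) atTop := by
  refine (h.tendsto_radius_zero.atTop_mul_pos (sqrt_pos.2 (neg_pos.2 hf.deriv_zero_neg))
    (h.tendsto_speed_div hf hn)).congr fun y => ?_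
  rw [decayRate, mul_div_assoc]

lemma tendsto_radius_rpow_mul (hn : 0 ≤ n) (k : ℝ) :
    Tendsto (fun y => r y ^ k * y) (𝓝[>] 0) (𝓝 0) := by
  obtain ⟨δ, hδ₀ : 0 < δ, hδ⟩ := mem_nhdsGT_iff_exists_Ioc_subset.1
    (((h.tendsto_decayRate_zero hf hn).eventually_ge_atTop (k + 1)).and
      (Ioo_mem_nhdsGT (h.zero_lt_height hf)))
  have hmono : MonotoneOn (fun y => r y ^ (k + 1) * y) (Ioc 0 δ) := by
    refine monotoneOn_of_hasDerivAt_nonneg (convex_Ioc 0 δ)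
      (fun y hy => h.hasDerivAt_radius_rpow_mul (hδ hy).2) fun y hy => ?_
    obtain ⟨hB, hyM⟩ := hδ (interior_subset hy)
    have hr := h.radius_pos y hyM
    have hp := h.speed_pos y hyM
    have hy₀ := hyM.1
    exact mul_nonneg (by positivity) (sub_nonneg.2 hB)
  have hupper : Tendsto (fun y => r δ ^ (k + 1) * δ * (r y)⁻¹) (𝓝[>] 0) (𝓝 0) := by
    simpa using h.tendsto_radius_zero.inv_tendsto_atTop.const_mul (r δ ^ (k + 1) * δ)
  refine tendsto_of_tendsto_of_tendsto_of_le_of_le' tendsto_const_nhds hupper ?_ ?_ <;>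
  filter_upwards [Ioc_mem_nhdsGT hδ₀] with y hy <;>
  have hr := h.radius_pos y (hδ hy).2
  · exact mul_nonneg (rpow_nonneg hr.le k) hy.1.le
  · rw [← div_eq_mul_inv, le_div_iff₀ hr]
    calc r y ^ k * y * r y = r y ^ (k + 1) * y := by rw [rpow_add_one hr.ne']; ring
      _ ≤ r δ ^ (k + 1) * δ := hmono hy (right_mem_Ioc.2 hδ₀) hy.2

lemma tendsto_radius_mul_speed_zero (hn : 0 ≤ n) :
    Tendsto (fun y => r y * p y) (𝓝[>] 0) (𝓝 0) := by
  have hlim := (h.tendsto_radius_rpow_mul hf hn 1).mul (h.tendsto_speed_div hf hn)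
  rw [zero_mul] at hlim
  refine hlim.congr' ?_
  filter_upwards [self_mem_nhdsWithin] with y (hy : 0 < y)
  rw [rpow_one]
  field

end IsProfile

/-- The logarithm of the flux `rⁿ p` of a profile. -/
def logFlux (n : ℝ) (r p : ℝ → ℝ) (y : ℝ) : ℝ := n * log (r y) + log (p y)

namespace IsProfile

section Tail

variable {n x y Y α ω M N : ℝ} {f F r p s q : ℝ → ℝ}

lemma hasDerivAt_logFlux (h : IsProfile n f α ω M r p) (hy : y ∈ Ioo 0 M) :
    HasDerivAt (logFlux n r p) (-f y / p y ^ 2) y := by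
  have hp := (h.speed_pos y hy).ne'
  have hr := (h.radius_pos y hy).ne'
  refine ((((h.hasDerivAt_radius y hy).log hr).const_mul n).add
    ((h.hasDerivAt_speed y hy).log hp)).congr_deriv ?_
  field

lemma logFlux_lt_logFlux (hn : 0 ≤ n) (h : IsProfile n f α ω M r p) (hy : y ∈ Ioo 0 M)
    (hrs : r y ≤ s y) (hpq : p y < q y) :
    logFlux n r p y < logFlux n s q y :=
  add_lt_add_of_le_of_lt
    (mul_le_mul_of_nonneg_left (log_le_log (h.radius_pos y hy) hrs) hn)
    (log_lt_log (h.speed_pos y hy) hpq)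

variable (h : IsProfile n f α ω M r p) (k : IsProfile n f α ω N s q)
include h k

lemma radius_sub_le (hx : 0 < x) (hxY : x ≤ Y) (hY : Y ≤ α) (hpq : ∀ y ∈ Ioo x Y, p y ≤ q y) :
    s x - r x ≤ s Y - r Y := by
  have hIcc : ∀ y ∈ Icc x Y, y ∈ Ioc 0 α := fun y hy => ⟨hx.trans_le hy.1, hy.2.trans hY⟩
  refine monotoneOn_of_hasDerivAt_nonneg (convex_Icc x Y) (fun y hy =>
    (k.hasDerivAt_radius y (k.mem_of_lt_threshold (hIcc y hy))).sub
      (h.hasDerivAt_radius y (h.mem_of_lt_threshold (hIcc y hy))))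
    (fun y hy => ?_) (left_mem_Icc.2 hxY) (right_mem_Icc.2 hxY) hxY
  have hyα := hIcc y (interior_subset hy)
  rw [interior_Icc] at hy
  have hinv := one_div_le_one_div_of_le (h.speed_pos y (h.mem_of_lt_threshold hyα)) (hpq y hy)
  linarith

variable (hf : IsGroundStateNonlinearity f F α ω)
include hf

lemma tendsto_speed_div_speed (hn : 0 ≤ n) :
    Tendsto (fun y => p y / q y) (𝓝[>] 0) (𝓝 1) := by
  have hsqrt : √(-deriv f 0) ≠ 0 := (sqrt_pos.2 (neg_pos.2 hf.deriv_zero_neg)).ne'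
  have hlim := (h.tendsto_speed_div hf hn).div (k.tendsto_speed_div hf hn) hsqrt
  rw [div_self hsqrt] at hlim
  refine hlim.congr' ?_
  filter_upwards [self_mem_nhdsWithin] with y hy
  exact div_div_div_cancel_right₀ (ne_of_gt hy) _ _

lemma logFlux_sub_le (hx : 0 < x) (hxY : x ≤ Y) (hY : Y ≤ α) (hpq : ∀ y ∈ Ioo x Y, p y < q y) :
    logFlux n r p x - logFlux n s q x ≤ logFlux n r p Y - logFlux n s q Y := by
  have hIcc : ∀ y ∈ Icc x Y, y ∈ Ioc 0 α := fun y hy => ⟨hx.trans_le hy.1, hy.2.trans hY⟩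
  refine monotoneOn_of_hasDerivAt_nonneg (convex_Icc x Y)
    (fun y hy => (h.hasDerivAt_logFlux (h.mem_of_lt_threshold (hIcc y hy))).sub
      (k.hasDerivAt_logFlux (k.mem_of_lt_threshold (hIcc y hy))))
    (fun y hy => ?_) (left_mem_Icc.2 hxY) (right_mem_Icc.2 hxY) hxY
  have hyα := hIcc y (interior_subset hy)
  rw [interior_Icc] at hy
  have hp := h.speed_pos y (h.mem_of_lt_threshold hyα)
  have hfy : 0 ≤ -f y := (neg_pos.2 (hf.neg y ⟨hyα.1, hy.2.trans_le hY⟩)).le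
  exact sub_nonneg.2 (div_le_div_of_nonneg_left hfy (pow_pos hp 2)
    (pow_le_pow_left₀ hp.le (hpq y hy).le 2))

lemma radius_lt_of_speed_eq (hn : 0 < n) (hx : 0 < x) (hxY : x ≤ Y) (hY : Y ≤ α)
    (hrs : r Y ≤ s Y) (hpqY : p Y < q Y) (hpq : ∀ y ∈ Ioo x Y, p y < q y) (hpqx : p x = q x) :
    r x < s x := by
  have hle := h.logFlux_sub_le k hf hx hxY hY hpq
  have hlt := h.logFlux_lt_logFlux hn.le (h.mem_of_lt_threshold ⟨hx.trans_le hxY, hY⟩) hrs hpqY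
  simp only [logFlux, hpqx] at hle hlt
  refine (log_lt_log_iff (h.radius_pos x (h.mem_of_lt_threshold ⟨hx, hxY.trans hY⟩))
    (k.radius_pos x (k.mem_of_lt_threshold ⟨hx, hxY.trans hY⟩))).1
    (lt_of_mul_lt_mul_left ?_ hn.le)
  linarith

lemma speed_lt_of_speed_lt (hn : 0 < n) (hY : Y ≤ α) (hrs : r Y ≤ s Y) (hpq : p Y < q Y)
    (hx : x ∈ Ioc 0 Y) : p x < q x := by
  rcases hx.2.eq_or_lt with rfl | hxY
  · exact hpq
  have hIoc : ∀ y ∈ Icc x Y, y ∈ Ioc 0 α := fun y hy => ⟨hx.1.trans_le hy.1, hy.2.trans hY⟩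
  have hderiv : ∀ y ∈ Icc x Y, HasDerivAt (fun y => q y - p y)
      (n / s y - f y / q y - (n / r y - f y / p y)) y := fun y hy =>
    (k.hasDerivAt_speed y (k.mem_of_lt_threshold (hIoc y hy))).sub
      (h.hasDerivAt_speed y (h.mem_of_lt_threshold (hIoc y hy)))
  refine sub_pos.1 (pos_of_deriv_neg_at_zeros (g := fun y => q y - p y) hxY
    (fun y hy => hderiv y (Ico_subset_Icc_self hy)) ?_ fun y hy hzero hpos => ?_)
  · exact ((hderiv Y (right_mem_Icc.2 hxY.le)).continuousAt.eventually_const_lt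
      (sub_pos.2 hpq)).filter_mono nhdsWithin_le_nhds
  have hyα := hIoc y (Ico_subset_Icc_self hy)
  have hpq_eq : p y = q y := (sub_eq_zero.1 hzero).symm
  have hr := h.radius_pos y (h.mem_of_lt_threshold hyα)
  have hlt := h.radius_lt_of_speed_eq k hf hn hyα.1 hy.2.le hY hrs hpq
    (fun t ht => sub_pos.1 (hpos t ht)) hpq_eq
  linarith [div_lt_div_of_pos_left hn hr hlt, congrArg (f y / ·) hpq_eq]

lemma speed_le_of_radius_le (hn : 0 < n) (hY₀ : 0 < Y) (hY : Y ≤ α) (hrs : r Y ≤ s Y) :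
    q Y ≤ p Y := by
  by_contra! hpqY
  have hpq : ∀ y ∈ Ioc 0 Y, p y < q y := fun y => h.speed_lt_of_speed_lt k hf hn hY hrs hpqY
  set D := s Y - r Y
  have hlim : Tendsto (fun y => n * log (1 - D * (s y)⁻¹) + log (p y / q y)) (𝓝[>] 0) (𝓝 0) := by
    have hs : Tendsto (fun y => 1 - D * (s y)⁻¹) (𝓝[>] 0) (𝓝 1) := by
      simpa using (k.tendsto_radius_zero.inv_tendsto_atTop.const_mul D).const_sub 1
    simpa using ((hs.log one_ne_zero).const_mul n).add
      ((h.tendsto_speed_div_speed k hf hn.le).log one_ne_zero)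
  have hflux : logFlux n r p Y < logFlux n s q Y :=
    h.logFlux_lt_logFlux hn.le (h.mem_of_lt_threshold ⟨hY₀, hY⟩) hrs hpqY
  suffices hle : 0 ≤ logFlux n r p Y - logFlux n s q Y by linarith
  refine le_of_tendsto hlim ?_
  filter_upwards [Ioc_mem_nhdsGT hY₀, k.tendsto_radius_zero.eventually_gt_atTop D] with y hy hDs
  have hyα : y ∈ Ioc 0 α := ⟨hy.1, hy.2.trans hY⟩
  have hp := h.speed_pos y (h.mem_of_lt_threshold hyα)
  have hq := k.speed_pos y (k.mem_of_lt_threshold hyα)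
  have hs := k.radius_pos y (k.mem_of_lt_threshold hyα)
  have hpq' : ∀ t ∈ Ioo y Y, p t < q t := fun t ht => hpq t ⟨hy.1.trans ht.1, ht.2.le⟩
  have hr : s y - D ≤ r y := by
    linarith [h.radius_sub_le k hy.1 hy.2 hY fun t ht => (hpq' t ht).le]
  refine le_trans ?_ (h.logFlux_sub_le k hf hy.1 hy.2 hY hpq')
  rw [← mul_inv_cancel₀ hs.ne', ← sub_mul, ← div_eq_mul_inv, log_div hp.ne' hq.ne',
    log_div (sub_pos.2 hDs).ne' hs.ne']
  unfold logFlux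
  linarith [mul_le_mul_of_nonneg_left (log_le_log (sub_pos.2 hDs) hr) hn.le]

lemma radius_lt_of_radius_lt (hn : 0 < n) (hY : Y ≤ α) (hrs : r Y < s Y) (hx : x ∈ Ioc 0 Y) :
    r x < s x := by
  rcases hx.2.eq_or_lt with rfl | hxY
  · exact hrs
  have hcont : ∀ y ∈ Icc x Y, ContinuousAt (fun y => s y - r y) y := fun y hy =>
    have hyα : y ∈ Ioc 0 α := ⟨hx.1.trans_le hy.1, hy.2.trans hY⟩
    ((k.hasDerivAt_radius y (k.mem_of_lt_threshold hyα)).sub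
      (h.hasDerivAt_radius y (h.mem_of_lt_threshold hyα))).continuousAt
  by_contra! hsr
  obtain ⟨y, hy, hzero, hpos⟩ := exists_last_zero (g := fun y => s y - r y) hxY
    (fun t ht => (hcont t (Ico_subset_Icc_self ht)).continuousWithinAt) (sub_nonpos.2 hsr)
    (((hcont Y (right_mem_Icc.2 hxY.le)).eventually_const_lt
      (sub_pos.2 hrs)).filter_mono nhdsWithin_le_nhds)
  have hy₀ : 0 < y := hx.1.trans_le hy.1
  have hle := k.radius_sub_le h hy₀ hy.2.le hY fun t ht => h.speed_le_of_radius_le k hf hn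
    (hy₀.trans ht.1) (ht.2.le.trans hY) (sub_pos.1 (hpos t ht)).le
  linarith

lemma radius_mul_speed_le_of_radius_lt (hn : 0 < n) (hrs : r α < s α) :
    r α * p α ≤ s α * q α := by
  have hderiv : ∀ y ∈ Ioc 0 α, HasDerivAt (fun y => s y * q y - r y * p y)
      (-f y * (s y / q y - r y / p y)) y := fun y hy => by
    have hr := (h.radius_pos y (h.mem_of_lt_threshold hy)).ne'
    have hp := (h.speed_pos y (h.mem_of_lt_threshold hy)).ne'
    have hs := (k.radius_pos y (k.mem_of_lt_threshold hy)).ne'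
    have hq := (k.speed_pos y (k.mem_of_lt_threshold hy)).ne'
    refine (((k.hasDerivAt_radius y (k.mem_of_lt_threshold hy)).mul
      (k.hasDerivAt_speed y (k.mem_of_lt_threshold hy))).sub
      ((h.hasDerivAt_radius y (h.mem_of_lt_threshold hy)).mul
      (h.hasDerivAt_speed y (h.mem_of_lt_threshold hy)))).congr_deriv ?_
    field
  have hlim : Tendsto (fun y => s y * q y - r y * p y) (𝓝[>] 0) (𝓝 0) := by
    simpa using (k.tendsto_radius_mul_speed_zero hf hn.le).sub
      (h.tendsto_radius_mul_speed_zero hf hn.le)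
  refine sub_nonneg.1 (le_of_hasDerivAt_nonneg_of_tendsto
    (g := fun y => s y * q y - r y * p y) hf.zero_lt_threshold hderiv (fun y hy => ?_) hlim)
  have hyα := Ioo_subset_Ioc_self hy
  have hlt := h.radius_lt_of_radius_lt k hf hn le_rfl hrs hyα
  refine mul_nonneg (neg_pos.2 (hf.neg y hy)).le (sub_nonneg.2 (div_le_div₀
    (k.radius_pos y (k.mem_of_lt_threshold hyα)).le hlt.le
    (k.speed_pos y (k.mem_of_lt_threshold hyα)) ?_))
  exact h.speed_le_of_radius_le k hf hn hyα.1 hyα.2 hlt.le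

lemma radius_mul_speed_le_of_radius_le (hn : 0 < n) (hrs : r α ≤ s α) :
    r α * p α ≤ s α * q α := by
  rcases hrs.eq_or_lt with heq | hlt
  · have hpq := h.speed_le_of_radius_le k hf hn hf.zero_lt_threshold le_rfl heq.le
    have hqp := k.speed_le_of_radius_le h hf hn hf.zero_lt_threshold le_rfl heq.ge
    rw [heq, hqp.antisymm hpq]
  · exact h.radius_mul_speed_le_of_radius_lt k hf hn hlt

end Tail

end IsProfile

/-- The Pohozaev functional `rⁿ (r p² / 2 + r F(y) - (n - 1) / 2 * y p)` at height `y`. -/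
def pohozaev (n : ℝ) (F r p : ℝ → ℝ) (y : ℝ) : ℝ :=
  r y ^ n * (r y * profileEnergy F p y - (n - 1) / 2 * (y * p y))

namespace IsProfile

section Excess

variable {n x y α ω M : ℝ} {f F r p : ℝ → ℝ} (hf : IsGroundStateNonlinearity f F α ω)
  (h : IsProfile n f α ω M r p)
include hf h

omit hf in
lemma mem_Ioo_threshold (hy : y ∈ Ioo α M) : y ∈ Ioo α ω :=
  ⟨hy.1, hy.2.trans h.height_mem.2⟩

lemma reactionRatio_pos (hy : y ∈ Ioo α M) : 0 < reactionRatio f r p y :=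
  div_pos (mul_pos (h.radius_pos y (hf.mem_of_threshold_lt hy))
    (hf.pos y (h.mem_Ioo_threshold hy))) (h.speed_pos y (hf.mem_of_threshold_lt hy))

omit hf in
lemma decayRate_pos (hy : y ∈ Ioo 0 M) : 0 < decayRate r p y :=
  div_pos (mul_pos (h.radius_pos y hy) (h.speed_pos y hy)) hy.1

lemma hasDerivAt_reactionRatio (hy : y ∈ Ioo α M) :
    HasDerivAt (reactionRatio f r p) (reactionRatio f r p y / y *
      (growthFunction f y - (n + 1 - reactionRatio f r p y) / decayRate r p y)) y := by
  have hy' := hf.mem_of_threshold_lt hy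
  have hp := (h.speed_pos y hy').ne'
  have hr := (h.radius_pos y hy').ne'
  have hy₀ := hy'.1.ne'
  have hfy := (hf.pos y (h.mem_Ioo_threshold hy)).ne'
  refine (((h.hasDerivAt_radius y hy').mul (hf.hasDerivAt y)).div (h.hasDerivAt_speed y hy')
    hp).congr_deriv ?_
  simp only [reactionRatio, growthFunction, decayRate, Pi.mul_apply]
  field

lemma hasDerivAt_excess (hy : y ∈ Ioo α M) :
    HasDerivAt (excess n f r p) (reactionRatio f r p y / y *
      (growthFunction f y - (n + 1 - reactionRatio f r p y) / decayRate r p y) +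
        -(excess n f r p y / y)) y :=
  ((h.hasDerivAt_reactionRatio hf hy).add
    (h.hasDerivAt_decayRate (hf.mem_of_threshold_lt hy))).sub_const _

lemma tendsto_decayRate_top : Tendsto (decayRate r p) (𝓝[<] M) (𝓝 0) := by
  have hlim := (h.tendsto_radius_top.mul h.tendsto_speed_top).div
    (tendsto_id.mono_left nhdsWithin_le_nhds) (h.zero_lt_height hf).ne'
  rwa [zero_mul, zero_div] at hlim

lemma tendsto_excess_top : Tendsto (excess n f r p) (𝓝[<] M) (𝓝 2) := by
  have hlim := (h.tendsto_reactionRatio_top.add (h.tendsto_decayRate_top hf)).sub_const (n - 1)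
  rwa [show n + 1 + 0 - (n - 1) = 2 by ring] at hlim

lemma hasDerivAt_pohozaev (hy : y ∈ Ioo 0 M) :
    HasDerivAt (pohozaev n F r p) (-(r y ^ n / p y * pohozaevDensity n f F y)) y := by
  have hr := h.radius_pos y hy
  have hp := (h.speed_pos y hy).ne'
  refine (((h.hasDerivAt_radius y hy).rpow_const (.inl hr.ne')).mul
    (((h.hasDerivAt_radius y hy).mul (h.hasDerivAt_profileEnergy hf hy)).sub
    (((hasDerivAt_id y).mul (h.hasDerivAt_speed y hy)).const_mul ((n - 1) / 2)))).congr_deriv ?_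
  rw [rpow_sub_one hr.ne']
  simp only [Pi.mul_apply, Pi.sub_apply, id_eq, profileEnergy, pohozaevDensity]
  field

lemma tendsto_pohozaev_top (hn : 0 < n) : Tendsto (pohozaev n F r p) (𝓝[<] M) (𝓝 0) := by
  have hid : Tendsto (fun y : ℝ => y) (𝓝[<] M) (𝓝 M) := tendsto_id.mono_left nhdsWithin_le_nhds
  have hE : Tendsto (profileEnergy F p) (𝓝[<] M) (𝓝 (0 ^ 2 / 2 + F M)) :=
    ((h.tendsto_speed_top.pow 2).div_const 2).add
      ((hf.continuous_primitive.tendsto M).mono_left nhdsWithin_le_nhds)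
  have hlim := (h.tendsto_radius_top.rpow_const (.inr hn.le)).mul
    ((h.tendsto_radius_top.mul hE).sub
      ((hid.mul h.tendsto_speed_top).const_mul ((n - 1) / 2)))
  rwa [zero_rpow hn.ne', zero_mul] at hlim

lemma tendsto_pohozaev_zero (hn : 0 ≤ n) : Tendsto (pohozaev n F r p) (𝓝[>] 0) (𝓝 0) := by
  have hF : Tendsto (fun y => F y / y) (𝓝[>] 0) (𝓝 0) := by
    simpa [hf.primitive_zero, hf.map_zero, div_eq_inv_mul] using
      (hf.hasDerivAt_primitive 0).tendsto_slope_zero_right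
  have hlim := (((h.tendsto_radius_rpow_mul hf hn (n + 1)).mul
    ((((h.tendsto_speed_div hf hn).mul h.tendsto_speed_zero).div_const 2).add hF))).sub
    (((h.tendsto_radius_rpow_mul hf hn n).mul h.tendsto_speed_zero).const_mul ((n - 1) / 2))
  simp only [mul_zero, zero_div, add_zero, sub_zero] at hlim
  refine hlim.congr' ?_
  filter_upwards [Ioo_mem_nhdsGT (h.zero_lt_height hf)] with y hy
  have hy₀ := hy.1.ne'
  rw [rpow_add_one (h.radius_pos y hy).ne', pohozaev, profileEnergy]
  field

lemma pohozaev_nonneg_of_density_nonneg (hn : 0 < n) (hy : y ∈ Ioo 0 M)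
    (hH : ∀ z ∈ Ioo y M, 0 ≤ pohozaevDensity n f F z) : 0 ≤ pohozaev n F r p y := by
  refine le_of_hasDerivAt_nonpos_of_tendsto hy.2
    (fun t ht => h.hasDerivAt_pohozaev hf ⟨hy.1.trans_le ht.1, ht.2⟩) (fun t ht => ?_)
    (h.tendsto_pohozaev_top hf hn)
  have htM : t ∈ Ioo 0 M := ⟨hy.1.trans ht.1, ht.2⟩
  exact neg_nonpos.2 (mul_nonneg (div_nonneg (rpow_nonneg (h.radius_pos t htM).le n)
    (h.speed_pos t htM).le) (hH t ht))

lemma pohozaev_nonneg_of_density_nonpos (hn : 0 ≤ n) (hy : y ∈ Ioo 0 M)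
    (hH : ∀ z ∈ Ioo 0 y, pohozaevDensity n f F z ≤ 0) : 0 ≤ pohozaev n F r p y := by
  refine le_of_hasDerivAt_nonneg_of_tendsto hy.1
    (fun t ht => h.hasDerivAt_pohozaev hf ⟨ht.1, ht.2.trans_lt hy.2⟩) (fun t ht => ?_)
    (h.tendsto_pohozaev_zero hf hn)
  have htM : t ∈ Ioo 0 M := ⟨ht.1, ht.2.trans hy.2⟩
  exact neg_nonneg.2 (mul_nonpos_of_nonneg_of_nonpos (div_nonneg
    (rpow_nonneg (h.radius_pos t htM).le n) (h.speed_pos t htM).le) (hH t ht))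

-- The density changes sign at most once, from negative to positive, and the functional vanishes at
-- both ends.
lemma pohozaev_nonneg (hn : 1 ≤ n) (hy : y ∈ Ioo 0 M) : 0 ≤ pohozaev n F r p y := by
  by_cases! hH : ∀ z ∈ Ioo y M, 0 ≤ pohozaevDensity n f F z
  · exact h.pohozaev_nonneg_of_density_nonneg hf (one_pos.trans_le hn) hy hH
  · obtain ⟨z, hz, hHz⟩ := hH
    exact h.pohozaev_nonneg_of_density_nonpos hf (zero_le_one.trans hn) hy fun t ht =>
      hf.pohozaevDensity_nonpos hn ht.1 (ht.2.trans hz.1).le (hz.2.trans h.height_mem.2) hHz.le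

omit hf in
lemma pohozaev_of_excess_eq_zero (hy : y ∈ Ioo 0 M) (hΩ : excess n f r p y = 0) :
    pohozaev n F r p y = -(r y ^ n * r y / 2 * (y * f y - 2 * F y)) := by
  have hn : n - 1 = r y * f y / p y + r y * p y / y := (sub_eq_zero.1 hΩ).symm
  have hp := (h.speed_pos y hy).ne'
  have hy₀ := hy.1.ne'
  rw [pohozaev, profileEnergy, hn]
  field

lemma one_lt_growthFunction_of_deriv_excess_nonneg (hy : y ∈ Ioo α M) (hΩ : excess n f r p y = 0)
    (hderiv : 0 ≤ reactionRatio f r p y / y *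
      (growthFunction f y - (n + 1 - reactionRatio f r p y) / decayRate r p y) +
        -(excess n f r p y / y)) : 1 < growthFunction f y := by
  have hB := h.decayRate_pos (hf.mem_of_threshold_lt hy)
  have hA := div_pos (h.reactionRatio_pos hf hy) (hf.mem_of_threshold_lt hy).1
  have hnA : n + 1 - reactionRatio f r p y = 2 + decayRate r p y := by
    unfold excess at hΩ; linarith
  rw [hΩ, hnA, zero_div, neg_zero, add_zero] at hderiv
  have hK := sub_nonneg.1 (nonneg_of_mul_nonneg_right hderiv hA)
  exact ((one_lt_div hB).2 (by linarith)).trans_le hK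

lemma excess_pos (hx : x ∈ Ioo α M) : 0 < excess n f r p x := by
  rcases lt_or_ge n 1 with hn | hn
  · exact sub_pos.2 ((sub_neg.2 hn).trans (add_pos (h.reactionRatio_pos hf hx)
      (h.decayRate_pos (hf.mem_of_threshold_lt hx))))
  refine pos_of_deriv_neg_at_zeros hx.2
    (fun y hy => h.hasDerivAt_excess hf ⟨hx.1.trans_le hy.1, hy.2⟩)
    ((h.tendsto_excess_top hf).eventually_const_lt two_pos) fun y hy hΩ _ => ?_
  have hyM : y ∈ Ioo α M := ⟨hx.1.trans_le hy.1, hy.2⟩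
  have hyM' := hf.mem_of_threshold_lt hyM
  by_contra! hderiv
  have hK := h.one_lt_growthFunction_of_deriv_excess_nonneg hf hyM hΩ hderiv
  have hF := sub_pos.2 (hf.two_mul_primitive_lt (h.mem_Ioo_threshold hyM) hK.le)
  have hP := h.pohozaev_nonneg hf hn hyM'
  rw [h.pohozaev_of_excess_eq_zero hyM' hΩ] at hP
  have hr := h.radius_pos y hyM'
  have : 0 < r y ^ n * r y / 2 * (y * f y - 2 * F y) := by positivity
  linarith

end Excess

end IsProfile

section SingularComparison

variable {n k k₁ k₂ t a a₁ a₂ : ℝ}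

/-- The right-hand side at `(t, a)` of the equation, singular at `t = 0`, satisfied by the reaction
ratio `a` as a function of the decay rate `t`, where `k` is the value of the growth function. -/
def singularField (n k t a : ℝ) : ℝ := a * ((n + 1 - a) / t - k) / (a + t - (n - 1))

lemma singularField_lt_singularField (ht : 0 < t) (ha₂ : 0 < a₂) (hΩ₁ : 0 < a₁ + t - (n - 1))
    (hΩ₂ : 0 < a₂ + t - (n - 1)) (hk : k₁ < k₂)
    (hle : 0 ≤ (a₂ - a₁) *
      (a₂ * (a₁ + t - (n - 1)) - (t - (n - 1)) * (n + 1 - a₁ - t * k₁))) :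
    singularField n k₂ t a₂ < singularField n k₁ t a₁ := by
  have hdiff : singularField n k₁ t a₁ - singularField n k₂ t a₂ =
      ((a₂ - a₁) * (a₂ * (a₁ + t - (n - 1)) - (t - (n - 1)) * (n + 1 - a₁ - t * k₁)) +
        a₂ * (a₁ + t - (n - 1)) * t * (k₂ - k₁)) /
          (t * (a₁ + t - (n - 1)) * (a₂ + t - (n - 1))) := by
    unfold singularField
    have := hΩ₁.ne'
    have := hΩ₂.ne'
    field
  have : 0 < k₂ - k₁ := sub_pos.2 hk
  refine sub_pos.1 ?_
  rw [hdiff]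
  positivity

variable {c x : ℝ} {a₁ a₂ k₁ k₂ : ℝ → ℝ} (ha₂ : ∀ t ∈ Ioo 0 c, 0 < a₂ t)
  (hΩ₁ : ∀ t ∈ Ioo 0 c, 0 < a₁ t + t - (n - 1)) (hΩ₂ : ∀ t ∈ Ioo 0 c, 0 < a₂ t + t - (n - 1))
  (hk : ∀ t ∈ Ioo 0 c, k₁ t < k₂ t)
  (ha₁' : ∀ t ∈ Ioo 0 c, HasDerivAt a₁ (singularField n (k₁ t) t (a₁ t)) t)
  (ha₂' : ∀ t ∈ Ioo 0 c, HasDerivAt a₂ (singularField n (k₂ t) t (a₂ t)) t)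
include ha₂ hΩ₁ hΩ₂ hk ha₁' ha₂'

lemma le_of_hasDerivAt_singularField (hx : x ∈ Ioo 0 c) (hle : a₁ x ≤ a₂ x) {z : ℝ}
    (hz : z ∈ Ioc 0 x) : a₁ z ≤ a₂ z := by
  have hderiv := fun t ht => (ha₁' t ht).sub (ha₂' t ht)
  rcases hz.2.eq_or_lt with rfl | hzx
  · exact hle
  by_contra! hlt
  refine hle.not_gt (sub_pos.1 (pos_of_deriv_pos_at_zeros (g := fun t => a₁ t - a₂ t) hzx
    (fun t ht => hderiv t ⟨hz.1.trans ht.1, ht.2.trans_lt hx.2⟩) ?_ fun y hy hzero _ => ?_))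
  · exact ((hderiv z ⟨hz.1, hzx.trans hx.2⟩).continuousAt.eventually_const_lt
      (sub_pos.2 hlt)).filter_mono nhdsWithin_le_nhds
  · have hyc : y ∈ Ioo 0 c := ⟨hz.1.trans hy.1, hy.2.trans_lt hx.2⟩
    have heq : a₂ y - a₁ y = 0 := by linarith
    exact sub_pos.2 (singularField_lt_singularField hyc.1 (ha₂ y hyc) (hΩ₁ y hyc) (hΩ₂ y hyc)
      (hk y hyc) (by rw [heq, zero_mul]))

-- As long as `a₁ ≤ a₂`, the difference `a₁ - a₂` starts at `0` and increases near `t = 0`.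
lemma lt_of_hasDerivAt_singularField (hn : -1 < n) (hlim₁ : Tendsto a₁ (𝓝[>] 0) (𝓝 (n + 1)))
    (hlim₂ : Tendsto a₂ (𝓝[>] 0) (𝓝 (n + 1))) (hlim : Tendsto k₁ (𝓝[>] 0) (𝓝 k))
    (hx : x ∈ Ioo 0 c) : a₂ x < a₁ x := by
  by_contra! hle
  have hle' : ∀ z ∈ Ioc 0 x, a₁ z ≤ a₂ z := fun z =>
    le_of_hasDerivAt_singularField ha₂ hΩ₁ hΩ₂ hk ha₁' ha₂' hx hle
  have hbracket : ∀ᶠ t in 𝓝[>] 0,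
      0 < a₂ t * (a₁ t + t - (n - 1)) - (t - (n - 1)) * (n + 1 - a₁ t - t * k₁ t) := by
    have hid : Tendsto (fun t : ℝ => t) (𝓝[>] 0) (𝓝 0) := tendsto_id.mono_left nhdsWithin_le_nhds
    refine ((hlim₂.mul ((hlim₁.add hid).sub_const (n - 1))).sub
      ((hid.sub_const (n - 1)).mul ((hlim₁.const_sub (n + 1)).sub
        (hid.mul hlim)))).eventually_const_lt ?_
    linarith
  obtain ⟨w, hw₀ : 0 < w, hw⟩ := mem_nhdsGT_iff_exists_Ioc_subset.1
    (hbracket.and (Ioc_mem_nhdsGT hx.1))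
  have hwc : ∀ t ∈ Ioc 0 w, t ∈ Ioo 0 c := fun t ht => ⟨ht.1, (hw ht).2.2.trans_lt hx.2⟩
  have hmono : StrictMonoOn (fun t => a₁ t - a₂ t) (Ioc 0 w) := by
    refine strictMonoOn_of_hasDerivAt_pos (convex_Ioc 0 w)
      (fun t ht => (ha₁' t (hwc t ht)).sub (ha₂' t (hwc t ht))) fun t ht => ?_
    have ht' := interior_subset ht
    have htc := hwc t ht'
    exact sub_pos.2 (singularField_lt_singularField htc.1 (ha₂ t htc) (hΩ₁ t htc) (hΩ₂ t htc)
      (hk t htc) (mul_nonneg (sub_nonneg.2 (hle' t (hw ht').2)) (hw ht').1.le))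
  have hw₂ : w / 2 ∈ Ioc 0 w := ⟨half_pos hw₀, half_le_self hw₀.le⟩
  have hnonneg : 0 ≤ a₁ (w / 2) - a₂ (w / 2) := by
    refine le_of_tendsto (sub_self (n + 1) ▸ hlim₁.sub hlim₂) ?_
    filter_upwards [Ioc_mem_nhdsGT hw₂.1] with t ht
    exact hmono.monotoneOn ⟨ht.1, ht.2.trans hw₂.2⟩ hw₂ ht.2
  have hlt := hmono hw₂ (right_mem_Ioc.2 hw₀) (half_lt_self hw₀)
  linarith [hle' w (hw (right_mem_Ioc.2 hw₀)).2]

end SingularComparison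

section DecayRateInverse

/-- `Y` inverts the decay rate of a profile between the heights `x` and `M`. -/
structure IsDecayRateInverse (n : ℝ) (f : ℝ → ℝ) (x M : ℝ) (r p Y : ℝ → ℝ) : Prop where
  mem : ∀ t ∈ Ioo 0 (decayRate r p x), Y t ∈ Ioo x M
  decayRate_eq : ∀ t ∈ Ioo 0 (decayRate r p x), decayRate r p (Y t) = t
  hasDerivAt : ∀ t ∈ Ioo 0 (decayRate r p x), HasDerivAt Y (-(Y t / excess n f r p (Y t))) t
  tendsto_zero : Tendsto Y (𝓝[>] 0) (𝓝[<] M)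
  tendsto_right : Tendsto Y (𝓝[<] decayRate r p x) (𝓝 x)

variable {n t x α ω M N : ℝ} {f F r p s q Y Z : ℝ → ℝ}

lemma IsDecayRateInverse.excess_eq (hY : IsDecayRateInverse n f x M r p Y)
    (ht : t ∈ Ioo 0 (decayRate r p x)) :
    excess n f r p (Y t) = reactionRatio f r p (Y t) + t - (n - 1) := by
  rw [excess, hY.decayRate_eq t ht]

variable (hf : IsGroundStateNonlinearity f F α ω) (h : IsProfile n f α ω M r p)
  (k : IsProfile n f α ω N s q)
include hf h

lemma IsProfile.exists_isDecayRateInverse (hx : x ∈ Ico α M) :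
    ∃ Y, IsDecayRateInverse n f x M r p Y := by
  have hIoo : ∀ y ∈ Ioo x M, y ∈ Ioo α M := fun y hy => ⟨hx.1.trans_lt hy.1, hy.2⟩
  have hderiv : ∀ y ∈ Ico x M, HasDerivAt (decayRate r p) (-(excess n f r p y / y)) y :=
    fun y hy => h.hasDerivAt_decayRate ⟨hf.zero_lt_threshold.trans_le (hx.1.trans hy.1), hy.2⟩
  obtain ⟨Y, hY, hright, hzero⟩ := exists_hasDerivAt_inverse isOpen_Ioo ordConnected_Ioo
    (hasBasis_nhdsGT_Ioo hx.2) (hasBasis_nhdsLT_Ioo hx.2)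
    (fun y hy => hderiv y (Ioo_subset_Ico_self hy)) (fun y hy => neg_neg_of_pos (div_pos
      (h.excess_pos hf (hIoo y hy)) (hf.mem_of_threshold_lt (hIoo y hy)).1))
    ((hderiv x (left_mem_Ico.2 hx.2)).continuousAt.mono_left nhdsWithin_le_nhds)
    (h.tendsto_decayRate_top hf)
  exact ⟨Y, fun t ht => (hY t ht).1, fun t ht => (hY t ht).2.1,
    fun t ht => (hY t ht).2.2.congr_deriv (by rw [inv_neg, inv_div]), hzero,
    hright.mono_right nhdsWithin_le_nhds⟩

lemma IsDecayRateInverse.hasDerivAt_reactionRatio_comp (hx : α ≤ x)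
    (hY : IsDecayRateInverse n f x M r p Y) (ht : t ∈ Ioo 0 (decayRate r p x)) :
    HasDerivAt (fun t => reactionRatio f r p (Y t))
      (singularField n (growthFunction f (Y t)) t (reactionRatio f r p (Y t))) t := by
  have hYα : Y t ∈ Ioo α M := ⟨hx.trans_lt (hY.mem t ht).1, (hY.mem t ht).2⟩
  have hΩ := (h.excess_pos hf hYα).ne'
  have hY₀ := (hf.mem_of_threshold_lt hYα).1.ne'
  have ht₀ := ht.1.ne'
  refine ((h.hasDerivAt_reactionRatio hf hYα).comp t (hY.hasDerivAt t ht)).congr_deriv ?_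
  rw [singularField, hY.decayRate_eq t ht, ← hY.excess_eq ht]
  field

include k

lemma IsDecayRateInverse.excess_lt_excess (hx : α ≤ x) (hn : -1 < n)
    (hY : IsDecayRateInverse n f x M r p Y) (hZ : IsDecayRateInverse n f x N s q Z)
    (heq : decayRate s q x = decayRate r p x)
    (hZY : ∀ t ∈ Ioo 0 (decayRate r p x), Z t < Y t) (ht : t ∈ Ioo 0 (decayRate r p x)) :
    excess n f s q (Z t) < excess n f r p (Y t) := by
  have hYα : ∀ t ∈ Ioo 0 (decayRate r p x), Y t ∈ Ioo α M := fun t ht =>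
    ⟨hx.trans_lt (hY.mem t ht).1, (hY.mem t ht).2⟩
  have hZα : ∀ t ∈ Ioo 0 (decayRate r p x), Z t ∈ Ioo α N := fun t ht =>
    ⟨hx.trans_lt (hZ.mem t (heq ▸ ht)).1, (hZ.mem t (heq ▸ ht)).2⟩
  have hK : Tendsto (fun t => growthFunction f (Y t)) (𝓝[>] 0) (𝓝 (growthFunction f M)) :=
    (hf.continuousAt_growthFunction h.height_mem).tendsto.comp
      (hY.tendsto_zero.mono_right nhdsWithin_le_nhds)
  have hlt := lt_of_hasDerivAt_singularField (fun t ht => k.reactionRatio_pos hf (hZα t ht))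
    (fun t ht => hY.excess_eq ht ▸ h.excess_pos hf (hYα t ht))
    (fun t ht => hZ.excess_eq (heq ▸ ht) ▸ k.excess_pos hf (hZα t ht))
    (fun t ht => hf.growthFunction_strictAntiOn (k.mem_Ioo_threshold (hZα t ht))
      (h.mem_Ioo_threshold (hYα t ht)) (hZY t ht))
    (fun t ht => hY.hasDerivAt_reactionRatio_comp hf h hx ht)
    (fun t ht => hZ.hasDerivAt_reactionRatio_comp hf k hx (heq ▸ ht)) hn
    (h.tendsto_reactionRatio_top.comp hY.tendsto_zero)
    (k.tendsto_reactionRatio_top.comp hZ.tendsto_zero) hK ht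
  rw [hY.excess_eq ht, hZ.excess_eq (heq ▸ ht)]
  linarith

lemma IsDecayRateInverse.exists_le (hx : α ≤ x) (hxM : x < M) (hn : -1 < n)
    (hY : IsDecayRateInverse n f x M r p Y) (hZ : IsDecayRateInverse n f x N s q Z)
    (heq : decayRate s q x = decayRate r p x) :
    ∃ t ∈ Ioo 0 (decayRate r p x), Y t ≤ Z t := by
  by_contra! hZY
  set C := decayRate r p x
  have hx₀ : 0 < x := hf.zero_lt_threshold.trans_le hx
  have hC₂ : C / 2 ∈ Ioo 0 C :=
    have hC₀ := h.decayRate_pos ⟨hx₀, hxM⟩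
    ⟨half_pos hC₀, half_lt_self hC₀⟩
  have hY₀ : ∀ t ∈ Ioo 0 C, 0 < Y t := fun t ht => hx₀.trans (hY.mem t ht).1
  have hZ₀ : ∀ t ∈ Ioo 0 C, 0 < Z t := fun t ht => hx₀.trans (hZ.mem t (heq ▸ ht)).1
  have hlim : Tendsto (fun t => log (Z t) - log (Y t)) (𝓝[<] C) (𝓝 0) := by
    have hZx : Tendsto Z (𝓝[<] C) (𝓝 x) := heq ▸ hZ.tendsto_right
    simpa using (hZx.log hx₀.ne').sub (hY.tendsto_right.log hx₀.ne')
  have hderiv : ∀ t ∈ Ioo 0 C, HasDerivAt (fun t => log (Z t) - log (Y t))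
      (-(Z t / excess n f s q (Z t)) / Z t - -(Y t / excess n f r p (Y t)) / Y t) t := fun t ht =>
    ((hZ.hasDerivAt t (heq ▸ ht)).log (hZ₀ t ht).ne').sub
      ((hY.hasDerivAt t ht).log (hY₀ t ht).ne')
  have hle : 0 ≤ log (Z (C / 2)) - log (Y (C / 2)) := by
    refine le_of_hasDerivAt_nonpos_of_tendsto (g := fun t => log (Z t) - log (Y t)) hC₂.2
      (fun t ht => hderiv t ⟨hC₂.1.trans_le ht.1, ht.2⟩) (fun t ht => ?_) hlim
    have htC : t ∈ Ioo 0 C := ⟨hC₂.1.trans ht.1, ht.2⟩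
    rw [neg_div, neg_div, div_div_cancel_left' (hZ₀ t htC).ne',
      div_div_cancel_left' (hY₀ t htC).ne']
    have hinv := inv_anti₀
      (k.excess_pos hf ⟨hx.trans_lt (hZ.mem t (heq ▸ htC)).1, (hZ.mem t (heq ▸ htC)).2⟩)
      (hY.excess_lt_excess hf h k hx hn hZ heq hZY htC).le
    linarith
  exact (log_lt_log (hZ₀ _ hC₂) (hZY _ hC₂)).not_ge (sub_nonneg.1 hle)

end DecayRateInverse

namespace IsProfile

section Comparison

variable {n t x y α ω M N : ℝ} {f F r p s q : ℝ → ℝ} (hf : IsGroundStateNonlinearity f F α ω)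
  (h : IsProfile n f α ω M r p) (k : IsProfile n f α ω N s q)
include hf h

lemma decayRate_strictAntiOn : StrictAntiOn (decayRate r p) (Ico α M) := by
  refine strictAntiOn_of_hasDerivAt_neg (convex_Ico α M)
    (fun y hy => h.hasDerivAt_decayRate ⟨hf.zero_lt_threshold.trans_le hy.1, hy.2⟩) fun y hy => ?_
  rw [interior_Ico] at hy
  exact neg_neg_of_pos (div_pos (h.excess_pos hf hy) (hf.mem_of_threshold_lt hy).1)

include k

lemma exists_decayRate_le_of_eq (hn : -1 < n) (hNM : N < M) (hx : x ∈ Ico α N)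
    (heq : decayRate s q x = decayRate r p x) :
    ∃ y ∈ Ioo x N, decayRate r p y ≤ decayRate s q y := by
  obtain ⟨Y, hY⟩ := h.exists_isDecayRateInverse hf ⟨hx.1, hx.2.trans hNM⟩
  obtain ⟨Z, hZ⟩ := k.exists_isDecayRateInverse hf hx
  obtain ⟨t, ht, hYZ⟩ := hY.exists_le hf h k hx.1 (hx.2.trans hNM) hn hZ heq
  have hZt := hZ.mem t (heq ▸ ht)
  refine ⟨Y t, ⟨(hY.mem t ht).1, hYZ.trans_lt hZt.2⟩, ?_⟩
  calc decayRate r p (Y t) = decayRate s q (Z t) := by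
        rw [hY.decayRate_eq t ht, hZ.decayRate_eq t (heq ▸ ht)]
    _ ≤ decayRate s q (Y t) := (k.decayRate_strictAntiOn hf).antitoneOn
        ⟨hx.1.trans (hY.mem t ht).1.le, hYZ.trans_lt hZt.2⟩
        ⟨hx.1.trans hZt.1.le, hZt.2⟩ hYZ

lemma decayRate_lt_of_height_lt (hn : -1 < n) (hNM : N < M) (hx : x ∈ Ico α N) :
    decayRate s q x < decayRate r p x := by
  by_contra! hle
  have hN₀ : N ∈ Ioo 0 M := hf.mem_of_threshold_lt ⟨k.height_mem.1, hNM⟩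
  have hlim : Tendsto (fun y => decayRate r p y - decayRate s q y) (𝓝[<] N)
      (𝓝 (decayRate r p N - 0)) :=
    ((h.hasDerivAt_decayRate hN₀).continuousAt.mono_left nhdsWithin_le_nhds).sub
      (k.tendsto_decayRate_top hf)
  obtain ⟨y, hy, hzero, hpos⟩ := exists_last_zero
    (g := fun y => decayRate r p y - decayRate s q y) hx.2
    (fun y hy => ((h.hasDerivAt_decayRate ⟨hf.zero_lt_threshold.trans_le (hx.1.trans hy.1),
      hy.2.trans hNM⟩).sub (k.hasDerivAt_decayRate ⟨hf.zero_lt_threshold.trans_le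
      (hx.1.trans hy.1), hy.2⟩)).continuousAt.continuousWithinAt) (sub_nonpos.2 hle)
    (hlim.eventually_const_lt (by simpa using h.decayRate_pos hN₀))
  obtain ⟨z, hz, hzle⟩ := h.exists_decayRate_le_of_eq hf k hn hNM ⟨hx.1.trans hy.1, hy.2⟩
    (sub_eq_zero.1 hzero).symm
  exact hzle.not_gt (sub_pos.1 (hpos z hz))

lemma radius_mul_speed_lt_of_height_lt (hn : -1 < n) (hNM : N < M) (hx : x ∈ Ico α N) :
    s x * q x < r x * p x :=
  (div_lt_div_iff_of_pos_right (hf.zero_lt_threshold.trans_le hx.1)).1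
    (h.decayRate_lt_of_height_lt hf k hn hNM hx)

lemma radius_lt_of_height_lt (hn : 0 < n) (hNM : N < M) (hx : x ∈ Ico α N) : s x < r x := by
  have hn' : -1 < n := neg_one_lt_zero.trans hn
  have hN : ∀ y ∈ Ico α N, y ∈ Ioo 0 N := fun y hy => ⟨hf.zero_lt_threshold.trans_le hy.1, hy.2⟩
  have hderiv : ∀ y ∈ Ico α N, HasDerivAt (fun y => r y - s y) (-(1 / p y) - -(1 / q y)) y :=
    fun y hy => (h.hasDerivAt_radius y (Ioo_subset_Ioo_right hNM.le (hN y hy))).sub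
      (k.hasDerivAt_radius y (hN y hy))
  have hα : α ∈ Ico α N := left_mem_Ico.2 k.height_mem.1
  have hsrα : s α < r α := by
    by_contra! hle
    exact (h.radius_mul_speed_le_of_radius_le k hf hn hle).not_gt
      (h.radius_mul_speed_lt_of_height_lt hf k hn' hNM hα)
  rcases hx.1.eq_or_lt with rfl | hαx
  · exact hsrα
  refine sub_pos.1 (pos_of_deriv_pos_at_zeros (g := fun y => r y - s y) hαx
    (fun y hy => hderiv y ⟨hy.1.le, hy.2.trans_lt hx.2⟩)
    (((hderiv α hα).continuousAt.eventually_const_lt (sub_pos.2 hsrα)).filter_mono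
      nhdsWithin_le_nhds) fun y hy hzero _ => ?_)
  have hy' : y ∈ Ico α N := ⟨hy.1.le, hy.2.trans_lt hx.2⟩
  have hlt := h.radius_mul_speed_lt_of_height_lt hf k hn' hNM hy'
  rw [sub_eq_zero.1 hzero] at hlt
  linarith [one_div_lt_one_div_of_lt (k.speed_pos y (hN y hy'))
    (lt_of_mul_lt_mul_left hlt (k.radius_pos y (hN y hy')).le)]

lemma speed_lt_of_height_lt (hn : 0 < n) (hNM : N < M) (hx : x ∈ Ico α N) : q x < p x := by
  have hN : ∀ y ∈ Ico x N, y ∈ Ioo 0 N := fun y hy =>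
    ⟨hf.zero_lt_threshold.trans_le (hx.1.trans hy.1), hy.2⟩
  have hM : ∀ y ∈ Ico x N, y ∈ Ioo 0 M := fun y hy => Ioo_subset_Ioo_right hNM.le (hN y hy)
  have hNM' : N ∈ Ioo 0 M := hf.mem_of_threshold_lt ⟨k.height_mem.1, hNM⟩
  have hlim : Tendsto (fun y => p y - q y) (𝓝[<] N) (𝓝 (p N - 0)) :=
    ((h.hasDerivAt_speed N hNM').continuousAt.mono_left nhdsWithin_le_nhds).sub
      k.tendsto_speed_top
  refine sub_pos.1 (pos_of_deriv_neg_at_zeros (g := fun y => p y - q y) hx.2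
    (fun y hy => (h.hasDerivAt_speed y (hM y hy)).sub (k.hasDerivAt_speed y (hN y hy)))
    (hlim.eventually_const_lt (by simpa using h.speed_pos N hNM')) fun y hy hzero _ => ?_)
  have hlt := div_lt_div_of_pos_left hn (k.radius_pos y (hN y hy))
    (h.radius_lt_of_height_lt hf k hn hNM ⟨hx.1.trans hy.1, hy.2⟩)
  rw [sub_eq_zero.1 hzero]
  linarith

-- A lower height would make the profile both closer in and slower at the threshold, against the
-- comparison of the tails.
lemma height_le (hn : 0 < n) : M ≤ N := by
  by_contra! hNM
  have hα : α ∈ Ico α N := left_mem_Ico.2 k.height_mem.1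
  exact (k.speed_le_of_radius_le h hf hn hf.zero_lt_threshold le_rfl
    (h.radius_lt_of_height_lt hf k hn hNM hα).le).not_gt (h.speed_lt_of_height_lt hf k hn hNM hα)

end Comparison

end IsProfile

/-- `u` is a `C²` solution of the radial ODE `u'' + (n / r) u' + f(u) = 0` with `u'(0) = 0`. The
dimension is `n + 1`, and `u` is defined on all of `ℝ` although only `[0, ∞)` matters. -/
structure IsRadialSolution (n : ℝ) (f u : ℝ → ℝ) : Prop where
  contDiff : ContDiff ℝ 2 u
  deriv_zero : deriv u 0 = 0
  ode : ∀ r, 0 < r → deriv (deriv u) r + n / r * deriv u r + f (u r) = 0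

/-- A positive radial solution that decays at infinity together with its derivative. Monotonicity is
not part of the definition. -/
structure IsGroundState (n : ℝ) (f u : ℝ → ℝ) : Prop extends IsRadialSolution n f u where
  pos : ∀ r, 0 ≤ r → 0 < u r
  tendsto_atTop : Tendsto u atTop (𝓝 0)
  tendsto_deriv_atTop : Tendsto (deriv u) atTop (𝓝 0)

/-- The energy `u'² / 2 + F(u)` of a radial solution at radius `x`. -/
def energy (F u : ℝ → ℝ) (x : ℝ) : ℝ := deriv u x ^ 2 / 2 + F (u x)

namespace IsRadialSolution

variable {n x : ℝ} {f F u v : ℝ → ℝ}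

lemma hasDerivAt (hu : IsRadialSolution n f u) (x : ℝ) : HasDerivAt u (deriv u x) x :=
  (hu.contDiff.differentiable two_ne_zero x).hasDerivAt

lemma continuous (hu : IsRadialSolution n f u) : Continuous u := hu.contDiff.continuous

lemma contDiff_deriv (hu : IsRadialSolution n f u) : ContDiff ℝ 1 (deriv u) :=
  (contDiff_succ_iff_deriv.1 (one_add_one_eq_two (R := WithTop ℕ∞) ▸ hu.contDiff)).2.2

lemma hasDerivAt_deriv (hu : IsRadialSolution n f u) (x : ℝ) :
    HasDerivAt (deriv u) (deriv (deriv u) x) x :=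
  (hu.contDiff_deriv.differentiable one_ne_zero x).hasDerivAt

lemma continuous_deriv_deriv (hu : IsRadialSolution n f u) : Continuous (deriv (deriv u)) :=
  hu.contDiff_deriv.continuous_deriv le_rfl

lemma const {c : ℝ} (hc : f c = 0) : IsRadialSolution n f fun _ => c where
  contDiff := contDiff_const
  deriv_zero := deriv_const 0 c
  ode r _ := by simp [hc]

lemma deriv_deriv_eq (hu : IsRadialSolution n f u) (hx : 0 < x) :
    deriv (deriv u) x = -(n / x) * deriv u x - f (u x) := by
  linarith [hu.ode x hx]

lemma tendsto_inv_mul_deriv (hu : IsRadialSolution n f u) :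
    Tendsto (fun x => x⁻¹ * deriv u x) (𝓝[>] 0) (𝓝 (deriv (deriv u) 0)) := by
  simpa [hu.deriv_zero] using (hu.hasDerivAt_deriv 0).tendsto_slope_zero_right

lemma deriv_deriv_zero (hu : IsRadialSolution n f u) (hf : Continuous f) (hn : n + 1 ≠ 0) :
    deriv (deriv u) 0 = -(f (u 0) / (n + 1)) := by
  have hlim : Tendsto (fun x => deriv (deriv u) x + n * (x⁻¹ * deriv u x) + f (u x)) (𝓝[>] 0)
      (𝓝 (deriv (deriv u) 0 + n * deriv (deriv u) 0 + f (u 0))) :=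
    (((hu.continuous_deriv_deriv.tendsto 0).mono_left nhdsWithin_le_nhds).add
      (hu.tendsto_inv_mul_deriv.const_mul n)).add
      (((hf.comp hu.continuous).tendsto 0).mono_left nhdsWithin_le_nhds)
  have hzero : (fun x => deriv (deriv u) x + n * (x⁻¹ * deriv u x) + f (u x)) =ᶠ[𝓝[>] 0] 0 := by
    filter_upwards [self_mem_nhdsWithin] with x hx
    rw [← mul_assoc, ← div_eq_mul_inv, hu.ode x hx, Pi.zero_apply]
  have heq := tendsto_nhds_unique (hlim.congr' hzero) tendsto_const_nhds
  field_simp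
  change _ = (0 : ℝ) at heq
  linarith

lemma exists_mul_deriv_sub_le (hu : IsRadialSolution n f u) (hv : IsRadialSolution n f v)
    (hf : ContDiff ℝ 1 f) (hn : 0 ≤ n) (x : ℝ) :
    ∃ L, ∀ t ∈ Ioo 0 x, 2 * (u t - v t) * (deriv u t - deriv v t) +
      2 * (deriv u t - deriv v t) * (deriv (deriv u) t - deriv (deriv v) t) ≤
      L * ((u t - v t) ^ 2 + (deriv u t - deriv v t) ^ 2) := by
  obtain ⟨K, hK⟩ := (hf.locallyLipschitz.locallyLipschitzOn
    (s := u '' Icc 0 x ∪ v '' Icc 0 x)).exists_lipschitzOnWith_of_compact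
    ((isCompact_Icc.image hu.continuous).union (isCompact_Icc.image hv.continuous))
  refine ⟨1 + K, fun t ht => ?_⟩
  have htx := Ioo_subset_Icc_self ht
  have hlip : |f (u t) - f (v t)| ≤ K * |u t - v t| := by
    simpa only [Real.dist_eq] using hK.dist_le_mul (u t) (.inl (mem_image_of_mem u htx)) (v t)
      (.inr (mem_image_of_mem v htx))
  rw [hu.deriv_deriv_eq ht.1, hv.deriv_deriv_eq ht.1]
  generalize deriv u t = u₁, deriv v t = v₁, u t = u₀, v t = v₀ at hlip ⊢
  have hfriction : 0 ≤ n / t * (u₁ - v₁) ^ 2 := mul_nonneg (div_nonneg hn ht.1.le) (sq_nonneg _)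
  have hcross : 2 * |u₁ - v₁| * |u₀ - v₀| ≤ (u₁ - v₁) ^ 2 + (u₀ - v₀) ^ 2 := by
    simpa only [sq_abs] using two_mul_le_add_sq |u₁ - v₁| |u₀ - v₀|
  have hreaction : -((u₁ - v₁) * (f u₀ - f v₀)) ≤ |u₁ - v₁| * (K * |u₀ - v₀|) :=
    (neg_le_abs _).trans <| (abs_mul _ _).trans_le <|
      mul_le_mul_of_nonneg_left hlip (abs_nonneg _)
  have hK' := mul_le_mul_of_nonneg_left hcross K.coe_nonneg
  linarith [two_mul_le_add_sq (u₀ - v₀) (u₁ - v₁)]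

lemma eqOn_of_map_zero_eq (hu : IsRadialSolution n f u) (hv : IsRadialSolution n f v)
    (hf : ContDiff ℝ 1 f) (hn : 0 ≤ n) (h0 : u 0 = v 0) : EqOn u v (Ici 0) := by
  intro x (hx : 0 ≤ x)
  obtain ⟨L, hL⟩ := hu.exists_mul_deriv_sub_le hv hf hn x
  have hderiv (t : ℝ) : HasDerivAt (fun t => (u t - v t) ^ 2 + (deriv u t - deriv v t) ^ 2)
      (2 * (u t - v t) * (deriv u t - deriv v t) +
        2 * (deriv u t - deriv v t) * (deriv (deriv u) t - deriv (deriv v) t)) t := by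
    refine ((((hu.hasDerivAt t).sub (hv.hasDerivAt t)).pow 2).add
      (((hu.hasDerivAt_deriv t).sub (hv.hasDerivAt_deriv t)).pow 2)).congr_deriv ?_
    simp only [Nat.add_one_sub_one, pow_one, Nat.cast_ofNat, Pi.sub_apply]
  have hle := le_gronwallBound_of_liminf_deriv_right_le (δ := 0) (K := L) (ε := 0) (b := x)
    (fun t _ => (hderiv t).continuousAt.continuousWithinAt)
    (fun t _ _ => (hderiv t).hasDerivWithinAt.liminf_right_slope_le)
    (by simp [h0, hu.deriv_zero, hv.deriv_zero]) (fun t ht => ?_) x (right_mem_Icc.2 hx)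
  · rw [gronwallBound_ε0_δ0] at hle
    have hsq : (u x - v x) ^ 2 ≤ 0 := by linarith [sq_nonneg (deriv u x - deriv v x)]
    exact sub_eq_zero.1 (sq_nonpos_iff _ |>.1 hsq)
  · rcases ht.1.eq_or_lt with rfl | ht₀
    · simp [h0, hu.deriv_zero, hv.deriv_zero]
    · simpa using hL t ⟨ht₀, ht.2⟩

lemma hasDerivAt_energy (hu : IsRadialSolution n f u) (hF : ∀ y, HasDerivAt F (f y) y) (x : ℝ) :
    HasDerivAt (energy F u) (deriv u x * (deriv (deriv u) x + f (u x))) x := by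
  refine ((((hu.hasDerivAt_deriv x).pow 2).div_const 2).add
    ((hF (u x)).comp x (hu.hasDerivAt x))).congr_deriv ?_
  simp only [Nat.add_one_sub_one, pow_one, Nat.cast_ofNat]
  ring

lemma energy_zero (hu : IsRadialSolution n f u) : energy F u 0 = F (u 0) := by
  rw [energy, hu.deriv_zero, zero_pow two_ne_zero, zero_div, zero_add]

lemma energy_antitoneOn (hu : IsRadialSolution n f u) (hF : ∀ y, HasDerivAt F (f y) y)
    (hn : 0 ≤ n) : AntitoneOn (energy F u) (Ici 0) := by
  refine antitoneOn_of_hasDerivAt_nonpos (convex_Ici 0) (fun t _ => hu.hasDerivAt_energy hF t)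
    fun t ht => ?_
  rw [interior_Ici] at ht
  rw [hu.deriv_deriv_eq ht]
  have hfriction : 0 ≤ n / t * deriv u t ^ 2 := mul_nonneg (div_nonneg hn ht.le) (sq_nonneg _)
  linarith

lemma energy_monotoneOn (hu : IsRadialSolution 0 f u) (hF : ∀ y, HasDerivAt F (f y) y) :
    MonotoneOn (energy F u) (Ici 0) := by
  refine monotoneOn_of_hasDerivAt_nonneg (convex_Ici 0) (fun t _ => hu.hasDerivAt_energy hF t)
    fun t ht => ?_
  rw [interior_Ici] at ht
  rw [hu.deriv_deriv_eq ht]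
  exact le_of_eq (by ring)

end IsRadialSolution

namespace IsGroundState

variable {n x α ω : ℝ} {f F u v : ℝ → ℝ} (hf : IsGroundStateNonlinearity f F α ω)
include hf

lemma tendsto_energy (hu : IsGroundState n f u) : Tendsto (energy F u) atTop (𝓝 0) := by
  have hlim := ((hu.tendsto_deriv_atTop.pow 2).div_const 2).add
    (hf.tendsto_primitive_zero.comp hu.tendsto_atTop)
  rwa [zero_pow two_ne_zero, zero_div, zero_add] at hlim

lemma energy_nonneg (hu : IsGroundState n f u) (hn : 0 ≤ n) (hx : 0 ≤ x) : 0 ≤ energy F u x := by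
  refine le_of_tendsto (hu.tendsto_energy hf) ?_
  filter_upwards [eventually_ge_atTop x] with t ht
  exact hu.energy_antitoneOn hf.hasDerivAt_primitive hn hx (hx.trans ht) ht

lemma primitive_map_zero_eq_zero (hu : IsGroundState 0 f u) : F (u 0) = 0 := by
  rw [← hu.energy_zero (F := F)]
  refine (ge_of_tendsto (hu.tendsto_energy hf) ?_).antisymm (hu.energy_nonneg hf le_rfl le_rfl)
  filter_upwards [eventually_ge_atTop 0] with t ht
  exact hu.energy_monotoneOn hf.hasDerivAt_primitive self_mem_Ici ht ht

lemma lt_top (hu : IsGroundState n f u) (hn : 0 ≤ n) (hx : 0 ≤ x) : u x < ω := by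
  by_contra! hωx
  obtain ⟨T, hTω, hxT⟩ := ((hu.tendsto_atTop.eventually_lt_const
    (hf.zero_lt_threshold.trans hf.threshold_lt)).and (eventually_ge_atTop x)).exists
  obtain ⟨y, hy, hyω⟩ := intermediate_value_Icc' hxT hu.continuous.continuousOn ⟨hTω.le, hωx⟩
  have hy₀ : 0 ≤ y := hx.trans hy.1
  have hFω : F ω ≤ F (u 0) := calc
    F ω ≤ deriv u y ^ 2 / 2 + F (u y) := by rw [hyω]; linarith [sq_nonneg (deriv u y)]
    _ ≤ F (u 0) := hu.energy_zero (F := F) ▸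
      hu.energy_antitoneOn hf.hasDerivAt_primitive hn self_mem_Ici hy₀ hy₀
  have hu₀ : 0 < u 0 := hu.pos 0 le_rfl
  have hmax : IsLocalMax F (u 0) := by
    filter_upwards [Ioi_mem_nhds hu₀] with t ht using (hf.primitive_le t ht).trans hFω
  have hconst := hu.eqOn_of_map_zero_eq
    (IsRadialSolution.const (hmax.hasDerivAt_eq_zero (hf.hasDerivAt_primitive (u 0))))
    hf.contDiff hn rfl
  have hlim : Tendsto u atTop (𝓝 (u 0)) := tendsto_const_nhds.congr' <| by
    filter_upwards [eventually_ge_atTop 0] with t ht using (hconst ht).symm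
  exact hu₀.ne' (tendsto_nhds_unique hlim hu.tendsto_atTop)

lemma mem_Ioo_of_deriv_eq_zero (hu : IsGroundState n f u) (hn : 0 ≤ n) (hx : 0 ≤ x)
    (hd : deriv u x = 0) : u x ∈ Ioo α ω := by
  refine ⟨hf.lt_of_primitive_nonneg (hu.pos x hx) ?_, hu.lt_top hf hn hx⟩
  simpa [energy, hd] using hu.energy_nonneg hf hn hx

lemma map_zero_mem (hu : IsGroundState n f u) (hn : 0 ≤ n) : u 0 ∈ Ioo α ω :=
  hu.mem_Ioo_of_deriv_eq_zero hf hn le_rfl hu.deriv_zero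

lemma deriv_neg (hu : IsGroundState n f u) (hn : 0 ≤ n) (hx : 0 < x) : deriv u x < 0 := by
  have hneg : deriv (deriv u) 0 < 0 := by
    rw [hu.deriv_deriv_zero hf.contDiff.continuous (by positivity)]
    exact neg_neg_of_pos (div_pos (hf.pos _ (hu.map_zero_mem hf hn)) (by positivity))
  refine neg_pos.1 (pos_of_deriv_pos_at_zeros (g := fun t => -deriv u t) hx
    (fun t _ => (hu.hasDerivAt_deriv t).neg) ?_ fun y hy hzero _ => ?_)
  · filter_upwards [self_mem_nhdsWithin, hu.tendsto_inv_mul_deriv.eventually_lt_const hneg]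
      with t (ht : 0 < t) hlt
    exact neg_pos.2 (neg_of_mul_neg_right hlt (inv_nonneg.2 ht.le))
  · have hdy : deriv u y = 0 := neg_eq_zero.1 hzero
    rw [hu.deriv_deriv_eq hy.1, hdy, mul_zero, zero_sub, neg_neg]
    exact hf.pos _ (hu.mem_Ioo_of_deriv_eq_zero hf hn hy.1.le hdy)

lemma tendsto_mul_map_div_neg_deriv (hu : IsGroundState n f u) (hn : 0 ≤ n) :
    Tendsto (fun x => x * f (u x) / -deriv u x) (𝓝[>] 0) (𝓝 (n + 1)) := by
  have hfu : 0 < f (u 0) := hf.pos _ (hu.map_zero_mem hf hn)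
  have hslope : Tendsto (fun x => -(x⁻¹ * deriv u x)) (𝓝[>] 0) (𝓝 (f (u 0) / (n + 1))) := by
    simpa [hu.deriv_deriv_zero hf.contDiff.continuous (by positivity)] using
      hu.tendsto_inv_mul_deriv.neg
  have hlim := (((hf.contDiff.continuous.comp hu.continuous).tendsto 0).mono_left
    nhdsWithin_le_nhds).div hslope (by positivity)
  rw [Function.comp_apply, div_div_cancel₀ hfu.ne'] at hlim
  refine hlim.congr' ?_
  filter_upwards [self_mem_nhdsWithin] with x (hx : 0 < x)
  simp only [Function.comp_apply, Pi.div_apply, ← mul_neg]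
  field

lemma exists_isProfile (hu : IsGroundState n f u) (hn : 0 ≤ n) :
    ∃ r p, IsProfile n f α ω (u 0) r p := by
  have hbasis : (atTop : Filter ℝ).HasBasis (· ∈ Ioi 0) fun z => Ioi 0 ∩ Ioi z :=
    (atTop_basis_Ioi' 0).congr (fun _ => Iff.rfl) fun z hz => by
      rw [Ioi_inter_Ioi, max_eq_right (le_of_lt hz)]
  obtain ⟨r, hr, htop, hzero⟩ := exists_hasDerivAt_inverse isOpen_Ioi ordConnected_Ioi
    (nhdsGT_basis (0 : ℝ)) hbasis (fun x _ => hu.hasDerivAt x)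
    (fun x hx => hu.deriv_neg hf hn hx) ((hu.continuous.tendsto 0).mono_left nhdsWithin_le_nhds)
    hu.tendsto_atTop
  have htop' : Tendsto r (𝓝[<] u 0) (𝓝 0) := htop.mono_right nhdsWithin_le_nhds
  refine ⟨r, fun y => -deriv u (r y), ⟨hu.map_zero_mem hf hn, fun y hy => (hr y hy).1,
    fun y hy => neg_pos.2 (hu.deriv_neg hf hn (hr y hy).1),
    fun y hy => (hr y hy).2.2.congr_deriv (by rw [one_div, inv_neg, neg_neg]), fun y hy => ?_,
    htop', ?_, ?_, hzero, ?_⟩⟩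
  · obtain ⟨hr₀ : 0 < r y, hur, hr'⟩ := hr y hy
    refine ((hu.hasDerivAt_deriv (r y)).comp y hr').neg.congr_deriv ?_
    have := (hu.deriv_neg hf hn hr₀).ne
    rw [hu.deriv_deriv_eq hr₀, hur]
    field
  · simpa [hu.deriv_zero] using
      ((hu.contDiff_deriv.continuous.tendsto 0).comp htop').neg
  · refine ((hu.tendsto_mul_map_div_neg_deriv hf hn).comp htop).congr' ?_
    filter_upwards [Ioo_mem_nhdsLT (hu.pos 0 le_rfl)] with y hy
    rw [reactionRatio, Function.comp_apply, (hr y hy).2.1]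
  · simpa using (hu.tendsto_deriv_atTop.comp hzero).neg

lemma map_zero_eq (hu : IsGroundState n f u) (hv : IsGroundState n f v) (hn : 0 ≤ n) :
    u 0 = v 0 := by
  rcases hn.eq_or_lt with rfl | hn₀
  · refine hf.primitive_strictMonoOn.injOn (Ioo_subset_Icc_self (hu.map_zero_mem hf le_rfl))
      (Ioo_subset_Icc_self (hv.map_zero_mem hf le_rfl)) ?_
    rw [hu.primitive_map_zero_eq_zero hf, hv.primitive_map_zero_eq_zero hf]
  · obtain ⟨r, p, h⟩ := hu.exists_isProfile hf hn
    obtain ⟨s, q, k⟩ := hv.exists_isProfile hf hn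
    exact (h.height_le hf k hn₀).antisymm (k.height_le hf h hn₀)

end IsGroundState

section TrigonometricNonlinearity

/-- The primitive of `Fnl a b` that vanishes at `0`. -/
def fnlPrimitive (a b x : ℝ) : ℝ := sin x ^ 2 / 4 * (a * sin x ^ 2 - 2 * b)

/-- The zero of `Fnl a b` in `(0, π / 2)`. -/
def fnlThreshold (a b : ℝ) : ℝ := arcsin √(b / a)

variable {a b x : ℝ}

lemma sin_pos_of_mem_Ioo_pi_div_two (hx : x ∈ Ioo 0 (π / 2)) : 0 < sin x :=
  sin_pos_of_mem_Ioo (Ioo_subset_Ioo_right (half_le_self pi_pos.le) hx)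

lemma cos_pos_of_mem_Ioo_pi_div_two (hx : x ∈ Ioo 0 (π / 2)) : 0 < cos x :=
  cos_pos_of_mem_Ioo (Ioo_subset_Ioo_left (neg_nonpos.2 pi_div_two_pos.le) hx)

lemma sin_strictMonoOn_Ioo : StrictMonoOn sin (Ioo 0 (π / 2)) :=
  strictMonoOn_sin.mono fun _ hx => ⟨(neg_nonpos.2 pi_div_two_pos.le).trans hx.1.le, hx.2.le⟩

lemma mul_cot_strictAntiOn : StrictAntiOn (fun x => x * cot x) (Ioo 0 (π / 2)) := by
  have hderiv : ∀ x ∈ Ioo 0 (π / 2),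
      HasDerivAt (fun x => x * cot x) ((sin x * cos x - x) / sin x ^ 2) x := fun x hx => by
    have hs := (sin_pos_of_mem_Ioo_pi_div_two hx).ne'
    simp only [cot_eq_cos_div_sin]
    refine ((hasDerivAt_id x).mul
      ((hasDerivAt_cos x).div (hasDerivAt_sin x) hs)).congr_deriv ?_
    simp only [id_eq, Pi.div_apply]
    field_simp
    linear_combination -x * sin_sq_add_cos_sq x
  refine strictAntiOn_of_hasDerivAt_neg (convex_Ioo 0 (π / 2)) hderiv fun x hx => ?_
  rw [interior_Ioo] at hx
  have hs := sin_pos_of_mem_Ioo_pi_div_two hx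
  refine div_neg_of_neg_of_pos (sub_neg.2 ?_) (by positivity)
  exact (mul_le_of_le_one_right hs.le (cos_le_one x)).trans_lt (sin_lt hx.1)

lemma fnl_eq (ha : a ≠ 0) (x : ℝ) : Fnl a b x = sin x * cos x * (a * sin x ^ 2 - b) := by
  rw [Fnl, sin_two_mul]
  field

lemma contDiff_fnl : ContDiff ℝ 1 (Fnl a b) := by
  unfold Fnl
  fun_prop

lemma hasDerivAt_fnl (ha : a ≠ 0) (x : ℝ) : HasDerivAt (Fnl a b)
    ((cos x ^ 2 - sin x ^ 2) * (a * sin x ^ 2 - b) + 2 * a * sin x ^ 2 * cos x ^ 2) x := by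
  rw [funext (fnl_eq ha)]
  refine (((hasDerivAt_sin x).mul (hasDerivAt_cos x)).mul
    ((((hasDerivAt_sin x).pow 2).const_mul a).sub_const b)).congr_deriv ?_
  simp only [Nat.add_one_sub_one, pow_one, Nat.cast_ofNat, Pi.mul_apply, Pi.pow_apply]
  ring

lemma hasDerivAt_fnlPrimitive (ha : a ≠ 0) (x : ℝ) :
    HasDerivAt (fnlPrimitive a b) (Fnl a b x) x := by
  rw [fnl_eq ha]
  refine ((((hasDerivAt_sin x).pow 2).div_const 4).mul
    ((((hasDerivAt_sin x).pow 2).const_mul a).sub_const (2 * b))).congr_deriv ?_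
  simp only [Nat.add_one_sub_one, pow_one, Nat.cast_ofNat, Pi.pow_apply]
  ring

lemma growthFunction_fnl (ha : a ≠ 0) (hx : x ∈ Ioo 0 (π / 2)) (hX : a * sin x ^ 2 - b ≠ 0) :
    growthFunction (Fnl a b) x =
      x * cot x * (3 + 2 * b / (a * sin x ^ 2 - b)) - x * tan x := by
  have hs := (sin_pos_of_mem_Ioo_pi_div_two hx).ne'
  have hc := (cos_pos_of_mem_Ioo_pi_div_two hx).ne'
  rw [growthFunction, (hasDerivAt_fnl ha x).deriv, fnl_eq ha, cot_eq_cos_div_sin,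
    tan_eq_sin_div_cos]
  obtain ⟨X, rfl⟩ : ∃ X, b = a * sin x ^ 2 - X := ⟨_, (sub_sub_cancel _ b).symm⟩
  rw [sub_sub_cancel] at hX ⊢
  field

variable (hb : 0 < b) (hab : b < a)
include hb hab

lemma fnlThreshold_mem : fnlThreshold a b ∈ Ioo 0 (π / 2) :=
  ⟨arcsin_pos.2 (sqrt_pos.2 (div_pos hb (hb.trans hab))),
    arcsin_lt_pi_div_two.2 ((sqrt_lt' one_pos).2 (by rwa [one_pow, div_lt_one (hb.trans hab)]))⟩

lemma mul_sin_fnlThreshold_sq : a * sin (fnlThreshold a b) ^ 2 = b := by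
  have ha := hb.trans hab
  have hle : √(b / a) ≤ 1 := sqrt_le_one.2 ((div_le_one ha).2 hab.le)
  rw [fnlThreshold, sin_arcsin (neg_one_lt_zero.le.trans (sqrt_nonneg _)) hle,
    sq_sqrt (div_pos hb ha).le, mul_div_cancel₀ _ ha.ne']

lemma mul_sin_sq_lt (hx : x ∈ Ioo 0 (fnlThreshold a b)) : a * sin x ^ 2 < b := by
  have hα := fnlThreshold_mem hb hab
  have hxπ : x ∈ Ioo 0 (π / 2) := ⟨hx.1, hx.2.trans hα.2⟩
  have hs := sin_pos_of_mem_Ioo_pi_div_two hxπ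
  have hlt := sin_strictMonoOn_Ioo hxπ hα hx.2
  have ha := hb.trans hab
  calc a * sin x ^ 2 < a * sin (fnlThreshold a b) ^ 2 := by gcongr
    _ = b := mul_sin_fnlThreshold_sq hb hab

lemma lt_mul_sin_sq (hx : x ∈ Ioo (fnlThreshold a b) (π / 2)) : b < a * sin x ^ 2 := by
  have hα := fnlThreshold_mem hb hab
  have hs := sin_pos_of_mem_Ioo_pi_div_two hα
  have hlt := sin_strictMonoOn_Ioo hα ⟨hα.1.trans hx.1, hx.2⟩ hx.1
  have ha := hb.trans hab
  calc b = a * sin (fnlThreshold a b) ^ 2 := (mul_sin_fnlThreshold_sq hb hab).symm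
    _ < a * sin x ^ 2 := by gcongr

lemma fnl_neg (hx : x ∈ Ioo 0 (fnlThreshold a b)) : Fnl a b x < 0 := by
  have hxπ : x ∈ Ioo 0 (π / 2) := ⟨hx.1, hx.2.trans (fnlThreshold_mem hb hab).2⟩
  rw [fnl_eq (hb.trans hab).ne']
  exact mul_neg_of_pos_of_neg (mul_pos (sin_pos_of_mem_Ioo_pi_div_two hxπ)
    (cos_pos_of_mem_Ioo_pi_div_two hxπ)) (sub_neg.2 (mul_sin_sq_lt hb hab hx))

lemma fnl_pos (hx : x ∈ Ioo (fnlThreshold a b) (π / 2)) : 0 < Fnl a b x := by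
  have hxπ : x ∈ Ioo 0 (π / 2) := ⟨(fnlThreshold_mem hb hab).1.trans hx.1, hx.2⟩
  rw [fnl_eq (hb.trans hab).ne']
  exact mul_pos (mul_pos (sin_pos_of_mem_Ioo_pi_div_two hxπ) (cos_pos_of_mem_Ioo_pi_div_two hxπ))
    (sub_pos.2 (lt_mul_sin_sq hb hab hx))

lemma two_mul_fnlPrimitive_le (hx : x ∈ Ioo 0 (fnlThreshold a b)) :
    2 * fnlPrimitive a b x ≤ x * Fnl a b x := by
  have hxπ : x ∈ Ioo 0 (π / 2) := ⟨hx.1, hx.2.trans (fnlThreshold_mem hb hab).2⟩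
  have hs := sin_pos_of_mem_Ioo_pi_div_two hxπ
  have ha := hb.trans hab
  have hxc : x * cos x ≤ sin x := by
    rw [← le_div_iff₀ (cos_pos_of_mem_Ioo_pi_div_two hxπ), ← tan_eq_sin_div_cos]
    exact (lt_tan hxπ.1 hxπ.2).le
  calc 2 * fnlPrimitive a b x = sin x ^ 2 * (a * sin x ^ 2 - b) - a * sin x ^ 4 / 2 := by
        rw [fnlPrimitive]; ring
    _ ≤ sin x * sin x * (a * sin x ^ 2 - b) := by
        rw [← sq]; exact sub_le_self _ (by positivity)
    _ ≤ sin x * (x * cos x) * (a * sin x ^ 2 - b) :=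
        mul_le_mul_of_nonpos_right (mul_le_mul_of_nonneg_left hxc hs.le)
          (sub_neg.2 (mul_sin_sq_lt hb hab hx)).le
    _ = x * Fnl a b x := by rw [fnl_eq ha.ne']; ring

lemma growthFunction_fnl_strictAntiOn :
    StrictAntiOn (growthFunction (Fnl a b)) (Ioo (fnlThreshold a b) (π / 2)) := by
  intro x hx y hy hxy
  have ha := hb.trans hab
  have hα := (fnlThreshold_mem hb hab).1
  have hxπ : x ∈ Ioo 0 (π / 2) := ⟨hα.trans hx.1, hx.2⟩
  have hyπ : y ∈ Ioo 0 (π / 2) := ⟨hα.trans hy.1, hy.2⟩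
  have hX := sub_pos.2 (lt_mul_sin_sq hb hab hx)
  have hY := sub_pos.2 (lt_mul_sin_sq hb hab hy)
  have hsx := sin_pos_of_mem_Ioo_pi_div_two hxπ
  have hsin := sin_strictMonoOn_Ioo hxπ hyπ hxy
  have hcot : y * cot y < x * cot x := mul_cot_strictAntiOn hxπ hyπ hxy
  have hcot₀ : 0 ≤ y * cot y := by
    rw [cot_eq_cos_div_sin]
    exact mul_nonneg hyπ.1.le (div_pos (cos_pos_of_mem_Ioo_pi_div_two hyπ)
      (sin_pos_of_mem_Ioo_pi_div_two hyπ)).le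
  have htan : x * tan x < y * tan y := mul_lt_mul hxy
    (tan_lt_tan_of_nonneg_of_lt_pi_div_two hxπ.1.le hyπ.2 hxy).le
    (tan_pos_of_pos_of_lt_pi_div_two hxπ.1 hxπ.2) hyπ.1.le
  have hfrac : 2 * b / (a * sin y ^ 2 - b) ≤ 2 * b / (a * sin x ^ 2 - b) := by gcongr
  rw [growthFunction_fnl ha.ne' hxπ hX.ne', growthFunction_fnl ha.ne' hyπ hY.ne']
  exact sub_lt_sub (mul_lt_mul hcot (by gcongr) (by positivity) (hcot₀.trans hcot.le)) htan

omit hb hab in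
lemma fnlPrimitive_le (ha : 0 ≤ a) (hab : 2 * b ≤ a) (x : ℝ) :
    fnlPrimitive a b x ≤ fnlPrimitive a b (π / 2) := by
  have hfactor : 0 ≤ (1 - sin x ^ 2) * (a * sin x ^ 2 + (a - 2 * b)) :=
    mul_nonneg (sub_nonneg.2 (sin_sq_le_one x))
      (add_nonneg (mul_nonneg ha (sq_nonneg _)) (sub_nonneg.2 hab))
  rw [fnlPrimitive, fnlPrimitive, sin_pi_div_two]
  linarith

omit hab in
theorem isGroundStateNonlinearity_fnl (hab : 2 * b < a) :
    IsGroundStateNonlinearity (Fnl a b) (fnlPrimitive a b) (fnlThreshold a b) (π / 2) := by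
  have hba : b < a := (lt_add_of_pos_left b hb).trans (two_mul b ▸ hab)
  have ha : 0 < a := hb.trans hba
  exact {
    contDiff := contDiff_fnl
    hasDerivAt_primitive := hasDerivAt_fnlPrimitive ha.ne'
    primitive_zero := by simp [fnlPrimitive]
    zero_lt_threshold := (fnlThreshold_mem hb hba).1
    threshold_lt := (fnlThreshold_mem hb hba).2
    map_zero := by simp [Fnl]
    map_threshold := by
      rw [fnl_eq ha.ne', mul_sin_fnlThreshold_sq hb hba, sub_self, mul_zero]
    neg := fun _ => fnl_neg hb hba
    pos := fun _ => fnl_pos hb hba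
    deriv_zero_neg := by simpa [(hasDerivAt_fnl ha.ne' 0).deriv] using hb
    two_mul_primitive_le := fun _ => two_mul_fnlPrimitive_le hb hba
    growthFunction_strictAntiOn := growthFunction_fnl_strictAntiOn hb hba
    primitive_le := fun x _ => fnlPrimitive_le ha.le hab.le x }

end TrigonometricNonlinearity

end RadialGroundState

open RadialGroundState in
theorem uniqueness_of_radial_ground_state_general {n α ω : ℝ} {f F u v : ℝ → ℝ}
    (hf : IsGroundStateNonlinearity f F α ω) (hn : 0 ≤ n) (hu : IsGroundState n f u)
    (hv : IsGroundState n f v) : Set.EqOn u v (Set.Ici 0) :=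
  hu.eqOn_of_map_zero_eq hv.toIsRadialSolution hf.contDiff hn (hu.map_zero_eq hf hv hn)

theorem uniqueness_of_radial_ground_state (d : ℕ) (hd : 1 ≤ d) (a b : ℝ)
    (hb : 0 < b) (hab : 2 * b < a)
    (Q : ℝ → ℝ) (hQ : IsRadialSol d a b Q)
    (hQpos : ∀ r : ℝ, 0 ≤ r → 0 < Q r)
    (hQdec : StrictAntiOn Q (Set.Ici 0))
    (hQlim : Tendsto Q atTop (nhds 0))
    (hQlim' : Tendsto (deriv Q) atTop (nhds 0))
    (u : ℝ → ℝ) (hu : IsRadialSol d a b u)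
    (hupos : ∀ r : ℝ, 0 ≤ r → 0 < u r)
    (hulim : Tendsto u atTop (nhds 0))
    (hulim' : Tendsto (deriv u) atTop (nhds 0)) :
    Set.EqOn u Q (Set.Ici 0) :=
  uniqueness_of_radial_ground_state_general
    (RadialGroundState.isGroundStateNonlinearity_fnl hb hab) (sub_nonneg.2 (Nat.one_le_cast.2 hd))
    ⟨⟨hu.1, hu.2.1, hu.2.2⟩, hupos, hulim, hulim'⟩ ⟨⟨hQ.1, hQ.2.1, hQ.2.2⟩, hQpos, hQlim, hQlim'⟩
end
end
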